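/- Let k be any field of characteristic 2, let n ≥ 4, and let G = Q_{2^n} be the generalized quaternion group of order 2^n. Suppose M_0, M_1, M_2, M_3 are finite-dimensional kG-modules such that M_0 is the trivial module k and, for each i = 0, 1, 2, there is a short exact sequence 0 → M_{i+1} → P_i → M_i → 0 of kG-modules with P_i finite-dimensional projective. Then the M_i are pairwise not stably isomorphic endotrivial modules, and there exists a finite-dimensional endotrivial kG-module L such that: (i) L ⊗ L is stably isomorphic to k; (ii) L is not stably isomorphic to any M_i; and (iii) every endotrivial kG-module is stably isomorphic to M_i or to M_i ⊗ L for some i ∈ {0,1,2,3}. In particular, the group of endotrivial modules of Q_{2^n} (the Picard group of StMod(kQ_{2^n})) is isomorphic to C_2 ⊕ C_4. -/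

import Mathlib

open CategoryTheory CategoryTheory.Limits MonoidalCategory

/-- A representation `M` of `G` over `k` is *endotrivial* if it is finite-dimensional over `k`
and its `k`-linear endomorphism module, with the conjugation `G`-action, is isomorphic to the
direct sum of the trivial representation `k` and a projective. -/
def IsEndotrivial {k G : Type} [Field k] [Group G] (M : Rep k G) : Prop :=
  FiniteDimensional k M.V ∧
    ∃ P : Rep k G, Projective P ∧
      Nonempty (Rep.of (M.ρ.linHom M.ρ) ≅ Rep.trivial k G k ⊞ P)

/-- Two representations are *stably isomorphic* if they become isomorphic after adding
projective summands. -/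
def IsStablyIso {k G : Type} [Field k] [Group G] (M N : Rep k G) : Prop :=
  ∃ P Q : Rep k G, Projective P ∧ Projective Q ∧ Nonempty (M ⊞ P ≅ N ⊞ Q)

namespace EQ

/-- Data of the commutative ring acting: generator `th`, its inverse, and the involution. -/
structure QD (A : Type) [CommRing A] (q : ℕ) where
  th : A
  th' : A
  bar : A →+* A
  two : (2 : A) = 0
  inv : th * th' = 1
  bar_th : bar th = th'
  bar_th' : bar th' = th
  frob : (th + 1) ^ q = th ^ q + 1
  nil : (th + 1) ^ (2 * q) = 0

namespace QD
variable {A : Type} [CommRing A] {q : ℕ} (D : QD A q)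

/-- The element `X = θ - 1`. -/
def X : A := D.th + 1

/-- The conjugate of `X`. -/
def X' : A := D.th' + 1

theorem th_eq : D.th = D.X + 1 := by have := D.two; unfold X; grind
theorem X'_eq : D.X' = D.th' * D.X := by have := D.inv; unfold X X'; grind
theorem X_eq : D.X = D.th * D.X' := by have := D.inv; unfold X X'; grind
theorem bar_X : D.bar D.X = D.X' := by simp [X, X', D.bar_th]
theorem bar_X' : D.bar D.X' = D.X := by simp [X, X', D.bar_th']
theorem th'_eq : D.th' = D.X' + 1 := by have := D.two; unfold X'; grind
theorem pow_nil : D.X ^ (2 * q) = 0 := D.nil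
theorem th_pow : D.th ^ q = 1 + D.X ^ q := by
  have := D.frob; have := D.two; unfold X; grind
theorem th'_pow : D.th' ^ q = 1 + D.X ^ q := by
  have h : D.th ^ q * D.th' ^ q = 1 := by rw [← mul_pow, D.inv, one_pow]
  have h2 := D.pow_nil
  rw [D.th_pow] at h
  have := D.two
  rw [mul_comm 2 q, pow_mul] at h2
  grind
theorem X'_pow : D.X' ^ q = D.X ^ q := by
  have h2 := D.pow_nil
  rw [mul_comm 2 q, pow_mul] at h2
  rw [D.X'_eq, mul_pow, D.th'_pow]; grind
theorem XY (hq : 1 ≤ q) : D.X * D.X ^ (q - 1) = D.X ^ q := by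
  rw [← pow_succ']; congr 1; omega
theorem XYY (hq : 1 ≤ q) : D.X * D.X ^ (q - 1) * D.X ^ (q - 1) = D.X ^ (2 * q - 1) := by
  rw [← pow_succ', ← pow_add]; congr 1; omega
theorem YY (hq : 1 ≤ q) : D.X ^ (q - 1) * D.X ^ (q - 1) = D.X ^ (2 * q - 2) := by
  rw [← pow_add]; congr 1; omega
theorem nilY (hq : 1 ≤ q) : D.X ^ 2 * D.X ^ (q - 1) * D.X ^ (q - 1) = 0 := by
  rw [← D.pow_nil, ← pow_add, ← pow_add]; congr 1; omega
theorem barY (hq : 1 ≤ q) : D.bar (D.X ^ (q - 1)) =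
    D.th * D.X ^ (q - 1) + D.X * D.X ^ (q - 1) * D.X ^ (q - 1) := by
  have h1 : D.th' * D.bar (D.X ^ (q - 1)) = D.th' ^ q * D.X ^ (q - 1) := by
    rw [map_pow, bar_X, X'_eq, mul_pow, ← mul_assoc, ← pow_succ']; congr 2; omega
  rw [D.th'_pow, ← D.XY hq] at h1
  have := D.inv; have h3 := D.nilY hq; have := D.th_eq
  grind
theorem bar_top (hq : 1 ≤ q) : D.bar (D.X ^ (2 * q - 1)) = D.X ^ (2 * q - 1) := by
  rw [← D.XYY hq, map_mul, map_mul, D.barY hq, D.bar_X, D.X'_eq]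
  have := D.inv; have h3 := D.nilY hq; have := D.th_eq
  grind
theorem X_top (hq : 1 ≤ q) : D.X * D.X ^ (2 * q - 1) = 0 := by
  rw [← pow_succ', ← D.pow_nil]; congr 1; omega

end QD

section
variable {A : Type} [CommRing A] {q : ℕ} (D : QD A q) {M : Type} [AddCommGroup M] [Module A M]

/-- The semilinear operator. -/
structure SL (S : M →+ M) : Prop where
  semi : ∀ (a : A) (m : M), S (a • m) = D.bar a • S m
  sq : ∀ m, S (S m) = (1 + D.X ^ q) • m

variable {D} {S : M →+ M} (hS : SL D S) (hq : 2 ≤ q)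
include hS hq

theorem KI {m0 s v w : M} {a : A} (ha : D.bar a = a) (h0 : D.X • m0 = 0) (h1 : a • S m0 = a • (m0 + s))
    (hs : s = D.X ^ (2 * q - 1) • v) (hv : S v + v = a • m0 + D.X • w) :
    D.X • (S w + D.th • w + (D.th * D.X ^ (q - 1)) • v + (a * D.X ^ (2 * q - 2)) • v) = 0 ∧
    S (S w + D.th • w + (D.th * D.X ^ (q - 1)) • v + (a * D.X ^ (2 * q - 2)) • v) +
      (S w + D.th • w + (D.th * D.X ^ (q - 1)) • v + (a * D.X ^ (2 * q - 2)) • v) =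
      (1 + a) • s + (a * D.X ^ (2 * q - 1)) • w := by
  have hq1 : 1 ≤ q := by omega
  have hsv := congrArg S hv
  simp only [map_add, hS.semi, hS.sq, ha, h1, D.bar_X] at hsv
  have t0 := D.two
  have t1 := D.nilY hq1
  have t2 := D.inv
  have t3 := D.th_eq
  have t4 := D.X'_eq
  have hY0 : D.X ^ (q - 1) • m0 = 0 := by
    rw [show q - 1 = (q - 2) + 1 by omega, pow_succ, mul_smul, h0, smul_zero]
  rw [← D.XY hq1] at hsv
  rw [← D.XYY hq1] at hs
  simp only [map_add, hS.semi, hS.sq, map_mul, D.bar_th, ha, D.barY hq1, ← D.YY hq1, ← D.XYY hq1,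
    ← D.XY hq1]
  generalize D.X ^ (q - 1) = Y at *
  generalize D.X = X at *
  generalize D.X' = X' at *
  generalize D.th = th at *
  generalize D.th' = th' at *
  generalize S m0 = sm0 at *
  generalize S w = sw at *
  generalize S v = sv at *
  clear hS
  constructor
  · linear_combination (norm := (match_scalars <;> grind)) th • hsv - th • hv + (th * a) • hs
  · linear_combination (norm := (match_scalars <;> grind)) (th' * (th * Y + X * Y * Y) + a * (th * Y + X * Y * Y)* (th * Y + X * Y * Y) + 1 ) • hv - hsv + hs + (a * (th' * (th + X * Y) + a * (th * Y + X * Y * Y) * (th + X * Y))) • hY0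
end
end EQ

namespace EQ
section
variable {A : Type} [CommRing A] {q : ℕ} (D : QD A q) {M : Type} [AddCommGroup M] [Module A M]

theorem div_pow {i j : ℕ} (h : i ≤ j) (y : M) : ∃ z : M, D.X ^ j • y = D.X ^ i • z :=
  ⟨D.X ^ (j - i) • y, by rw [← mul_smul, ← pow_add]; congr 2; omega⟩

theorem pow_smul_zero {i j : ℕ} (h : i ≤ j) {y : M} (hy : D.X ^ i • y = 0) : D.X ^ j • y = 0 := by
  rw [show j = (j - i) + i by omega, pow_add, mul_smul, hy, smul_zero]

theorem pow_big {j : ℕ} (h : 2 * q ≤ j) (y : M) : D.X ^ j • y = 0 := by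
  apply pow_smul_zero D h; rw [D.pow_nil, zero_smul]

/-- exactness of `u = X ^ q` -/
def ExA (M : Type) [AddCommGroup M] [Module A M] : Prop :=
  ∀ m : M, D.X ^ q • m = 0 → ∃ y, m = D.X ^ q • y

variable {D} (hq : 4 ≤ q)
include hq

theorem ExA.kerX (h : ExA D M) {m : M} (hm : D.X • m = 0) : ∃ y, m = D.X ^ (2 * q - 1) • y := by
  obtain ⟨m1, rfl⟩ := h m (by
    apply pow_smul_zero D (i := 1) (by omega); simpa using hm)
  obtain ⟨m2, h2⟩ := h (D.X • m1) (by rw [smul_comm]; exact hm)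
  have h3 : D.X ^ q • (m1 - D.X ^ (q - 1) • m2) = 0 := by
    apply pow_smul_zero D (i := 1) (by omega)
    rw [pow_one, smul_sub, h2, ← mul_smul, D.XY (by omega), sub_self]
  refine ⟨m2, ?_⟩
  rw [smul_sub, sub_eq_zero] at h3
  rw [h3, ← mul_smul, ← pow_add]; congr 2; omega

theorem ExA.kerTop (h : ExA D M) {m : M} (hm : D.X ^ (2 * q - 1) • m = 0) : ∃ y, m = D.X • y := by
  obtain ⟨m1, h1⟩ := h (D.X ^ (q - 1) • m) (by
    rw [← mul_smul, ← pow_add, show q + (q - 1) = 2 * q - 1 by omega, hm])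
  obtain ⟨m2, h2⟩ := h (m - D.X • m1) (by
    apply pow_smul_zero D (i := q - 1) (by omega)
    rw [smul_sub, h1, ← mul_smul (D.X ^ (q - 1)), ← pow_succ, Nat.sub_add_cancel (by omega), sub_self])
  obtain ⟨z, hz⟩ := div_pow D (show 1 ≤ q by omega) m2
  refine ⟨m1 + z, ?_⟩
  rw [smul_add, ← pow_one D.X, ← hz, ← h2, pow_one]; abel

variable {S : M →+ M} (hS : SL D S)
include hS

theorem ExA.zero (h : ExA D M)
    (hN : ∀ m, S (D.X ^ (2 * q - 1) • m) = D.X ^ (2 * q - 1) • m) (v : M) : v = 0 := by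
  have t2 : ∀ m : M, m + m = 0 := fun m => by
    rw [← two_smul A m, D.two, zero_smul]
  have key : ∀ v : M, D.X ^ (2 * q - 1) • v = 0 := by
    intro v
    obtain ⟨w, hw⟩ := h.kerTop hq (m := S v + v) (by
      have := hN v
      rw [hS.semi, D.bar_top (by omega)] at this
      rw [smul_add, this, t2])
    obtain ⟨k1, k2⟩ := KI hS (by omega) (m0 := 0) (a := 0) (v := v) (w := w) (map_zero _)
      (smul_zero _) (by simp) rfl (by simpa using hw)
    obtain ⟨y, hy⟩ := h.kerX hq k1
    rw [hy, hN, t2] at k2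
    simpa using k2.symm
  have inj : ∀ v : M, D.X • v = 0 → v = 0 := by
    intro v hv
    obtain ⟨y, rfl⟩ := h.kerX hq hv
    exact key y
  have : ∀ j, D.X ^ j • v = 0 → v = 0 := by
    intro j
    induction j with
    | zero => simp
    | succ j ih => intro h; rw [pow_succ', mul_smul] at h; exact ih (inj _ h)
  exact this _ (pow_big D le_rfl v)
end

section
variable {k A : Type} [Field k] [CommRing A] {q : ℕ} (D : QD A q) (ι : k →+* A)
  {M : Type} [AddCommGroup M] [Module A M]

/-- Even generator. -/
structure EvenGen (m0 : M) : Prop where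
  X0 : D.X • m0 = 0
  nz : ∀ y, m0 ≠ D.X ^ q • y
  gen : ∀ m, D.X ^ q • m = 0 → ∃ (c : k) (y : M), m = ι c • m0 + D.X ^ q • y

variable {D ι} (hq : 4 ≤ q) {m0 : M} (h : EvenGen D ι m0)
include hq h

theorem EvenGen.F0 (y : M) : m0 ≠ D.X • y := by
  intro hy
  obtain ⟨c, z, hz⟩ := h.gen y (by
    apply pow_smul_zero D (i := 2) (by omega)
    rw [pow_two, mul_smul, ← hy, h.X0])
  apply h.nz (D.X • z)
  rw [hy]
  conv_lhs => rw [hz, smul_add, smul_comm, h.X0, smul_zero, zero_add, smul_comm]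

theorem EvenGen.coef (c : k) (y : M) (hc : ι c • m0 = D.X • y) : c = 0 := by
  by_contra hne
  apply h.F0 hq (ι c⁻¹ • y)
  rw [smul_comm, ← hc, ← mul_smul, ← map_mul, inv_mul_cancel₀ hne, map_one, one_smul]

theorem EvenGen.F1 {m : M} (hm : D.X • m = 0) :
    ∃ (c : k) (y : M), m = ι c • m0 + D.X ^ (2 * q - 1) • y := by
  obtain ⟨c, m1, rfl⟩ := h.gen m (by
    apply pow_smul_zero D (i := 1) (by omega); simpa using hm)
  rw [smul_add, smul_comm, h.X0, smul_zero, zero_add, smul_comm] at hm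
  obtain ⟨c', m2, h2⟩ := h.gen (D.X • m1) hm
  have e1 : ι c' • m0 = D.X • (m1 - D.X ^ (q - 1) • m2) := by
    rw [smul_sub, h2, ← mul_smul D.X, D.XY (by omega)]; abel
  have hc := h.coef hq _ _ e1
  rw [hc, map_zero, zero_smul] at e1
  have h3 : D.X ^ q • (m1 - D.X ^ (q - 1) • m2) = 0 := by
    apply pow_smul_zero D (i := 1) (by omega)
    rw [pow_one, ← e1]
  refine ⟨c, m2, ?_⟩
  rw [smul_sub, sub_eq_zero] at h3
  rw [h3, ← mul_smul (D.X ^ q), ← pow_add]; congr 3; omega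

theorem EvenGen.F2 {m : M} (hm : D.X ^ (2 * q - 1) • m = 0) :
    ∃ (c : k) (y : M), m = ι c • m0 + D.X • y := by
  obtain ⟨c, m1, h1⟩ := h.gen (D.X ^ (q - 1) • m) (by
    rw [← mul_smul, ← pow_add, show q + (q - 1) = 2 * q - 1 by omega, hm])
  obtain ⟨z1, hz1⟩ := div_pow D (show 1 ≤ q by omega) m1
  obtain ⟨z2, hz2⟩ := div_pow D (show 1 ≤ q - 1 by omega) m
  rw [pow_one] at hz1 hz2
  have hc := h.coef hq c (z2 - z1) (by rw [smul_sub, ← hz1, ← hz2, h1]; abel)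
  rw [hc, map_zero, zero_smul, zero_add] at h1
  obtain ⟨c2, m2, h2⟩ := h.gen (m - D.X • m1) (by
    apply pow_smul_zero D (i := q - 1) (by omega)
    rw [smul_sub, h1, ← mul_smul (D.X ^ (q - 1)), ← pow_succ, Nat.sub_add_cancel (by omega), sub_self])
  obtain ⟨z, hz⟩ := div_pow D (show 1 ≤ q by omega) m2
  refine ⟨c2, m1 + z, ?_⟩
  rw [smul_add, ← pow_one D.X, ← hz, sub_eq_iff_eq_add.mp h2, pow_one]; abel

end
end EQ

namespace EQ

/-- The auxiliary elements used to define the exotic module. -/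
structure QC {A : Type} [CommRing A] {q : ℕ} (D : QD A q) where
  c : A
  c' : A
  al : A
  ga : A
  be : A
  bar_c : D.bar c = c'
  bar_c' : D.bar c' = c
  bar_al : D.bar al = al
  cc : c * c' = 1 + D.X ^ q + D.X ^ (2 * q - 1)
  cth : c + D.th * c' = al * D.X
  c'1 : c' + 1 = D.X * D.X' * ga
  al1 : al = 1 + D.X * be

section
variable {k A : Type} [Field k] [CommRing A] {q : ℕ} {D : QD A q} {ι : k →+* A}
  {M : Type} [AddCommGroup M] [Module A M] (hq : 4 ≤ q) {S : M →+ M}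

theorem SL.twist (hS : SL D S) : SL D ((AddMonoidHom.mk' (fun m : M => D.th' • m) (by simp)).comp S) := by
  constructor
  · intro a m
    simp only [AddMonoidHom.coe_comp, Function.comp_apply, AddMonoidHom.mk'_apply, hS.semi]
    rw [smul_comm]
  · intro m
    simp [hS.semi, hS.sq, D.bar_th', ← mul_smul]
    rw [← mul_assoc, mul_comm D.th', D.inv, one_mul]

include hq
theorem Lstep (Q : QC D) (hS : SL D S) {m0 : M} (h : EvenGen D ι m0)
    (hN : ∀ m, S (D.X ^ (2 * q - 1) • m) = D.X ^ (2 * q - 1) • m) {s v w : M}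
    (h1 : S m0 = m0 + s) (hs : s = D.X ^ (2 * q - 1) • v) (hs0 : s ≠ 0)
    (hv : S v + v = m0 + (D.X * D.X) • w) :
    ∃ v', D.X • (S v' + Q.c' • v') = 0 ∧ ∀ y, S v' + Q.c' • v' ≠ D.X ^ q • y := by
  have t0 := D.two
  have t2 : ∀ m : M, m + m = 0 := fun m => by
    rw [← two_smul A m, D.two, zero_smul]
  have bth := D.th_eq
  have bX' := D.X'_eq
  have binv := D.inv
  have hal0 : Q.al • m0 = m0 := by
    rw [Q.al1, add_smul, mul_comm, mul_smul, h.X0]; simp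
  have hc1 : Q.c + 1 = D.X' * D.X * D.bar Q.ga := by
    have := congrArg D.bar Q.c'1
    simpa [Q.bar_c', D.bar_X, D.bar_X'] using this
  have hker : ∀ m : M, D.X • m = 0 → Q.c • m = m := by
    intro m hm
    have : Q.c = 1 + (D.X' * D.bar Q.ga) * D.X := by grind
    rw [this, add_smul, mul_smul, hm]; simp
  have hcc : ∀ y : M, S (S y + Q.c' • y) + Q.c • (S y + Q.c' • y) = D.X ^ (2 * q - 1) • y := by
    intro y
    rw [map_add, hS.semi, hS.sq, Q.bar_c']
    have := Q.cc
    generalize D.X ^ (2 * q - 1) = U at *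
    generalize D.X ^ q = V at *
    match_scalars <;> grind
  have bcc := Q.cth
  have bc1 := Q.c'1
  set w2 := D.th • w + Q.ga • v with hw2
  have e1 : S v + Q.c' • v = m0 + (D.X * D.X') • w2 := by
    rw [hw2]
    linear_combination (norm := (match_scalars <;> grind)) hv
  have e2 : (D.X * D.X') • (S w2 + Q.c • w2) = 0 := by
    have := hcc v
    rw [e1, map_add, hS.semi, h1, smul_add, hker m0 h.X0, map_mul, D.bar_X, D.bar_X', ← hs] at this
    linear_combination (norm := (match_scalars <;> grind)) this
  have e3 : S (Q.al • v + D.X • w2) + Q.c' • (Q.al • v + D.X • w2) =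
      m0 + D.X' • (S w2 + Q.c • w2) := by
    rw [map_add, hS.semi, hS.semi, D.bar_X, Q.bar_al]
    linear_combination (norm := (match_scalars <;> grind)) Q.al • e1 + hal0
  refine ⟨Q.al • v + D.X • w2, ?_, ?_⟩
  · rw [e3, smul_add, h.X0, zero_add, ← mul_smul, e2]
  · intro y hy
    have hX : D.X • (S (Q.al • v + D.X • w2) + Q.c' • (Q.al • v + D.X • w2)) = 0 := by
      rw [e3, smul_add, h.X0, zero_add, ← mul_smul, e2]
    obtain ⟨l, z, hz⟩ := h.F1 hq hX
    have hl : l = 0 := by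
      obtain ⟨y1, hy1⟩ := div_pow D (show 1 ≤ q by omega) y
      obtain ⟨z1, hz1⟩ := div_pow D (show 1 ≤ 2 * q - 1 by omega) z
      apply h.coef hq l (y1 - z1)
      rw [pow_one] at *
      rw [smul_sub, ← hy1, ← hz1, ← hy, hz]; abel
    have h5 := hcc (Q.al • v + D.X • w2)
    rw [hker _ hX, hz, hl, map_zero, zero_smul, zero_add, hN, t2, smul_add, ← mul_smul _ D.X,
      mul_comm _ D.X, D.X_top (by omega), zero_smul, smul_comm, ← hs] at h5
    apply hs0
    rw [add_zero, hs, Q.al1, add_smul, one_smul, mul_comm D.X, mul_smul Q.be, ← mul_smul D.X,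
      D.X_top (by omega), zero_smul, smul_zero, add_zero, ← hs] at h5
    exact h5.symm

theorem classify (Q : QC D) (hbar : ∀ c, D.bar (ι c) = ι c) (hS : SL D S) {m0 : M}
    (h : EvenGen D ι m0)
    (hN : ∀ m, S (D.X ^ (2 * q - 1) • m) = D.X ^ (2 * q - 1) • m) :
    S m0 = m0 ∨
    (∃ v w, S v + v = D.X • w ∧
      ∀ y, S w + D.th • w + (D.th * D.X ^ (q - 1)) • v ≠ D.X ^ q • y) ∨
    (∃ v', D.X • (S v' + Q.c' • v') = 0 ∧ ∀ y, S v' + Q.c' • v' ≠ D.X ^ q • y) ∨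
    (∃ v', D.X • (D.th' • S v' + Q.c' • v') = 0 ∧ ∀ y, D.th' • S v' + Q.c' • v' ≠ D.X ^ q • y) := by
  have t0 := D.two
  have k2 : (2 : k) = 0 := by
    have hn : ∀ a : k, ι a • m0 = 0 → a = 0 := fun a ha => h.coef hq a 0 (by simp [ha])
    apply hn
    rw [map_ofNat, t0, zero_smul]
  have t2 : ∀ m : M, m + m = 0 := fun m => by
    rw [← two_smul A m, D.two, zero_smul]
  have hNS : ∀ m, D.X ^ (2 * q - 1) • S m = D.X ^ (2 * q - 1) • m := by
    intro m
    rw [← hN m, hS.semi, D.bar_top (by omega)]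
  have eqs : ∀ a b : M, a + b = 0 → a = b := fun a b hab => by
    rw [← add_right_cancel_iff (a := b), hab, t2]
  -- the element s
  obtain ⟨v, hv⟩ : ∃ v, S m0 = m0 + D.X ^ (2 * q - 1) • v := by
    obtain ⟨c, y, hy⟩ := h.F1 hq (m := S m0) (by
      rw [← D.bar_X', ← hS.semi, D.X'_eq, mul_smul, h.X0]; simp)
    have h2 := congrArg S hy
    rw [hS.sq, map_add, hN, hS.semi, hbar, hy, add_smul, pow_smul_zero D (i := 1) (by omega)
      (by simpa using h.X0), one_smul, add_zero] at h2
    obtain ⟨z, hz⟩ := div_pow D (show 1 ≤ 2 * q - 1 by omega) y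
    rw [hz, pow_one] at h2
    have : c * c - 1 = 0 := by
      apply h.coef hq (c * c - 1) (- (ι c • z + z))
      rw [map_sub, map_mul, map_one]
      linear_combination (norm := module) -h2
    have hc : c = 1 := by
      have : (c - 1) ^ 2 = 0 := by linear_combination this + (1 - c) * k2
      exact sub_eq_zero.mp (pow_eq_zero_iff (two_ne_zero) |>.mp this)
    exact ⟨y, by rw [hy, hc]; simp⟩
  by_cases hs0 : D.X ^ (2 * q - 1) • v = 0
  · left; rw [hv, hs0, add_zero]
  right
  obtain ⟨a, w, hw⟩ := h.F2 hq (m := S v + v) (by rw [smul_add, hNS, t2])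
  obtain ⟨K1, K2⟩ := KI hS (by omega) (hbar a) h.X0 (by rw [hv]) rfl hw
  obtain ⟨l, y, hy⟩ := h.F1 hq K1
  have hXs : ∀ z : M, D.X • D.X ^ (2 * q - 1) • z = 0 := fun z => by
    rw [← mul_smul, D.X_top (by omega), zero_smul]
  have hls : ι l • (D.X ^ (2 * q - 1) • v) =
      (1 + ι a) • D.X ^ (2 * q - 1) • v + (ι a * D.X ^ (2 * q - 1)) • w := by
    rw [← K2, hy, map_add, hN, hS.semi, hbar, hv]
    match_scalars <;> grind
  have hfree : ∀ b : k, ι b • (D.X ^ (2 * q - 1) • v) = 0 → b = 0 := by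
    intro b hb
    by_contra hne
    apply hs0
    rw [← one_smul A (D.X ^ (2 * q - 1) • v), ← map_one ι, ← inv_mul_cancel₀ hne, map_mul, mul_smul,
      hb, smul_zero]
  by_cases ha : a = 0
  · left
    subst ha
    refine ⟨v, w, by simpa using hw, ?_⟩
    intro z hz
    simp only [map_zero, zero_mul, zero_smul, add_zero] at hy
    rw [hz] at hy
    obtain ⟨y1, hy1⟩ := div_pow D (show 1 ≤ 2 * q - 1 by omega) y
    obtain ⟨z1, hz1⟩ := div_pow D (show 1 ≤ q by omega) z
    rw [pow_one] at *
    have hl0 := h.coef hq l (z1 - y1) (by rw [smul_sub, ← hz1, ← hy1, hy]; abel)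
    rw [hl0] at hls
    simp at hls
    exact hs0 hls.symm
  right
  -- a ≠ 0
  obtain ⟨mu, hmu⟩ : ∃ mu : k, a * mu = l + 1 + a := ⟨(l + 1 + a) / a, by field_simp⟩
  have hw' : D.X ^ (2 * q - 1) • (w - ι mu • v) = 0 := by
    have : ι a • (D.X ^ (2 * q - 1) • (w - ι mu • v)) = 0 := by
      have hmu' := congrArg ι hmu
      simp only [map_mul, map_add, map_one] at hmu'
      generalize D.X ^ (2 * q - 1) = U at *
      linear_combination (norm := (match_scalars <;> grind)) - hls
    rw [← one_smul A (D.X ^ (2 * q - 1) • _), ← map_one ι, ← inv_mul_cancel₀ ha, map_mul, mul_smul,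
      this, smul_zero]
  obtain ⟨nu, w1, hw1⟩ := h.F2 hq hw'
  have hw1 : w = ι mu • v + ι nu • m0 + D.X • w1 := by
    rw [sub_eq_iff_eq_add] at hw1; rw [hw1]; abel
  have hSw := congrArg S hw1
  simp only [map_add, hS.semi, hbar, hv, D.bar_X] at hSw
  have bth := D.th_eq
  have bX' := D.X'_eq
  have binv := D.inv
  obtain ⟨v2, hv2⟩ := div_pow D (show 2 ≤ q - 1 by omega) v
  obtain ⟨v3, hv3⟩ := div_pow D (show 2 ≤ 2 * q - 2 by omega) v
  obtain ⟨v4, hv4⟩ := div_pow D (show 2 ≤ 2 * q - 1 by omega) v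
  obtain ⟨v5, hv5⟩ := div_pow D (show 2 ≤ 2 * q - 1 by omega) y
  rw [mul_smul D.th, mul_smul (ι a), hv2, hv3, hv5] at hy
  rw [hv4] at hSw
  have hlmu : l = mu * a := by
    have : l - mu * a = 0 := by
      apply h.coef hq _ ((ι mu + 1) • w + w1 + (ι nu * D.X) • v4 + D.th' • S w1 + (D.th * D.X) • v2 +
        (ι a * D.X) • v3 - D.X • v5)
      rw [map_sub, map_mul]
      linear_combination (norm := (match_scalars <;> grind)) -hy + hSw + hw1 + ι mu • hw
    exact sub_eq_zero.mp this
  have ha1 : a = 1 := by linear_combination -hmu - hlmu - k2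
  subst ha1
  simp only [mul_one] at hlmu
  subst hlmu
  have hmm : l * (l + 1) = 0 := by
    apply hfree
    rw [map_mul, map_add, map_one]
    have hy2 := congrArg (fun m => D.X ^ (2 * q - 2) • m) hy
    have f1 : D.X ^ (2 * q - 2) * D.X = D.X ^ (2 * q - 1) := by rw [← pow_succ]; congr 1; omega
    have f2 : D.X ^ (2 * q - 2) * D.X ^ 2 = 0 := by
      rw [← pow_add, ← D.pow_nil]; congr 1; omega
    have f3 : D.X ^ (2 * q - 2) • m0 = 0 := pow_smul_zero D (i := 1) (by omega) (by simpa using h.X0)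
    have f4 := hNS w1
    rw [← f1] at *
    generalize D.X ^ (2 * q - 2) = U at *
    simp only [map_one] at *
    linear_combination (norm := (match_scalars <;> grind)) hy2 - U • hSw - U • hw1 - (U * ι l) • hw - (U * (ι l + 1) * D.X) • hw1 - D.th' • f4 + (ι l * (ι nu) * D.X + ι nu * D.X) • f3
  have hvv : S v + v = m0 + (ι l * D.X) • v + (D.X * D.X) • w1 := by
    rw [map_one] at hw
    linear_combination (norm := (match_scalars <;> grind)) hw + D.X • hw1 + ι nu • h.X0
  rcases mul_eq_zero.mp hmm with hl | hl
  · left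
    subst hl
    refine Lstep hq Q hS h hN hv rfl hs0 (w := w1) (by simpa using hvv)
  · right
    have hl : l = 1 := by linear_combination hl - k2
    subst hl
    rw [map_one] at hvv
    have := Lstep hq Q hS.twist h (s := D.X ^ (2 * q - 1) • v) (v := v) (w := D.th' • w1) (by
      intro m
      simp only [AddMonoidHom.coe_comp, Function.comp_apply, AddMonoidHom.mk'_apply]
      rw [hN, D.th'_eq, add_smul, one_smul, D.X'_eq, mul_smul, hXs]; simp) (by
      simp only [AddMonoidHom.coe_comp, Function.comp_apply, AddMonoidHom.mk'_apply]
      rw [hv, D.th'_eq, add_smul, one_smul, D.X'_eq, mul_smul, smul_add D.X, h.X0, hXs]; simp) rfl hs0 (by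
      simp only [AddMonoidHom.coe_comp, Function.comp_apply, AddMonoidHom.mk'_apply]
      linear_combination (norm := (match_scalars <;> grind)) D.th' • hvv + (D.th') • h.X0)
    simpa using this
end
end EQ

namespace EQ

section
variable {A : Type} [CommRing A]

theorem QD.t_add {q : ℕ} (D : QD A q) : D.X + D.X' = D.X * D.X' := by
  have := D.two; have := D.inv; have := D.th_eq; have := D.th'_eq
  grind

theorem QD.t_pow {q : ℕ} (D : QD A q) : (D.X * D.X') ^ q = 0 := by
  rw [mul_pow, D.X'_pow, ← pow_add, ← two_mul, D.pow_nil]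

theorem QD.t_pow1X {q : ℕ} (D : QD A q) (hq : 1 ≤ q) :
    (D.X * D.X') ^ (q - 1) * D.X = D.X ^ (2 * q - 1) := by
  have h0 := D.X_top hq
  have h1 : D.th' * (D.X ^ (2 * q - 1)) = D.X ^ (2 * q - 1) := by
    rw [D.th'_eq, D.X'_eq]; linear_combination D.th' * h0
  have h2 : ∀ j, D.th' ^ j * (D.X ^ (2 * q - 1)) = D.X ^ (2 * q - 1) := by
    intro j
    induction j with
    | zero => simp
    | succ j ih => rw [pow_succ, mul_assoc, h1, ih]
  rw [← h2 (q - 1), D.X'_eq, mul_pow, mul_pow, show 2 * q - 1 = (q - 1) + (q - 1) + 1 by omega]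
  ring

/-- The exotic data. -/
def QD.qc (p : ℕ) {q : ℕ} (D : QD A q) (hqp : q = 2 * p) (hp : 2 ≤ p)
    (hf : ∀ a b : A, (a + b) ^ p = a ^ p + b ^ p) : QC D where
  c := 1 + (D.X ^ p + (D.X * D.X') ^ (p - 1) * D.X) + (D.X * D.X') ^ (2 * p - 2) * D.X
  c' := 1 + (D.X ^ p + (D.X * D.X') ^ (p - 1) * D.X) + (D.X * D.X') ^ (2 * p - 2) * D.X'
  al := 1 + (D.X ^ p + (D.X * D.X') ^ (p - 1) * D.X)
  ga := D.X ^ (p - 2) * D.th + (D.X * D.X') ^ (p - 2) * D.X + (D.X * D.X') ^ (2 * p - 3) * D.X'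
  be := D.X ^ (p - 1) + (D.X * D.X') ^ (p - 1)
  bar_c := by
    subst hqp
    simp only [map_add, map_one, map_mul, map_pow, D.bar_X, D.bar_X']
    have h1 := hf D.X D.X'
    rw [D.t_add] at h1
    have h2 : (D.X * D.X') ^ p = (D.X * D.X') ^ (p - 1) * (D.X + D.X') := by
      rw [D.t_add, ← pow_succ]; congr 1; omega
    have := D.two
    rw [mul_comm D.X' D.X]
    generalize (D.X * D.X') ^ (p - 1) = U at *
    generalize (D.X * D.X') ^ (2 * p - 2) = V at *
    generalize (D.X * D.X') ^ p = W at *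
    grind
  bar_c' := by
    subst hqp
    simp only [map_add, map_one, map_mul, map_pow, D.bar_X, D.bar_X']
    have h1 := hf D.X D.X'
    rw [D.t_add] at h1
    have h2 : (D.X * D.X') ^ p = (D.X * D.X') ^ (p - 1) * (D.X + D.X') := by
      rw [D.t_add, ← pow_succ]; congr 1; omega
    have := D.two
    rw [mul_comm D.X' D.X]
    generalize (D.X * D.X') ^ (p - 1) = U at *
    generalize (D.X * D.X') ^ (2 * p - 2) = V at *
    generalize (D.X * D.X') ^ p = W at *
    grind
  bar_al := by
    subst hqp
    simp only [map_add, map_one, map_mul, map_pow, D.bar_X, D.bar_X']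
    have h1 := hf D.X D.X'
    rw [D.t_add] at h1
    have h2 : (D.X * D.X') ^ p = (D.X * D.X') ^ (p - 1) * (D.X + D.X') := by
      rw [D.t_add, ← pow_succ]; congr 1; omega
    have := D.two
    rw [mul_comm D.X' D.X]
    generalize (D.X * D.X') ^ (p - 1) = U at *
    generalize (D.X * D.X') ^ p = W at *
    grind
  cc := by
    subst hqp
    have h1 := D.t_pow1X (by omega)
    have h2 : (D.X * D.X') ^ (2 * p - 1) = (D.X * D.X') ^ (2 * p - 2) * (D.X * D.X') := by
      rw [← pow_succ]; congr 1; omega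
    have h3 : (D.X * D.X') ^ (2 * p - 1) * (D.X * D.X') = 0 := by
      rw [← D.t_pow, ← pow_succ]; congr 1; omega
    have h4 : (D.X * D.X') ^ (2 * p - 2) * (D.X * D.X') ^ (2 * p - 2) * (D.X * D.X') = 0 := by
      have h5 := D.t_pow
      rw [← pow_add, ← pow_succ, show 2 * p - 2 + (2 * p - 2) + 1 = 2 * p + (2 * p - 3) by omega,
        pow_add, h5, zero_mul]
    have h5 : (D.X * D.X') ^ (p - 1) * (D.X * D.X') ^ (p - 1) = (D.X * D.X') ^ (2 * p - 2) := by
      rw [← pow_add]; congr 1; omega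
    have h6 : D.X ^ p = D.X ^ 2 * D.X ^ (p - 2) := by
      rw [← pow_add]; congr 1; omega
    have h7 : D.X ^ (2 * p) = D.X ^ p * D.X ^ p := by
      rw [← pow_add]; congr 1; omega
    have h8 : (D.X * D.X') ^ (p - 1) = (D.X * D.X') ^ (p - 2) * (D.X * D.X') := by
      rw [← pow_succ]; congr 1; omega
    have h9 := D.t_add
    have h10 := D.X'_eq
    have h11 := D.two
    have h12 := D.X_top (q := 2 * p) (by omega)
    rw [← h1] at h12 ⊢
    rw [h7]
    rw [h2] at *
    have s1 : (D.X * D.X') ^ (2 * p - 2) * (D.X * D.X') * D.X ^ p = 0 := by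
      rw [h6]; linear_combination D.X ^ (p - 2) * h12
    have s2 : (D.X * D.X') ^ (2 * p - 2) * (D.X * D.X') * ((D.X * D.X') ^ (p - 1)) = 0 := by
      rw [h8]; linear_combination (D.X * D.X') ^ (p - 2) * h3
    generalize (D.X * D.X') ^ (2 * p - 2) = V at *
    generalize (D.X * D.X') ^ (p - 1) = U at *
    generalize (D.X * D.X') ^ (p - 2) = U' at *
    generalize D.X ^ p = R at *
    generalize D.X ^ (p - 2) = R' at *
    generalize D.X = X at *
    generalize D.X' = X' at *
    linear_combination (norm := ring_nf) (V * (1 + (R + U * X))) * h9 + s1 + X * s2 + h4 + X^2 * h5  - V * X * h9 +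
      h11 * (R + U * X + R * U * X )
    have : (2 : A) = 0 := h11
    grind
  cth := by
    subst hqp
    have := D.two; have := D.th_eq; have := D.X_eq
    generalize (D.X * D.X') ^ (2 * p - 2) = V at *
    generalize (D.X * D.X') ^ (p - 1) = U at *
    grind
  c'1 := by
    subst hqp
    have h2 : (D.X * D.X') ^ (2 * p - 2) = (D.X * D.X') ^ (2 * p - 3) * (D.X * D.X') := by
      rw [← pow_succ]; congr 1; omega
    have h6 : D.X ^ p = D.X ^ 2 * D.X ^ (p - 2) := by
      rw [← pow_add]; congr 1; omega
    have h8 : (D.X * D.X') ^ (p - 1) = (D.X * D.X') ^ (p - 2) * (D.X * D.X') := by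
      rw [← pow_succ]; congr 1; omega
    rw [h2, h6, h8]
    have := D.two; have := D.th_eq; have := D.X_eq
    generalize (D.X * D.X') ^ (2 * p - 3) = V at *
    generalize (D.X * D.X') ^ (p - 2) = U at *
    grind
  al1 := by
    subst hqp
    have h6 : D.X ^ p = D.X * D.X ^ (p - 1) := by
      rw [← pow_succ']; congr 1; omega
    rw [h6]; ring
end
end EQ

namespace EQ
open MonoidAlgebra
set_option linter.unusedSectionVars false

theorem frob2 {R : Type} [CommRing R] [CharP R 2] (a b : R) (r : ℕ) :
    (a + b) ^ (2 * 2 ^ (r + 1)) = a ^ (2 * 2 ^ (r + 1)) + b ^ (2 * 2 ^ (r + 1)) := by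
  rw [show 2 * 2 ^ (r + 1) = 2 ^ (r + 2) by ring, add_pow_char_pow]

theorem frob3 {R : Type} [CommRing R] [CharP R 2] (a b : R) (r : ℕ) :
    (a + b) ^ (2 * (2 * 2 ^ (r + 1))) = a ^ (2 * (2 * 2 ^ (r + 1))) + b ^ (2 * (2 * 2 ^ (r + 1))) := by
  rw [show 2 * (2 * 2 ^ (r + 1)) = 2 ^ (r + 3) by ring, add_pow_char_pow]

/-- `q = 2 ^ (r + 2)` for some `r` -/
class PQ (q : ℕ) : Prop where
  out : ∃ r, q = 2 * 2 ^ (r + 1)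

theorem PQ.four (q : ℕ) [h : PQ q] : 4 ≤ q := by
  obtain ⟨r, rfl⟩ := h.out
  rw [pow_succ]; have := Nat.one_le_two_pow (n := r); omega

theorem PQ.even (q : ℕ) [h : PQ q] : q = 2 * (q / 2) := by
  obtain ⟨r, rfl⟩ := h.out; omega

instance {q : ℕ} [PQ q] : NeZero q := ⟨by have := PQ.four q; omega⟩
instance {q : ℕ} [PQ q] : NeZero (2 * q) := ⟨by have := PQ.four q; omega⟩

theorem frobq {R : Type} [CommRing R] [CharP R 2] (a b : R) (q : ℕ) [h : PQ q] :
    (a + b) ^ q = a ^ q + b ^ q := by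
  obtain ⟨r, rfl⟩ := h.out; exact frob2 a b r
theorem frob2q {R : Type} [CommRing R] [CharP R 2] (a b : R) (q : ℕ) [h : PQ q] :
    (a + b) ^ (2 * q) = a ^ (2 * q) + b ^ (2 * q) := by
  obtain ⟨r, rfl⟩ := h.out; exact frob3 a b r
theorem frobp {R : Type} [CommRing R] [CharP R 2] (a b : R) (q : ℕ) [h : PQ q] :
    (a + b) ^ (q / 2) = a ^ (q / 2) + b ^ (q / 2) := by
  obtain ⟨r, rfl⟩ := h.out
  rw [Nat.mul_div_cancel_left _ two_pos, add_pow_char_pow]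

/-- The group algebra of the cyclic group of order `2q`, `q = 2 * 2 ^ (r+1)`. -/
abbrev A0 (k : Type) [Field k] (q : ℕ) : Type :=
  MonoidAlgebra k (Multiplicative (ZMod (2 * q)))

section
variable (k : Type) [Field k] [CharP k 2] (q : ℕ) [PQ q]

instance : CharP (A0 k q) 2 := charP_of_injective_algebraMap (algebraMap k (A0 k q)).injective 2

theorem th_pow_nat (i : ℕ) : (single (Multiplicative.ofAdd (1 : ZMod (2 * q))) 1 : A0 k q) ^ i
    = single (Multiplicative.ofAdd (i : ZMod (2 * q))) 1 := by
  rw [single_pow, one_pow, ← ofAdd_nsmul, nsmul_one]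

/-- The concrete data. -/
noncomputable def D0 : QD (A0 k q) (q) where
  th := single (Multiplicative.ofAdd 1) 1
  th' := single (Multiplicative.ofAdd (-1)) 1
  bar := (MonoidAlgebra.mapDomainAlgHom k k (invMonoidHom (α := Multiplicative (ZMod (2 * q))))).toRingHom
  two := CharTwo.two_eq_zero
  inv := by rw [single_mul_single, ← ofAdd_add]; simp [one_def]
  bar_th := by simp [mapDomain_single]
  bar_th' := by simp [mapDomain_single]
  frob := by
    rw [frobq, one_pow]
  nil := by
    rw [frob2q, one_pow, th_pow_nat, ZMod.natCast_self]
    rw [ofAdd_zero, ← one_def]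
    exact CharTwo.add_self_eq_zero _

theorem D0_th : (D0 k q).th = single (Multiplicative.ofAdd 1) 1 := rfl

theorem D0_bar_single (g c) : (D0 k q).bar (single g c) = single g⁻¹ c := by
  simp [D0, mapDomain_single]

theorem D0_bar_alg (c : k) : (D0 k q).bar (algebraMap k _ c) = algebraMap k _ c := by
  rw [Algebra.algebraMap_eq_smul_one, one_def, smul_single, D0_bar_single, inv_one]

theorem D0_bar_smul (c : k) (a : A0 k q) : (D0 k q).bar (c • a) = c • (D0 k q).bar a := by
  rw [Algebra.smul_def, map_mul, D0_bar_alg, Algebra.smul_def]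

/-- Exotic constants. -/
noncomputable def Q0 : QC (D0 k q) := QD.qc (q / 2) (D0 k q) (PQ.even q) (by have := PQ.four q; omega)
  (fun a b => frobp a b q)

/-- augmentation -/
noncomputable def eps : A0 k q →ₐ[k] k := MonoidAlgebra.lift k k _ 1

theorem eps_single (g c) : eps k q (single g c) = c := by simp [eps]

theorem eps_th : eps k q (D0 k q).th = 1 := by rw [D0_th, eps_single]

theorem eps_X : eps k q (D0 k q).X = 0 := by
  rw [QD.X, map_add, eps_th, map_one]; exact CharTwo.add_self_eq_zero _

theorem eps_bar (a : A0 k q) : eps k q ((D0 k q).bar a) = eps k q a := by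
  induction a using MonoidAlgebra.induction_linear with
  | zero => simp
  | add f g hf hg => rw [map_add, map_add, hf, hg, map_add]
  | single g c => rw [D0_bar_single, eps_single, eps_single]

theorem single_eq_pow (g : Multiplicative (ZMod (2 * q))) :
    (single g 1 : A0 k q) = (D0 k q).th ^ (g.toAdd.val) := by
  rw [D0_th, th_pow_nat, ZMod.natCast_val, ZMod.cast_id]; rfl

theorem decomp (a : A0 k q) : ∃ b, a = algebraMap k _ (eps k q a) + (D0 k q).X * b := by
  induction a using MonoidAlgebra.induction_linear with
  | zero => exact ⟨0, by simp⟩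
  | add f g hf hg =>
    obtain ⟨b, hb⟩ := hf
    obtain ⟨b', hb'⟩ := hg
    refine ⟨b + b', ?_⟩
    conv_lhs => rw [hb, hb']
    rw [map_add, map_add]; ring
  | single g c =>
    have h1 : (D0 k q).X = (D0 k q).th - 1 := by
      rw [QD.X, sub_eq_add_neg, CharTwo.neg_eq]
    obtain ⟨b, hb⟩ := sub_one_dvd_pow_sub_one ((D0 k q).th) (g.toAdd.val)
    refine ⟨c • b, ?_⟩
    rw [eps_single, mul_smul_comm, h1, ← hb, ← single_eq_pow]
    rw [smul_sub, smul_single, smul_eq_mul, mul_one, Algebra.algebraMap_eq_smul_one]; abel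

theorem top_eq : (D0 k q).X ^ (2 * q - 1) =
    ∑ i ∈ Finset.range (2 * q), (D0 k q).th ^ i := by
  have key : ∑ i ∈ Finset.range (2 * q), (Polynomial.X : Polynomial k) ^ i =
      (Polynomial.X + 1) ^ (2 * q - 1) := by
    have h0 : (Polynomial.X - 1 : Polynomial k) ≠ 0 := by
      rw [← Polynomial.C_1]; exact Polynomial.X_sub_C_ne_zero 1
    apply mul_right_cancel₀ h0
    rw [geom_sum_mul]
    have h1 : (Polynomial.X - 1 : Polynomial k) = Polynomial.X + 1 := by
      rw [sub_eq_add_neg, CharTwo.neg_eq]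
    have h2 : (1 : ℕ) ≤ 2 * q := by have := PQ.four q; omega
    rw [h1, ← pow_succ, Nat.sub_add_cancel h2, frob2q, one_pow, sub_eq_add_neg, CharTwo.neg_eq]
  have := congrArg (Polynomial.aeval (D0 k q).th) key
  simp only [map_sum, map_pow, map_add, map_one, Polynomial.aeval_X] at this
  rw [this, QD.X]

theorem top_eq_sum : (D0 k q).X ^ (2 * q - 1) =
    ∑ i : ZMod (2 * q), single (Multiplicative.ofAdd i) 1 := by
  rw [top_eq]
  symm
  refine Finset.sum_bij (fun i _ => i.val) ?_ ?_ ?_ ?_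
  · intro a _; exact Finset.mem_range.mpr (ZMod.val_lt a)
  · intro a _ b _ h; exact ZMod.val_injective _ h
  · intro b hb; exact ⟨(b : ZMod _), Finset.mem_univ _, ZMod.val_cast_of_lt (Finset.mem_range.mp hb)⟩
  · intro a _; rw [single_eq_pow]; rfl

/-- coefficient functional -/
noncomputable def cf (g : Multiplicative (ZMod (2 * q))) : A0 k q →ₗ[k] k where
  toFun a := a.coeff g
  map_add' a b := by simp
  map_smul' c a := by simp

open Classical in
theorem cf_single (g h : Multiplicative (ZMod (2 * q))) (c : k) :
    cf k q g (single h c) = if h = g then c else 0 := by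
  change (single h c : A0 k q).coeff g = _
  rw [coeff_single, Finsupp.single_apply]

theorem top_coeff (g) : cf k q g ((D0 k q).X ^ (2 * q - 1)) = 1 := by
  classical
  rw [top_eq_sum, map_sum]
  rw [Finset.sum_eq_single g.toAdd]
  · rw [cf_single]; simp
  · intro b _ hb
    rw [cf_single, if_neg]; intro h; apply hb; rw [← h]; rfl
  · simp

theorem top_ne : (D0 k q).X ^ (2 * q - 1) ≠ 0 := by
  intro h
  have := top_coeff k q 1
  rw [h, map_zero] at this
  exact zero_ne_one this

theorem mul_top (a : A0 k q) : a * (D0 k q).X ^ (2 * q - 1) =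
    eps k q a • (D0 k q).X ^ (2 * q - 1) := by
  obtain ⟨b, hb⟩ := decomp k q a
  have h := (D0 k q).X_top (by have := PQ.four q; omega)
  conv_lhs => rw [hb]
  rw [add_mul, ← Algebra.smul_def, mul_comm _ b, mul_assoc, h, mul_zero, add_zero]

theorem ker_pow (j : ℕ) (hj : j ≤ 2 * q) (a : A0 k q) (h : (D0 k q).X ^ j * a = 0) :
    ∃ b, a = (D0 k q).X ^ (2 * q - j) * b := by
  have : ∀ i, i + j ≤ 2 * q → ∃ b, a = (D0 k q).X ^ i * b := by
    intro i
    induction i with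
    | zero => intro _; exact ⟨a, by simp⟩
    | succ i ih =>
      intro hi
      obtain ⟨b, hb⟩ := ih (by omega)
      obtain ⟨b', hb'⟩ := decomp k q b
      suffices eps k q b = 0 by
        rw [this, map_zero, zero_add] at hb'
        exact ⟨b', by rw [hb, hb', pow_succ, mul_assoc]⟩
      have h1 : b * (D0 k q).X ^ (2 * q - 1) = 0 := by
        have : 2 * q - 1 = (2 * q - 1 - i - j) + j + i := by omega
        rw [this, pow_add, pow_add]
        rw [hb] at h
        linear_combination (D0 k q).X ^ (2 * q - 1 - i - j) * h
      rw [mul_top] at h1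
      exact (smul_eq_zero.mp h1).resolve_right (top_ne k q)
  exact this _ (by omega)

theorem eps_c : eps k q (Q0 k q).c = 1 := by
  have h := congrArg (eps k q) (Q0 k q).c'1
  rw [← (Q0 k q).bar_c, map_add, map_one, eps_bar, map_mul, map_mul, eps_X] at h
  rw [zero_mul, zero_mul] at h
  have h2 : (1 : k) + 1 = 0 := CharTwo.add_self_eq_zero _
  linear_combination h - h2

theorem eps_c' : eps k q (Q0 k q).c' = 1 := by
  rw [← (Q0 k q).bar_c, eps_bar, eps_c]
end
end EQ

namespace EQ
open MonoidAlgebra QuaternionGroup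
set_option linter.unusedSectionVars false

section
variable {q : ℕ} {G : Type} [Group G] (e : G ≃* QuaternionGroup q)

/-- The cyclic subgroup. -/
def cyc : Multiplicative (ZMod (2 * q)) →* G where
  toFun i := e.symm (a i.toAdd)
  map_one' := by rw [toAdd_one, ← one_def, map_one]
  map_mul' i j := by rw [← map_mul, a_mul_a, toAdd_mul]

/-- generator of order `2q` -/
def gth : G := e.symm (a 1)
/-- generator of order 4 -/
def gta : G := e.symm (xa 0)
/-- central involution -/
def gz : G := e.symm (a q)

theorem cyc_one : cyc e (Multiplicative.ofAdd 1) = gth e := rfl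
theorem cyc_q : cyc e (Multiplicative.ofAdd (q : ZMod (2 * q))) = gz e := rfl

theorem cyc_cases (g : G) : ∃ i, g = cyc e i ∨ g = gta e * cyc e i := by
  obtain ⟨x, rfl⟩ := e.symm.surjective g
  cases x with
  | a i => exact ⟨Multiplicative.ofAdd i, Or.inl rfl⟩
  | xa i => exact ⟨Multiplicative.ofAdd i, Or.inr (by
      change _ = e.symm (xa 0) * e.symm (a i)
      rw [← map_mul, xa_mul_a, zero_add])⟩

theorem gta_cyc (i) : gta e * cyc e i = cyc e i⁻¹ * gta e := by
  change e.symm (xa 0) * e.symm (a i.toAdd) = e.symm (a (i⁻¹).toAdd) * e.symm (xa 0)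
  rw [← map_mul, ← map_mul, xa_mul_a, a_mul_xa, toAdd_inv]; simp

theorem gta_sq : gta e * gta e = gz e := by
  change e.symm (xa 0) * e.symm (xa 0) = e.symm (a q)
  rw [← map_mul, xa_mul_xa]; simp

theorem two_q : (q : ZMod (2 * q)) + q = 0 := by
  have : ((2 * q : ℕ) : ZMod (2 * q)) = 0 := ZMod.natCast_self _
  push_cast at this
  rw [← two_mul, this]

theorem gz_sq : gz e * gz e = 1 := by
  change e.symm (a q) * e.symm (a q) = 1
  rw [← map_mul, a_mul_a, two_q, ← one_def, map_one]

theorem gz_comm (g : G) : gz e * g = g * gz e := by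
  obtain ⟨x, rfl⟩ := e.symm.surjective g
  change e.symm (a q) * e.symm x = e.symm x * e.symm (a q)
  have hneg : -(q : ZMod (2 * q)) = q := by rw [neg_eq_iff_add_eq_zero, two_q]
  cases x with
  | a i => rw [← map_mul, ← map_mul, a_mul_a, a_mul_a, add_comm]
  | xa i => rw [← map_mul, ← map_mul, a_mul_xa, xa_mul_a, sub_eq_add_neg, hneg]

/-- twisting automorphism -/
def twQ (q : ℕ) : QuaternionGroup q ≃* QuaternionGroup q where
  toFun x := match x with | a i => a i | xa i => xa (i - 1)
  invFun x := match x with | a i => a i | xa i => xa (i + 1)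
  left_inv x := by cases x <;> simp
  right_inv x := by cases x <;> simp
  map_mul' x y := by
    cases x <;> cases y <;> simp
    all_goals ring

/-- twisted identification -/
def tw : G ≃* QuaternionGroup q := e.trans (twQ q)

theorem tw_cyc : cyc (tw e) = cyc e := rfl
theorem tw_gth : gth (tw e) = gth e := rfl
theorem tw_gz : gz (tw e) = gz e := rfl
theorem tw_gta : gta (tw e) = (gth e)⁻¹ * gta e := by
  change e.symm (xa (0 + 1)) = (e.symm (a 1))⁻¹ * e.symm (xa 0)
  rw [eq_inv_mul_iff_mul_eq, ← map_mul, a_mul_xa]; simp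

/-- building representations of the quaternion group -/
def quatRep {k V : Type} [Field k] [AddCommGroup V] [Module k V]
    (T : Multiplicative (ZMod (2 * q)) →* Module.End k V) (S : Module.End k V)
    (h1 : ∀ i, T i * S = S * T i⁻¹) (h2 : S * S = T (Multiplicative.ofAdd (q : ZMod (2 * q)))) :
    Representation k (QuaternionGroup q) V where
  toFun x := match x with
    | a i => T (Multiplicative.ofAdd i)
    | xa i => S * T (Multiplicative.ofAdd i)
  map_one' := by
    change T (Multiplicative.ofAdd 0) = 1
    rw [ofAdd_zero, map_one]
  map_mul' x y := by
    cases x with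
    | a i => cases y with
      | a j =>
        change T _ = T _ * T _
        rw [ofAdd_add, map_mul]
      | xa j =>
        change S * T _ = T _ * (S * T _)
        rw [← mul_assoc, h1, mul_assoc, ← map_mul, ← ofAdd_neg, ← ofAdd_add, sub_eq_neg_add]
    | xa i => cases y with
      | a j =>
        change S * T _ = (S * T _) * T _
        rw [ofAdd_add, map_mul, mul_assoc]
      | xa j =>
        change T _ = (S * T _) * (S * T _)
        rw [mul_assoc, ← mul_assoc (T _), h1, ← mul_assoc, ← mul_assoc, h2, ← map_mul, ← map_mul,
          ← ofAdd_neg, ← ofAdd_add, ← ofAdd_add]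
        congr 2; ring
end

section
variable {k : Type} [Field k] [CharP k 2] {q : ℕ} [PQ q] {G : Type} [Group G]
  (e : G ≃* QuaternionGroup q)

/-- action of the cyclic group algebra -/
noncomputable def phi (M : Rep.{0} k G) : A0 k q →ₐ[k] Module.End k M.V :=
  MonoidAlgebra.lift k _ _ (M.ρ.comp (cyc e))

/-- module structure -/
@[reducible] noncomputable def modA (M : Rep.{0} k G) : Module (A0 k q) M.V :=
  Module.compHom M.V (phi e M).toRingHom

variable (M : Rep.{0} k G)

theorem phi_single (g c) : phi e M (single g c) = c • M.ρ (cyc e g) := by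
  simp [phi]

theorem smul_phi (a : A0 k q) (m : M.V) : letI := modA e M; a • m = phi e M a m := rfl

theorem phi_th : phi e M (D0 k q).th = M.ρ (gth e) := by
  rw [D0_th, phi_single, one_smul, cyc_one]

theorem th_pow_q : (D0 k q).th ^ q = single (Multiplicative.ofAdd (q : ZMod (2 * q))) 1 := by
  rw [D0_th, th_pow_nat]

theorem phi_u : phi e M ((D0 k q).X ^ q) = M.ρ (gz e) - 1 := by
  have h := (D0 k q).th_pow
  rw [th_pow_q] at h
  have : (D0 k q).X ^ q = single (Multiplicative.ofAdd (q : ZMod (2 * q))) 1 - 1 := by rw [h]; ring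
  rw [this, map_sub, map_one, phi_single, one_smul, cyc_q]

theorem phi_semi (a : A0 k q) (m : M.V) :
    M.ρ (gta e) (phi e M a m) = phi e M ((D0 k q).bar a) (M.ρ (gta e) m) := by
  induction a using MonoidAlgebra.induction_linear with
  | zero => simp
  | add f g hf hg => simp only [map_add, LinearMap.add_apply, hf, hg]
  | single g c =>
    rw [D0_bar_single, phi_single, phi_single, LinearMap.smul_apply, LinearMap.smul_apply, map_smul,
      ← Module.End.mul_apply, ← map_mul, gta_cyc, map_mul, Module.End.mul_apply]

theorem phi_SL : letI := modA e M; SL (D0 k q) (M.ρ (gta e)).toAddMonoidHom := by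
  letI := modA e M
  constructor
  · intro a m; exact phi_semi e M a m
  · intro m
    change M.ρ (gta e) (M.ρ (gta e) m) = phi e M _ m
    rw [map_add, map_one, phi_u, ← Module.End.mul_apply, ← map_mul, gta_sq]; simp

/-- The intertwining criterion. -/
theorem equi {V W : Type} [AddCommGroup V] [Module k V] [AddCommGroup W] [Module k W]
    (ρ : Representation k G V) (σ : Representation k G W) (f : V →ₗ[k] W)
    (h1 : ∀ v, f (ρ (gth e) v) = σ (gth e) (f v)) (h2 : ∀ v, f (ρ (gta e) v) = σ (gta e) (f v))
    (g : G) (v : V) : f (ρ g v) = σ g (f v) := by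
  have hp : ∀ (i : ℕ) v, f (ρ (gth e ^ i) v) = σ (gth e ^ i) (f v) := by
    intro i
    induction i with
    | zero => simp
    | succ i ih => intro v; simp only [pow_succ, map_mul, Module.End.mul_apply, ih, h1]
  have hc : ∀ i v, f (ρ (cyc e i) v) = σ (cyc e i) (f v) := by
    intro i v
    have : cyc e i = gth e ^ (i.toAdd.val) := by
      rw [← cyc_one, ← map_pow, ← ofAdd_nsmul, nsmul_one, ZMod.natCast_val, ZMod.cast_id]; rfl
    rw [this, hp]
  obtain ⟨i, rfl | rfl⟩ := cyc_cases e g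
  · exact hc i v
  · simp only [map_mul, Module.End.mul_apply, h2, hc]

theorem phi_hom {M N : Rep.{0} k G} (f : M ⟶ N) (a : A0 k q) (m : M.V) :
    f.hom (phi e M a m) = phi e N a (f.hom m) := by
  induction a using MonoidAlgebra.induction_linear with
  | zero => simp
  | add f g hf hg => simp only [map_add, LinearMap.add_apply, hf, hg]
  | single g c =>
    rw [phi_single, phi_single, LinearMap.smul_apply, LinearMap.smul_apply, map_smul,
      Rep.hom_comm_apply]

end
end EQ

namespace EQ
open MonoidAlgebra QuaternionGroup
set_option linter.unusedSectionVars false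

section
variable (k : Type) [Field k] [CharP k 2] (q : ℕ) [PQ q] {G : Type} [Group G]
  (e : G ≃* QuaternionGroup q)

/-- cyclic action on `L` -/
noncomputable def LT : Multiplicative (ZMod (2 * q)) →* Module.End k (A0 k q × k) where
  toFun i := (LinearMap.mulLeft k (single i 1 : A0 k q)).prodMap LinearMap.id
  map_one' := by
    ext x <;> simp [← one_def]
  map_mul' i j := by
    refine LinearMap.ext fun x => ?_
    refine Prod.ext ?_ rfl
    change single (i * j) 1 * x.1 = single i 1 * (single j 1 * x.1)
    rw [← mul_assoc, single_mul_single, one_mul]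

/-- the other generator on `L` -/
noncomputable def LS : Module.End k (A0 k q × k) where
  toFun x := ((D0 k q).bar x.1 * (Q0 k q).c' + x.2 • (D0 k q).X ^ (2 * q - 1), eps k q x.1 + x.2)
  map_add' x y := by
    refine Prod.ext ?_ ?_
    · simp only [Prod.fst_add, Prod.snd_add, map_add, add_smul, add_mul]; abel
    · simp only [Prod.fst_add, Prod.snd_add, map_add]; abel
  map_smul' c x := by
    refine Prod.ext ?_ ?_
    · simp only [Prod.smul_fst, Prod.smul_snd, D0_bar_smul, smul_mul_assoc, RingHom.id_apply, smul_add,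
        smul_eq_mul, mul_smul]
    · simp [mul_add]

theorem one_le_q : 1 ≤ q := by have := PQ.four q; omega

theorem eps_top : eps k q ((D0 k q).X ^ (2 * q - 1)) = 0 := by
  rw [map_pow, eps_X, zero_pow]; have := PQ.four q; omega

theorem c'_top : (D0 k q).X ^ (2 * q - 1) * (Q0 k q).c' = (D0 k q).X ^ (2 * q - 1) := by
  rw [mul_comm, mul_top, eps_c', one_smul]

theorem LT_apply (i) (x : A0 k q × k) : LT k q i x = (single i 1 * x.1, x.2) := rfl
theorem LS_apply (x : A0 k q × k) : LS k q x =
    ((D0 k q).bar x.1 * (Q0 k q).c' + x.2 • (D0 k q).X ^ (2 * q - 1), eps k q x.1 + x.2) := rfl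

theorem bar_bar (y : A0 k q) : (D0 k q).bar ((D0 k q).bar y) = y := by
  induction y using MonoidAlgebra.induction_linear with
  | zero => simp
  | add f g hf hg => simp only [map_add, hf, hg]
  | single g c => rw [D0_bar_single, D0_bar_single, inv_inv]

theorem LQ1 (i) : LT k q i * LS k q = LS k q * LT k q i⁻¹ := by
  refine LinearMap.ext fun x => ?_
  rw [Module.End.mul_apply, Module.End.mul_apply, LT_apply, LS_apply, LT_apply, LS_apply]
  refine Prod.ext ?_ ?_
  · dsimp only
    rw [map_mul, D0_bar_single, inv_inv, mul_add, mul_smul_comm, mul_top, eps_single, one_smul,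
        mul_assoc]
  · dsimp only
    rw [map_mul, eps_single, one_mul]

theorem LQ2 : LS k q * LS k q = LT k q (Multiplicative.ofAdd (q : ZMod (2 * q))) := by
  refine LinearMap.ext fun x => ?_
  rw [Module.End.mul_apply, LT_apply, LS_apply, LS_apply]
  refine Prod.ext ?_ ?_
  · dsimp only
    rw [map_add, map_mul, bar_bar, D0_bar_smul, (D0 k q).bar_top (one_le_q q), (Q0 k q).bar_c',
        add_mul, mul_assoc, (Q0 k q).cc, smul_mul_assoc, c'_top, mul_add, mul_top, add_smul,
        ← th_pow_q, (D0 k q).th_pow]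
    have h2 : (2 : A0 k q) = 0 := CharTwo.two_eq_zero
    linear_combination (x.2 • (D0 k q).X ^ (2 * q - 1) + (eps k q) x.1 • (D0 k q).X ^ (2 * q - 1)) * h2
  · dsimp only
    rw [map_add, map_mul, eps_bar, eps_c', map_smul, eps_top]
    have h2 : (2 : k) = 0 := CharTwo.two_eq_zero
    simp only [smul_zero]
    linear_combination (eps k q x.1) * h2

/-- The representation of the quaternion group. -/
noncomputable def LQ : Representation k (QuaternionGroup q) (A0 k q × k) :=
  quatRep (LT k q) (LS k q) (LQ1 k q) (LQ2 k q)

variable {q}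
/-- The exotic module. -/
noncomputable abbrev LL : Rep.{0} k G := Rep.of ((LQ k q).comp e.toMonoidHom)

theorem LL_cyc (i) (x : A0 k q × k) :
    (LL k e).ρ (cyc e i) x = (single i 1 * x.1, x.2) := by
  change LQ k q (e (e.symm (a i.toAdd))) x = _
  rw [MulEquiv.apply_symm_apply]
  rfl

theorem LL_phi (b : A0 k q) (x : A0 k q × k) :
    phi e (LL k e) b x = (b * x.1, eps k q b * x.2) := by
  induction b using MonoidAlgebra.induction_linear with
  | zero => rw [map_zero, map_zero]; simp; rfl
  | add f g hf hg => rw [map_add, LinearMap.add_apply, hf, hg, map_add, add_mul, add_mul]; rfl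
  | single g c =>
    rw [phi_single, LinearMap.smul_apply, LL_cyc, eps_single]
    refine Prod.ext ?_ ?_
    · change c • (single g 1 * x.1) = single g c * x.1
      rw [← smul_mul_assoc, smul_single, smul_eq_mul, mul_one]
    · rfl

theorem LL_tau (x : A0 k q × k) : (LL k e).ρ (gta e) x =
    ((D0 k q).bar x.1 * (Q0 k q).c' + x.2 • (D0 k q).X ^ (2 * q - 1), eps k q x.1 + x.2) := by
  change LQ k q (e (e.symm (xa 0))) x = _
  rw [MulEquiv.apply_symm_apply]
  change (LS k q * LT k q 1) x = _
  rw [map_one, mul_one]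
  rfl

end
end EQ

namespace EQ
open CategoryTheory CategoryTheory.Limits MonoidalCategory
set_option linter.unusedSectionVars false
set_option linter.style.haveILetI false

section
variable {k G : Type} [Field k] [Group G]

/-- morphisms from equivariant linear maps -/
def mkHom {M N : Rep.{0} k G} (f : M.V →ₗ[k] N.V) (h : ∀ g m, f (M.ρ g m) = N.ρ g (f m)) : M ⟶ N :=
  Rep.ofHom ⟨f, fun g => LinearMap.ext fun m => h g m⟩

@[simp] theorem mkHom_apply {M N : Rep.{0} k G} (f : M.V →ₗ[k] N.V) (h) (m : M.V) :
    (mkHom (M := M) (N := N) f h).hom m = f m := rfl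

theorem comp_ap {M N K : Rep.{0} k G} (f : M ⟶ N) (g : N ⟶ K) (m : M.V) :
    (f ≫ g).hom m = g.hom (f.hom m) := rfl

theorem id_ap {M : Rep.{0} k G} (m : M.V) : (𝟙 M : M ⟶ M).hom m = m := rfl
theorem zero_ap {M N : Rep.{0} k G} (m : M.V) : (0 : M ⟶ N).hom m = 0 := rfl

theorem fst_inl (M N : Rep.{0} k G) (x : M.V) :
    (biprod.fst : M ⊞ N ⟶ M).hom ((biprod.inl : M ⟶ M ⊞ N).hom x) = x := by
  rw [← comp_ap, biprod.inl_fst, id_ap]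
theorem snd_inl (M N : Rep.{0} k G) (x : M.V) :
    (biprod.snd : M ⊞ N ⟶ N).hom ((biprod.inl : M ⟶ M ⊞ N).hom x) = 0 := by
  rw [← comp_ap, biprod.inl_snd, zero_ap]
theorem fst_inr (M N : Rep.{0} k G) (x : N.V) :
    (biprod.fst : M ⊞ N ⟶ M).hom ((biprod.inr : N ⟶ M ⊞ N).hom x) = 0 := by
  rw [← comp_ap, biprod.inr_fst, zero_ap]
theorem snd_inr (M N : Rep.{0} k G) (x : N.V) :
    (biprod.snd : M ⊞ N ⟶ N).hom ((biprod.inr : N ⟶ M ⊞ N).hom x) = x := by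
  rw [← comp_ap, biprod.inr_snd, id_ap]
theorem bp_eta (M N : Rep.{0} k G) (x : (M ⊞ N).V) :
    x = (biprod.inl : M ⟶ M ⊞ N).hom ((biprod.fst : M ⊞ N ⟶ M).hom x) +
      (biprod.inr : N ⟶ M ⊞ N).hom ((biprod.snd : M ⊞ N ⟶ N).hom x) := by
  have h := congrArg (fun f => f.hom x) (biprod.total (X := M) (Y := N))
  exact h.symm

theorem bp_fd (M N : Rep.{0} k G) [FiniteDimensional k M.V] [FiniteDimensional k N.V] :
    FiniteDimensional k (M ⊞ N).V := by
  refine Module.Finite.of_surjective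
    ((biprod.inl : M ⟶ M ⊞ N).hom.toLinearMap.coprod (biprod.inr : N ⟶ M ⊞ N).hom.toLinearMap) ?_
  intro x
  exact ⟨((biprod.fst : M ⊞ N ⟶ M).hom x, (biprod.snd : M ⊞ N ⟶ N).hom x), (bp_eta M N x).symm⟩

/-- short exact sequences, elementwise -/
structure SE {A B C : Rep.{0} k G} (f : A ⟶ B) (g : B ⟶ C) : Prop where
  inj : ∀ a, f.hom a = 0 → a = 0
  surj : ∀ c, ∃ b, g.hom b = c
  zero : ∀ a, g.hom (f.hom a) = 0
  ex : ∀ b, g.hom b = 0 → ∃ a, f.hom a = b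

theorem SE.of_short {A B C : Rep.{0} k G} (f : A ⟶ B) (g : B ⟶ C) (w : f ≫ g = 0)
    (h : (ShortComplex.mk f g w).ShortExact) : SE f g := by
  refine ⟨?_, ?_, ?_, ?_⟩
  · intro a ha
    have := h.mono_f
    have h2 := (Rep.mono_iff_injective f).1 this
    exact h2 (by rw [ha, map_zero])
  · intro c
    have := h.epi_g
    exact (Rep.epi_iff_surjective g).1 this c
  · intro a; rw [← comp_ap, w, zero_ap]
  · intro b hb
    have hk := h.fIsKernel
    have hz : Rep.leftRegularHom B b ≫ g = 0 := by
      apply (Rep.leftRegularHomEquiv C).injective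
      rw [map_zero]
      change g.hom ((Rep.leftRegularHom B b).hom (MonoidAlgebra.single 1 1)) = 0
      rw [Rep.leftRegularHom_hom_single]; simp [hb]
    obtain ⟨l, hl⟩ := KernelFork.IsLimit.lift' hk _ hz
    refine ⟨l.hom (MonoidAlgebra.single 1 1), ?_⟩
    have : f.hom (l.hom (MonoidAlgebra.single 1 1)) = (Rep.leftRegularHom B b).hom (MonoidAlgebra.single 1 1) := by
      rw [← hl]; rfl
    rw [this, Rep.leftRegularHom_hom_single]; simp

theorem SE.split {A B C : Rep.{0} k G} {f : A ⟶ B} {g : B ⟶ C} (h : SE f g) (hC : Projective C) :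
    Nonempty (A ⊞ C ≅ B) := by
  have : Epi g := (Rep.epi_iff_surjective g).2 h.surj
  let s := Projective.factorThru (𝟙 C) g
  have hs : ∀ c, g.hom (s.hom c) = c := fun c => by
    rw [← comp_ap, Projective.factorThru_comp, id_ap]
  let φ : A ⊞ C ⟶ B := biprod.desc f s
  have hφ : ∀ x, φ.hom x = f.hom ((biprod.fst : A ⊞ C ⟶ A).hom x) +
      s.hom ((biprod.snd : A ⊞ C ⟶ C).hom x) := by
    intro x
    conv_lhs => rw [bp_eta A C x]
    rw [map_add, ← comp_ap _ φ, ← comp_ap _ φ, biprod.inl_desc, biprod.inr_desc]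
  have : Mono φ := by
    rw [Rep.mono_iff_injective]
    refine (injective_iff_map_eq_zero φ.hom).2 fun x hx => ?_
    have h2 : (biprod.snd : A ⊞ C ⟶ C).hom x = 0 := by
      have := congrArg g.hom hx
      rwa [hφ, map_add, h.zero, hs, zero_add, map_zero] at this
    have h1 : (biprod.fst : A ⊞ C ⟶ A).hom x = 0 := by
      apply h.inj
      rw [hφ, h2, map_zero, add_zero] at hx
      exact hx
    rw [bp_eta A C x, h1, h2, map_zero, map_zero, add_zero]
  have : Epi φ := by
    rw [Rep.epi_iff_surjective]
    intro b
    obtain ⟨a, ha⟩ := h.ex (b - s.hom (g.hom b)) (by rw [map_sub, hs, sub_self])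
    refine ⟨(biprod.inl : A ⟶ A ⊞ C).hom a + (biprod.inr : C ⟶ A ⊞ C).hom (g.hom b), ?_⟩
    simp only [hφ, map_add, fst_inl, fst_inr, snd_inl, snd_inr, ha]
    simp
  have := isIso_of_mono_of_epi φ
  exact ⟨asIso φ⟩

/-- quotient sequence for an injective map -/
theorem exists_coker {A B : Rep.{0} k G} (f : A ⟶ B) (hf : ∀ a, f.hom a = 0 → a = 0) :
    ∃ (C : Rep.{0} k G) (g : B ⟶ C), SE f g := by
  refine ⟨Rep.quotient B (LinearMap.range f.hom.toLinearMap) ?_, Rep.mkQ _ _ _, hf, ?_, ?_, ?_⟩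
  · rintro g _ ⟨a, rfl⟩
    exact ⟨A.ρ g a, Rep.hom_comm_apply f g a⟩
  · intro c; exact Submodule.mkQ_surjective _ c
  · intro a
    exact (Submodule.Quotient.mk_eq_zero _).2 ⟨a, rfl⟩
  · intro b hb
    obtain ⟨a, ha⟩ := (Submodule.Quotient.mk_eq_zero _).1 hb
    exact ⟨a, ha⟩

theorem SE.fd {A B C : Rep.{0} k G} {f : A ⟶ B} {g : B ⟶ C} (h : SE f g)
    [FiniteDimensional k B.V] : FiniteDimensional k C.V :=
  Module.Finite.of_surjective g.hom.toLinearMap h.surj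

theorem SE.fd' {A B C : Rep.{0} k G} {f : A ⟶ B} {g : B ⟶ C} (h : SE f g)
    [FiniteDimensional k B.V] : FiniteDimensional k A.V :=
  Module.Finite.of_injective f.hom.toLinearMap
    ((injective_iff_map_eq_zero f.hom.toLinearMap).2 h.inj)

theorem SE.finrank {A B C : Rep.{0} k G} {f : A ⟶ B} {g : B ⟶ C} (h : SE f g)
    [FiniteDimensional k B.V] : Module.finrank k A.V + Module.finrank k C.V = Module.finrank k B.V := by
  have h1 := LinearMap.finrank_range_add_finrank_ker g.hom.toLinearMap
  have hr : LinearMap.range g.hom.toLinearMap = ⊤ := LinearMap.range_eq_top.2 h.surj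
  have hk : LinearMap.ker g.hom.toLinearMap = LinearMap.range f.hom.toLinearMap := by
    ext b
    exact ⟨fun hb => h.ex b hb, fun ⟨a, ha⟩ => by rw [← ha]; exact h.zero a⟩
  rw [hr, hk, finrank_top, LinearMap.finrank_range_of_inj
    ((injective_iff_map_eq_zero f.hom.toLinearMap).2 h.inj)] at h1
  omega

/-- the functions module -/
abbrev IM (M : Rep.{0} k G) : Rep.{0} k G := Rep.of (X := G → M.V)
  { toFun g := 
      { toFun := fun φ h => φ (h * g)
        map_add' := fun _ _ => rfl
        map_smul' := fun _ _ => rfl }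
    map_one' := by ext φ h; simp
    map_mul' := by intro a b; refine LinearMap.ext fun φ => funext fun h => ?_; simp [mul_assoc] }

theorem IM_apply (M : Rep.{0} k G) (g : G) (φ : G → M.V) (h : G) :
    ((IM M).ρ g φ : G → M.V) h = φ (h * g) := rfl

instance IM_fd [Finite G] (M : Rep.{0} k G) [FiniteDimensional k M.V] : FiniteDimensional k (IM M).V :=
  inferInstanceAs (FiniteDimensional k (G → M.V))

/-- universal property -/
def toIM {A M : Rep.{0} k G} (f : A.V →ₗ[k] M.V) : A ⟶ IM M :=
  mkHom (N := IM M) (LinearMap.pi fun h => f ∘ₗ A.ρ h) (by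
    intro g m
    funext h
    change f (A.ρ h (A.ρ g m)) = f (A.ρ (h * g) m)
    rw [map_mul]; rfl)

theorem toIM_apply {A M : Rep.{0} k G} (f : A.V →ₗ[k] M.V) (a : A.V) (h : G) :
    ((toIM f).hom a : G → M.V) h = f (A.ρ h a) := rfl

theorem toIM_inj (M : Rep.{0} k G) (m : M.V) (h : (toIM (A := M) (M := M) LinearMap.id).hom m = 0) : m = 0 := by
  have := congrFun h 1
  rw [toIM_apply, map_one] at this
  exact this

theorem hom_IM_eval {A M : Rep.{0} k G} (f : A ⟶ IM M) (a : A.V) (h : G) :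
    (f.hom a : G → M.V) h = (f.hom (A.ρ h a) : G → M.V) 1 := by
  have := congrFun (Rep.hom_comm_apply f h a) 1
  rw [this, IM_apply, one_mul]

/-- injective extension property -/
def Inj (I : Rep.{0} k G) : Prop := ∀ (A B : Rep.{0} k G) (i : A ⟶ B) (f : A ⟶ I),
  (∀ a, i.hom a = 0 → a = 0) → ∃ g : B ⟶ I, ∀ a, g.hom (i.hom a) = f.hom a

theorem IM_inj (M : Rep.{0} k G) : Inj (IM M) := by
  intro A B i f hi
  obtain ⟨r, hr⟩ := i.hom.toLinearMap.exists_leftInverse_of_injective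
    (LinearMap.ker_eq_bot'.2 hi)
  let ev : (IM M).V →ₗ[k] M.V := LinearMap.proj (R := k) (φ := fun _ : G => M.V) 1
  refine ⟨toIM (ev ∘ₗ f.hom.toLinearMap ∘ₗ r), ?_⟩
  intro a
  funext h
  rw [toIM_apply, ← Rep.hom_comm_apply, hom_IM_eval f a h]
  have := LinearMap.congr_fun hr (A.ρ h a)
  change (f.hom (r (i.hom (A.ρ h a))) : G → M.V) 1 = _
  rw [show r (i.hom (A.ρ h a)) = A.ρ h a from this]

theorem Inj.retract {I J : Rep.{0} k G} (hJ : Inj J) (s : I ⟶ J) (r : J ⟶ I)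
    (h : ∀ x, r.hom (s.hom x) = x) : Inj I := by
  intro A B i f hi
  obtain ⟨g, hg⟩ := hJ A B i (f ≫ s) hi
  refine ⟨g ≫ r, fun a => ?_⟩
  rw [comp_ap, hg, comp_ap, h]

/-- projectives are retracts of function modules -/
theorem proj_retract [Finite G] (P : Rep.{0} k G) (hP : Projective P) :
    ∃ (s : P ⟶ IM P) (r : IM P ⟶ P), ∀ x, r.hom (s.hom x) = x := by
  classical
  cases nonempty_fintype G
  let r : IM P ⟶ P := mkHom (M := IM P) (N := P) (∑ h : G, P.ρ h⁻¹ ∘ₗ LinearMap.proj (R := k) (φ := fun _ : G => P.V) h) (by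
    intro g φ
    rw [LinearMap.sum_apply, LinearMap.sum_apply, map_sum]
    refine Fintype.sum_equiv (Equiv.mulRight g) _ _ fun h => ?_
    change P.ρ h⁻¹ (φ (h * g)) = P.ρ g (P.ρ (h * g)⁻¹ (φ (h * g)))
    rw [← Module.End.mul_apply, ← map_mul]; simp)
  have : Epi r := by
    rw [Rep.epi_iff_surjective]
    intro x
    refine ⟨(Pi.single 1 x : G → P.V), ?_⟩
    change (∑ h : G, P.ρ h⁻¹ ∘ₗ LinearMap.proj (R := k) (φ := fun _ : G => P.V) h) (Pi.single 1 x) = x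
    rw [LinearMap.sum_apply, Finset.sum_eq_single 1]
    · simp
    · intro b _ hb; simp [Pi.single_eq_of_ne hb]
    · simp
  refine ⟨Projective.factorThru (𝟙 P) r, r, fun x => ?_⟩
  rw [← comp_ap, Projective.factorThru_comp, id_ap]

theorem proj_inj [Finite G] (P : Rep.{0} k G) (hP : Projective P) : Inj P := by
  obtain ⟨s, r, h⟩ := proj_retract P hP
  exact (IM_inj P).retract s r h

end
end EQ

namespace EQ
open CategoryTheory CategoryTheory.Limits MonoidalCategory
set_option linter.unusedSectionVars false
set_option linter.style.haveILetI false

section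
variable {k G : Type} [Field k] [CharP k 2] [Group G]

/-- central involution -/
structure CI (z : G) : Prop where
  sq : z * z = 1
  comm : ∀ g, z * g = g * z
  ne : z ≠ 1

theorem CI.chi {z : G} (hz : CI z) (k : Type) [Field k] : ∃ χ : G → k, ∀ h, χ (h * z) + χ h = 1 := by
  classical
  let H := Subgroup.zpowers z
  have hout : ∀ h : G, ((h : G ⧸ H)).out = h ∨ ((h : G ⧸ H)).out = h * z := by
    intro h
    obtain ⟨⟨x, hx⟩, hh⟩ := QuotientGroup.mk_out_eq_mul H h
    obtain ⟨n, rfl⟩ := Subgroup.mem_zpowers_iff.1 hx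
    rw [hh]
    rcases Int.even_or_odd n with ⟨m, rfl⟩ | ⟨m, rfl⟩
    · left
      change h * z ^ (m + m) = h
      rw [zpow_add, ← (Commute.refl z).mul_zpow, hz.sq, one_zpow, mul_one]
    · right
      change h * z ^ (2 * m + 1) = h * z
      rw [zpow_add, two_mul, zpow_add, ← (Commute.refl z).mul_zpow, hz.sq, one_zpow, one_mul, zpow_one]
  refine ⟨fun h => if ((h : G ⧸ H)).out = h then 1 else 0, fun h => ?_⟩
  have hm : ((h * z : G) : G ⧸ H) = (h : G ⧸ H) := by
    rw [QuotientGroup.eq]; simp [H]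
  have hne : h * z ≠ h := by intro h'; exact hz.ne (by simpa using h')
  simp only [hm]
  rcases hout h with h1 | h1
  · rw [h1]; simp [hne.symm]
  · rw [h1]; simp [hz.ne]

variable (z : G)
/-- the square zero operator -/
def U (M : Rep.{0} k G) : Module.End k M.V := M.ρ z - 1

variable {z} (hz : CI z)

theorem U_apply (M : Rep.{0} k G) (m : M.V) : U z M m = M.ρ z m - m := rfl

include hz in
theorem U_U (M : Rep.{0} k G) (m : M.V) : U z M (U z M m) = 0 := by
  have h1 : M.ρ z (M.ρ z m) = m := by
    rw [← Module.End.mul_apply, ← map_mul, hz.sq, map_one]; rfl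
  have h2 : (2 : k) • m = 0 := by rw [CharTwo.two_eq_zero, zero_smul]
  have h3 : (2 : k) • (M.ρ z m) = 0 := by rw [CharTwo.two_eq_zero, zero_smul]
  rw [U_apply, U_apply, map_sub, h1]
  rw [two_smul] at h2 h3
  have : m - M.ρ z m - (M.ρ z m - m) = (m + m) - (M.ρ z m + M.ρ z m) := by abel
  rw [this, h2, h3, sub_zero]

theorem U_hom {M N : Rep.{0} k G} (f : M ⟶ N) (m : M.V) : f.hom (U z M m) = U z N (f.hom m) := by
  rw [U_apply, U_apply, map_sub, Rep.hom_comm_apply]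

include hz in
theorem U_rho (M : Rep.{0} k G) (g : G) (m : M.V) : M.ρ g (U z M m) = U z M (M.ρ g m) := by
  rw [U_apply, U_apply, map_sub, ← Module.End.mul_apply, ← Module.End.mul_apply, ← map_mul, ← map_mul,
    hz.comm]

variable (z)
/-- exactness -/
def Ex (M : Rep.{0} k G) : Prop := ∀ m, U z M m = 0 → ∃ y, m = U z M y
/-- homology generator -/
structure Gn (M : Rep.{0} k G) (m : M.V) : Prop where
  zero : U z M m = 0
  ne : ∀ y, m ≠ U z M y
  gen : ∀ m', U z M m' = 0 → ∃ (c : k) (y : M.V), m' = c • m + U z M y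
/-- one dimensional homology -/
def One (M : Rep.{0} k G) : Prop := ∃ m, Gn z M m
/-- nonzero on homology -/
def Nz {M N : Rep.{0} k G} (f : M ⟶ N) : Prop := ∃ m, U z M m = 0 ∧ ∀ y, f.hom m ≠ U z N y
/-- Similar -/
def Sim (M N : Rep.{0} k G) : Prop := ∃ f : M ⟶ N, Nz z f
/-- Chouinard property -/
def ChP (k : Type) [Field k] : Prop := ∀ P : Rep.{0} k G, FiniteDimensional k P.V → Ex z P → Projective P
variable {z}

theorem Gn.of_mem {M : Rep.{0} k G} {m m' : M.V} (h : Gn z M m) (h0 : U z M m' = 0)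
    (h1 : ∀ y, m' ≠ U z M y) : Gn z M m' := by
  refine ⟨h0, h1, fun x hx => ?_⟩
  obtain ⟨c, y, hc⟩ := h.gen m' h0
  have hc0 : c ≠ 0 := by
    rintro rfl
    exact h1 y (by rw [hc, zero_smul, zero_add])
  obtain ⟨d, y', hd⟩ := h.gen x hx
  refine ⟨d * c⁻¹, y' - (d * c⁻¹) • y, ?_⟩
  rw [hd, hc, map_sub, map_smul, smul_add, smul_smul, mul_assoc, inv_mul_cancel₀ hc0, mul_one]
  abel

theorem One.gn {M : Rep.{0} k G} {m' : M.V} (h : One z M) (h0 : U z M m' = 0)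
    (h1 : ∀ y, m' ≠ U z M y) : Gn z M m' := by
  obtain ⟨m, hm⟩ := h; exact hm.of_mem h0 h1

theorem Nz.gn {M N : Rep.{0} k G} {f : M ⟶ N} (h : Nz z f) (hN : One z N) {m : M.V} (hm : Gn z M m) :
    Gn z N (f.hom m) := by
  obtain ⟨m', h0, h1⟩ := h
  refine hN.gn (by rw [← U_hom, hm.zero, map_zero]) fun y hy => ?_
  obtain ⟨c, x, hc⟩ := hm.gen m' h0
  exact h1 (c • y + f.hom x) (by rw [hc, map_add, map_smul, hy, U_hom, map_add, map_smul])

theorem Sim.refl {M : Rep.{0} k G} (h : One z M) : Sim z M M := by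
  obtain ⟨m, hm⟩ := h
  exact ⟨𝟙 M, m, hm.zero, hm.ne⟩

theorem Sim.trans {M N K : Rep.{0} k G} (hN : One z N) (hM : One z M)
    (h1 : Sim z M N) (h2 : Sim z N K) (hK : One z K) : Sim z M K := by
  obtain ⟨f, hf⟩ := h1
  obtain ⟨g, hg⟩ := h2
  obtain ⟨m, hm⟩ := hM
  have := hg.gn hK (hf.gn hN hm)
  exact ⟨f ≫ g, m, hm.zero, this.ne⟩

theorem Ex.retract {M N : Rep.{0} k G} (hN : Ex z N) (s : M ⟶ N) (r : N ⟶ M)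
    (h : ∀ x, r.hom (s.hom x) = x) : Ex z M := by
  intro m hm
  obtain ⟨y, hy⟩ := hN (s.hom m) (by rw [← U_hom, hm, map_zero])
  exact ⟨r.hom y, by rw [← h m, hy, U_hom]⟩

include hz in
theorem IM_ex (M : Rep.{0} k G) : Ex z (IM M) := by
  obtain ⟨χ, hχ⟩ := hz.chi k
  intro φ hφ
  have hφ' : ∀ h, φ (h * z) = φ h := by
    intro h
    have := congrFun hφ h
    exact sub_eq_zero.1 this
  refine ⟨fun h => χ h • φ h, ?_⟩
  funext h
  change φ h = χ (h * z) • φ (h * z) - χ h • φ h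
  rw [hφ', ← sub_smul, CharTwo.sub_eq_add, hχ, one_smul]

include hz in
theorem proj_ex [Finite G] (P : Rep.{0} k G) (hP : Projective P) : Ex z P := by
  obtain ⟨s, r, h⟩ := proj_retract P hP
  exact (IM_ex hz P).retract s r h

section SES
variable {A B C : Rep.{0} k G} {f : A ⟶ B} {g : B ⟶ C} (h : SE f g)
include h

theorem SE.inj' {a b : A.V} (hab : f.hom a = f.hom b) : a = b := by
  rw [← sub_eq_zero]; apply h.inj; rw [map_sub, hab, sub_self]

theorem SE.lift {W : Rep.{0} k G} (F : W ⟶ B) (hF : ∀ x, g.hom (F.hom x) = 0) :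
    ∃ t : W ⟶ A, ∀ x, f.hom (t.hom x) = F.hom x := by
  choose t ht using fun x => h.ex _ (hF x)
  refine ⟨mkHom { toFun := t, map_add' := ?_, map_smul' := ?_ } ?_, ht⟩
  · intro x y; apply h.inj'; rw [ht, map_add, map_add, ht, ht]
  · intro c y; apply h.inj'; rw [ht, map_smul, RingHom.id_apply, map_smul, ht]
  · intro c y; apply h.inj'
    change f.hom (t _) = f.hom (A.ρ c (t y))
    rw [ht, Rep.hom_comm_apply, Rep.hom_comm_apply, ht]

theorem SE.desc {W : Rep.{0} k G} (F : B ⟶ W) (hF : ∀ x, F.hom (f.hom x) = 0) :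
    ∃ t : C ⟶ W, ∀ b, t.hom (g.hom b) = F.hom b := by
  choose t ht using h.surj
  have key : ∀ b b', g.hom b = g.hom b' → F.hom b = F.hom b' := by
    intro b b' hb
    obtain ⟨a, ha⟩ := h.ex (b - b') (by rw [map_sub, hb, sub_self])
    rw [← sub_eq_zero, ← map_sub, ← ha, hF]
  refine ⟨mkHom { toFun := fun c => F.hom (t c), map_add' := ?_, map_smul' := ?_ } ?_, ?_⟩
  · intro x y; rw [← map_add]; apply key; rw [ht, map_add, ht, ht]
  · intro c y; rw [RingHom.id_apply, ← map_smul]; apply key; rw [ht, map_smul, ht]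
  · intro c y
    change F.hom (t _) = W.ρ c (F.hom (t y))
    rw [← Rep.hom_comm_apply]; apply key; rw [ht, Rep.hom_comm_apply, ht]
  · intro b; exact key _ _ (ht _)

include hz in
theorem SE.exC (hA : Ex z A) (hB : Ex z B) : Ex z C := by
  intro c hc
  obtain ⟨b, rfl⟩ := h.surj c
  rw [← U_hom] at hc
  obtain ⟨a, ha⟩ := h.ex _ hc
  obtain ⟨a', rfl⟩ := hA a (by apply h.inj; rw [U_hom, ha, U_U hz])
  obtain ⟨y, hy⟩ := hB (b - f.hom a') (by rw [map_sub, ← U_hom f, ha, sub_self])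
  refine ⟨g.hom y, ?_⟩
  rw [← U_hom, ← hy, map_sub, h.zero, sub_zero]

include hz in
theorem SE.gnC (hB : Ex z B) {a0 : A.V} {b0 : B.V} (ha : Gn z A a0) (hab : f.hom a0 = U z B b0) :
    Gn z C (g.hom b0) := by
  refine ⟨by rw [← U_hom, ← hab, h.zero], fun y hy => ?_, fun c' hc' => ?_⟩
  · obtain ⟨b', rfl⟩ := h.surj y
    obtain ⟨a', ha'⟩ := h.ex (b0 - U z B b') (by rw [map_sub, hy, U_hom, sub_self])
    refine ha.ne a' (h.inj' ?_)
    rw [U_hom, ha', map_sub, U_U hz, hab, sub_zero]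
  · obtain ⟨b', rfl⟩ := h.surj c'
    rw [← U_hom] at hc'
    obtain ⟨a', ha'⟩ := h.ex _ hc'
    obtain ⟨c, x, hcx⟩ := ha.gen a' (by apply h.inj; rw [U_hom, ha', U_U hz])
    obtain ⟨y, hy⟩ := hB (b' - c • b0 - f.hom x) (by
      rw [map_sub, map_sub, map_smul, ← hab, ← U_hom f, ← ha', hcx, map_add, map_smul]; abel)
    refine ⟨c, g.hom y, ?_⟩
    rw [← U_hom, ← hy, map_sub, map_sub, map_smul, h.zero]; abel

include hz in
theorem SE.gnA (hB : Ex z B) {a0 : A.V} {b0 : B.V} (hc : Gn z C (g.hom b0)) (hab : f.hom a0 = U z B b0) :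
    Gn z A a0 := by
  refine ⟨h.inj _ (by rw [U_hom, hab, U_U hz]), fun y hy => ?_, fun a' ha' => ?_⟩
  · obtain ⟨w, hw⟩ := hB (b0 - f.hom y) (by rw [map_sub, ← hab, hy, U_hom, sub_self])
    refine hc.ne (g.hom w) ?_
    rw [← U_hom, ← hw, map_sub, h.zero, sub_zero]
  · obtain ⟨b', hb'⟩ := hB (f.hom a') (by rw [← U_hom, ha', map_zero])
    obtain ⟨c, y, hcy⟩ := hc.gen (g.hom b') (by rw [← U_hom, ← hb', h.zero])
    obtain ⟨w, rfl⟩ := h.surj y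
    obtain ⟨x, hx⟩ := h.ex (b' - c • b0 - U z B w) (by
      rw [map_sub, map_sub, map_smul, hcy, U_hom]; abel)
    refine ⟨c, x, h.inj' ?_⟩
    rw [hb', map_add, U_hom, hx, map_smul, map_sub, map_sub, map_smul, U_U hz, hab]; abel

include hz in
theorem SE.oneC (hB : Ex z B) (hA : One z A) : One z C := by
  obtain ⟨a, ha⟩ := hA
  obtain ⟨b, hb⟩ := hB (f.hom a) (by rw [← U_hom, ha.zero, map_zero])
  exact ⟨_, h.gnC hz hB ha hb⟩

theorem SE.conn {b : B.V} (hb : U z C (g.hom b) = 0) : ∃ a, f.hom a = U z B b := by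
  rw [← U_hom] at hb; exact h.ex _ hb

include hz in
theorem SE.oneA (hB : Ex z B) (hC : One z C) : One z A := by
  obtain ⟨c, hc⟩ := hC
  obtain ⟨b, rfl⟩ := h.surj c
  obtain ⟨a, ha⟩ := h.conn hc.zero
  exact ⟨_, h.gnA hz hB hc ha⟩

include hz in
theorem SE.ex_of_nz (hA : One z A) (hB : One z B) (hf : Nz z f) : Ex z C := by
  obtain ⟨m, hm⟩ := hA
  have hfm := hf.gn hB hm
  intro c hc
  obtain ⟨b, rfl⟩ := h.surj c
  obtain ⟨a, ha⟩ := h.conn hc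
  obtain ⟨d, a', rfl⟩ := hm.gen a (h.inj _ (by rw [U_hom, ha, U_U hz]))
  have hd : d = 0 := by
    by_contra hd
    refine hfm.ne (d⁻¹ • (b - f.hom a')) ?_
    rw [map_smul, map_sub, ← ha, map_add, map_smul, ← U_hom f, add_sub_cancel_right, smul_smul,
      inv_mul_cancel₀ hd, one_smul]
  rw [hd, zero_smul, zero_add] at ha
  obtain ⟨d', y, hy⟩ := hfm.gen (b - f.hom a') (by rw [map_sub, ← ha, ← U_hom f, sub_self])
  refine ⟨g.hom y, ?_⟩
  have : b = f.hom (a' + d' • m) + U z B y := by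
    rw [map_add, map_smul, add_assoc, ← hy]; abel
  rw [this, map_add, h.zero, zero_add, U_hom]

end SES

/-- the shift -/
theorem Sim.shift {X' P X N Q N' : Rep.{0} k G} {i : X' ⟶ P} {p : P ⟶ X} {j : N ⟶ Q} {r : Q ⟶ N'}
    (hz : CI z) (h1 : SE i p) (h2 : SE j r) (hP : Projective P) (hQ : Ex z Q) (h : Sim z X N') :
    Sim z X' N := by
  obtain ⟨f, x, hx, hfx⟩ := h
  have : Epi r := (Rep.epi_iff_surjective r).2 h2.surj
  let F := Projective.factorThru (p ≫ f) r
  have hF : ∀ b, r.hom (F.hom b) = f.hom (p.hom b) := fun b => by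
    rw [← comp_ap, Projective.factorThru_comp, comp_ap]
  obtain ⟨t, ht⟩ := h2.lift (i ≫ F) (fun y => by rw [comp_ap, hF, h1.zero, map_zero])
  obtain ⟨b, rfl⟩ := h1.surj x
  obtain ⟨a, ha⟩ := h1.conn hx
  refine ⟨t, a, h1.inj _ (by rw [U_hom, ha, U_U hz]), fun y hy => ?_⟩
  obtain ⟨w, hw⟩ := hQ (F.hom b - j.hom y) (by
    rw [map_sub, ← U_hom j, ← hy, ht, comp_ap, ha, U_hom, sub_self])
  refine hfx (r.hom w) ?_
  rw [← U_hom, ← hw, map_sub, h2.zero, sub_zero, hF]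

/-- the reverse shift -/
theorem Sim.unshift {X' P X N Q N' : Rep.{0} k G} {i : X' ⟶ P} {p : P ⟶ X} {j : N ⟶ Q} {r : Q ⟶ N'}
    (hz : CI z) (h1 : SE i p) (h2 : SE j r) (hP : Ex z P) (hQ : Inj Q) (h : Sim z X' N) :
    Sim z X N' := by
  obtain ⟨f, a, ha, hfa⟩ := h
  obtain ⟨F, hF⟩ := hQ _ _ i (f ≫ j) h1.inj
  obtain ⟨t, ht⟩ := h1.desc (F ≫ r) (fun y => by rw [comp_ap, hF, comp_ap, h2.zero])
  obtain ⟨b, hb⟩ := hP (i.hom a) (by rw [← U_hom, ha, map_zero])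
  refine ⟨t, p.hom b, by rw [← U_hom, ← hb, h1.zero], fun y hy => ?_⟩
  obtain ⟨w, rfl⟩ := h2.surj y
  rw [ht, comp_ap, ← U_hom] at hy
  obtain ⟨v, hv⟩ := h2.ex (F.hom b - U z Q w) (by rw [map_sub, hy, sub_self])
  refine hfa v (h2.inj' ?_)
  rw [U_hom, hv, map_sub, U_U hz, sub_zero, ← U_hom, ← hb, hF, comp_ap]

section
variable {M N : Rep.{0} k G}

theorem one_bp (hM : One z M) (hN : Ex z N) : One z (M ⊞ N) := by
  obtain ⟨m, hm⟩ := hM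
  refine ⟨(biprod.inl : M ⟶ M ⊞ N).hom m, by rw [← U_hom, hm.zero, map_zero], fun y hy => ?_, fun x hx => ?_⟩
  · refine hm.ne ((biprod.fst : M ⊞ N ⟶ M).hom y) ?_
    rw [← U_hom, ← hy, fst_inl]
  · obtain ⟨c, y, hc⟩ := hm.gen ((biprod.fst : M ⊞ N ⟶ M).hom x) (by rw [← U_hom, hx, map_zero])
    obtain ⟨w, hw⟩ := hN ((biprod.snd : M ⊞ N ⟶ N).hom x) (by rw [← U_hom, hx, map_zero])
    refine ⟨c, (biprod.inl : M ⟶ M ⊞ N).hom y + (biprod.inr : N ⟶ M ⊞ N).hom w, ?_⟩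
    conv_lhs => rw [bp_eta M N x]
    rw [hc, hw, map_add, map_smul, map_add, U_hom, U_hom]; abel

theorem Sim.stab (hz : CI z) [Finite G] (hCh : ChP z k) (hM : One z M) (hN : One z N)
    [FiniteDimensional k M.V] [FiniteDimensional k N.V] (h : Sim z M N) : IsStablyIso M N := by
  obtain ⟨f, hf⟩ := h
  let F : M ⟶ N ⊞ IM M := biprod.lift f (toIM LinearMap.id)
  have hF1 : ∀ m, (biprod.fst : N ⊞ IM M ⟶ N).hom (F.hom m) = f.hom m := by
    intro m; rw [← comp_ap, biprod.lift_fst]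
  have hF2 : ∀ m, (biprod.snd : N ⊞ IM M ⟶ IM M).hom (F.hom m) = (toIM LinearMap.id : M ⟶ IM M).hom m := by
    intro m; rw [← comp_ap, biprod.lift_snd]
  have hinj : ∀ m, F.hom m = 0 → m = 0 := by
    intro m hm
    apply toIM_inj
    rw [← hF2, hm, map_zero]
  obtain ⟨C, g, hg⟩ := exists_coker F hinj
  have hFz : Nz z F := by
    obtain ⟨m, h0, h1⟩ := hf
    refine ⟨m, h0, fun y hy => h1 ((biprod.fst : N ⊞ IM M ⟶ N).hom y) ?_⟩
    rw [← U_hom, ← hy, hF1]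
  have hC := hg.ex_of_nz hz hM (one_bp hN (IM_ex hz M)) hFz
  have := bp_fd N (IM M)
  have hP : Projective C := hCh C hg.fd hC
  obtain ⟨i⟩ := hg.split hP
  exact ⟨C, IM M, hP, hCh _ inferInstance (IM_ex hz M), ⟨i⟩⟩

theorem sim_of_stab (hz : CI z) [Finite G] (hM : One z M) (h : IsStablyIso M N) : Sim z M N := by
  obtain ⟨P, Q, hP, hQ, ⟨φ⟩⟩ := h
  obtain ⟨m, hm⟩ := hM
  refine ⟨biprod.inl ≫ φ.hom ≫ biprod.fst, m, hm.zero, fun y hy => ?_⟩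
  rw [comp_ap, comp_ap] at hy
  set w := φ.hom.hom ((biprod.inl : M ⟶ M ⊞ P).hom m) with hw
  have hUw : U z _ w = 0 := by rw [hw, ← U_hom, ← U_hom, hm.zero, map_zero, map_zero]
  obtain ⟨x, hx⟩ := proj_ex hz Q hQ ((biprod.snd : N ⊞ Q ⟶ Q).hom w) (by rw [← U_hom, hUw, map_zero])
  have h1 : w = U z (N ⊞ Q) ((biprod.inl : N ⟶ N ⊞ Q).hom y + (biprod.inr : Q ⟶ N ⊞ Q).hom x) := by
    rw [map_add, ← U_hom, ← U_hom, ← hy, ← hx, ← bp_eta]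
  have h2 : m = (biprod.fst : M ⊞ P ⟶ M).hom (φ.inv.hom w) := by
    rw [hw, Rep.inv_hom_apply, fst_inl]
  refine hm.ne ((biprod.fst : M ⊞ P ⟶ M).hom (φ.inv.hom ((biprod.inl : N ⟶ N ⊞ Q).hom y + (biprod.inr : Q ⟶ N ⊞ Q).hom x))) ?_
  rw [← U_hom, ← U_hom, ← h1, h2]

theorem stab_symm (h : IsStablyIso M N) : IsStablyIso N M := by
  obtain ⟨P, Q, hP, hQ, ⟨φ⟩⟩ := h
  exact ⟨Q, P, hQ, hP, ⟨φ.symm⟩⟩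

theorem Sim.symm (hz : CI z) [Finite G] (hCh : ChP z k) (hM : One z M) (hN : One z N)
    [FiniteDimensional k M.V] [FiniteDimensional k N.V] (h : Sim z M N) : Sim z N M :=
  sim_of_stab hz hN (stab_symm (h.stab hz hCh hM hN))

theorem Sim.of_iso (hM : One z M) (i : M ≅ N) : Sim z M N := by
  obtain ⟨m, hm⟩ := hM
  refine ⟨i.hom, m, hm.zero, fun y hy => hm.ne (i.inv.hom y) ?_⟩
  rw [← U_hom, ← hy, Rep.inv_hom_apply]

theorem One.of_iso (hM : One z M) (i : M ≅ N) : One z N := by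
  obtain ⟨m, hm⟩ := hM
  refine ⟨i.hom.hom m, by rw [← U_hom, hm.zero, map_zero], fun y hy => hm.ne (i.inv.hom y) ?_, fun x hx => ?_⟩
  · rw [← U_hom, ← hy, Rep.inv_hom_apply]
  · obtain ⟨c, y, hc⟩ := hm.gen (i.inv.hom x) (by rw [← U_hom, hx, map_zero])
    refine ⟨c, i.hom.hom y, ?_⟩
    rw [← map_smul, ← U_hom, ← map_add, ← hc, Rep.hom_inv_apply]

end
end
end EQ

namespace EQ
open CategoryTheory CategoryTheory.Limits MonoidalCategory QuaternionGroup
set_option linter.unusedSectionVars false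
set_option linter.style.haveILetI false

section
variable {k : Type} [Field k] [CharP k 2] {q : ℕ} [PQ q] {G : Type} [Group G]
  (e : G ≃* QuaternionGroup q)

theorem hci : CI (gz e) := by
  refine ⟨gz_sq e, gz_comm e, fun h => ?_⟩
  have h2 : a (q : ZMod (2 * q)) = 1 := by
    have := congrArg e h
    rw [map_one] at this
    rw [← this]; exact (e.apply_symm_apply _).symm
  rw [one_def, a.injEq] at h2
  have h3 := (ZMod.natCast_eq_zero_iff q (2 * q)).1 h2
  have := PQ.four q
  have := Nat.le_of_dvd (by omega) h3
  omega

/-- index set -/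
def idx : ZMod (2 * q) ⊕ ZMod (2 * q) ≃ G where
  toFun x := match x with
    | .inl i => cyc e (Multiplicative.ofAdd i)
    | .inr i => gta e * cyc e (Multiplicative.ofAdd i)
  invFun g := match e g with
    | a i => .inl i
    | xa i => .inr i
  left_inv x := by
    rcases x with i | i
    · change (match e (e.symm (a i)) with | a i => Sum.inl i | xa i => Sum.inr i) = _
      rw [MulEquiv.apply_symm_apply]
    · change (match e (e.symm (xa 0) * e.symm (a i)) with | a i => Sum.inl i | xa i => Sum.inr i) = _
      rw [map_mul, MulEquiv.apply_symm_apply, MulEquiv.apply_symm_apply, xa_mul_a, zero_add]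
  right_inv g := by
    obtain ⟨x, rfl⟩ := e.symm.surjective g
    dsimp only
    rw [MulEquiv.apply_symm_apply]
    cases x with
    | a i => rfl
    | xa i =>
      change e.symm (xa 0) * e.symm (a i) = _
      rw [← map_mul, xa_mul_a, zero_add]

include e in
theorem finG : Finite G := Finite.of_equiv _ (idx e)

theorem phi_u' (M : Rep.{0} k G) (m : M.V) : phi e M ((D0 k q).X ^ q) m = U (gz e) M m := by
  rw [phi_u]; rfl

theorem phi_top (M : Rep.{0} k G) (m : M.V) : phi e M ((D0 k q).X ^ (2 * q - 1)) m =
    ∑ i : ZMod (2 * q), M.ρ (cyc e (Multiplicative.ofAdd i)) m := by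
  rw [top_eq_sum, map_sum, LinearMap.sum_apply]
  refine Finset.sum_congr rfl fun i _ => ?_
  rw [phi_single, one_smul]

theorem sum_all [Fintype G] (M : Rep.{0} k G) (m : M.V) : ∑ g, M.ρ g m =
    phi e M ((D0 k q).X ^ (2 * q - 1)) m + M.ρ (gta e) (phi e M ((D0 k q).X ^ (2 * q - 1)) m) := by
  rw [phi_top, map_sum, ← Fintype.sum_equiv (idx e) _ _ (fun x => rfl), Fintype.sum_sum_type]
  congr 1
  refine Finset.sum_congr rfl fun i _ => ?_
  change M.ρ (gta e * cyc e (Multiplicative.ofAdd i)) m = _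
  rw [map_mul]; rfl

theorem phi_X (M : Rep.{0} k G) (m : M.V) : phi e M (D0 k q).X m = M.ρ (gth e) m + m := by
  rw [QD.X, map_add, phi_th, map_one]; rfl

theorem add_self0 {V : Type} [AddCommGroup V] [Module k V] (v : V) : v + v = 0 := by
  rw [← two_smul k, CharTwo.two_eq_zero, zero_smul]

theorem phi_X_zero (M : Rep.{0} k G) (m : M.V) : phi e M (D0 k q).X m = 0 ↔ M.ρ (gth e) m = m := by
  rw [phi_X]
  constructor
  · intro h
    have h2 := add_self0 (k := k) m
    exact add_right_cancel (h.trans h2.symm)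
  · intro h; rw [h, add_self0 (k := k)]

theorem fix_all (M : Rep.{0} k G) (y : M.V) (h1 : M.ρ (gth e) y = y) (h2 : M.ρ (gta e) y = y) (g : G) :
    M.ρ g y = y := by
  have := equi e (Representation.trivial k G k) M.ρ (LinearMap.toSpanSingleton k M.V y)
    (fun c => by simp [h1]) (fun c => by simp [h2]) g 1
  simpa using this.symm

theorem tau_tau (M : Rep.{0} k G) (m : M.V) : M.ρ (gta e) (M.ρ (gta e) m) = U (gz e) M m + m := by
  rw [U_apply, sub_add_cancel, ← Module.End.mul_apply, ← map_mul, gta_sq]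

theorem phi_X_pow (M : Rep.{0} k G) (m : M.V) (h : phi e M (D0 k q).X m = 0) {j : ℕ} (hj : 1 ≤ j) :
    phi e M ((D0 k q).X ^ j) m = 0 := by
  obtain ⟨i, rfl⟩ := Nat.exists_eq_add_of_le' hj
  rw [pow_succ, map_mul, Module.End.mul_apply, h, map_zero]

theorem exists_fix {M N : Rep.{0} k G} (f : M ⟶ N) (x : M.V) (hx : x ≠ 0) (hf : f.hom x = 0) :
    ∃ y, y ≠ 0 ∧ f.hom y = 0 ∧ M.ρ (gth e) y = y ∧ M.ρ (gta e) y = y := by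
  classical
  have hex : ∃ j, phi e M ((D0 k q).X ^ j) x = 0 := ⟨2 * q, by rw [(D0 k q).pow_nil]; simp⟩
  obtain ⟨j, hj⟩ : ∃ j, Nat.find hex = j + 1 := Nat.exists_eq_succ_of_ne_zero (by
    intro h0
    have := Nat.find_spec hex
    rw [h0] at this; simp at this; exact hx this)
  set y := phi e M ((D0 k q).X ^ j) x with hy
  have hy0 : y ≠ 0 := Nat.find_min hex (by omega)
  have hfy : f.hom y = 0 := by rw [hy, phi_hom, hf, map_zero]
  have hXy : phi e M (D0 k q).X y = 0 := by
    have := Nat.find_spec hex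
    rw [hj, pow_succ', map_mul] at this
    exact this
  by_cases ht : M.ρ (gta e) y = y
  · exact ⟨y, hy0, hfy, (phi_X_zero e M y).1 hXy, ht⟩
  · refine ⟨M.ρ (gta e) y + y, ?_, ?_, ?_, ?_⟩
    · intro h
      apply ht
      exact add_right_cancel (h.trans (add_self0 (k := k) y).symm)
    · rw [map_add, Rep.hom_comm_apply, hfy, map_zero, add_zero]
    · rw [← phi_X_zero, map_add, hXy, add_zero]
      have h1 : (D0 k q).X = (D0 k q).bar (D0 k q).X' := by rw [(D0 k q).bar_X']
      rw [h1, ← phi_semi, (D0 k q).X'_eq, map_mul, Module.End.mul_apply, hXy, map_zero, map_zero]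
    · have hq : U (gz e) M y = 0 := by
        rw [← phi_u', phi_X_pow e M y hXy (one_le_q q)]
      rw [map_add, tau_tau, hq, zero_add, add_comm]

include e in
theorem lr_inj [Fintype G] (M : Rep.{0} k G) (m : M.V) (hm : ∑ g, M.ρ g m ≠ 0) (x : (Rep.leftRegular k G).V)
    (hx : (Rep.leftRegularHom M m).hom x = 0) : x = 0 := by
  by_contra hx0
  obtain ⟨y, hy0, hfy, h1, h2⟩ := exists_fix e _ x hx0 hx
  have hfix := fix_all e _ y h1 h2
  have hc : ∀ g, y.coeff g = y.coeff 1 := by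
    intro g
    conv_lhs => rw [← hfix g]
    change ((Representation.ofMulAction k G G g) y).coeff g = _
    rw [Representation.coeff_ofMulAction]; simp
  have hs : y = ∑ g, (MonoidAlgebra.single g (y.coeff g) : MonoidAlgebra k G) := by
    ext h
    simp [MonoidAlgebra.single_apply, Finsupp.single_apply]
  have : (Rep.leftRegularHom M m).hom y = y.coeff 1 • ∑ g, M.ρ g m := by
    conv_lhs => rw [hs]
    rw [map_sum, Finset.smul_sum]
    refine Finset.sum_congr rfl fun g _ => ?_
    rw [Rep.leftRegularHom_hom_single, hc]
  rw [this] at hfy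
  rcases smul_eq_zero.1 hfy with h | h
  · apply hy0
    rw [hs]
    refine Finset.sum_eq_zero fun g _ => ?_
    rw [hc, h]; simp
  · exact hm h

theorem norm_zero [Fintype G] (M : Rep.{0} k G) (h : ∀ m, ∑ g, M.ρ g m = 0) (m : M.V) :
    M.ρ (gta e) (phi e M ((D0 k q).X ^ (2 * q - 1)) m) = phi e M ((D0 k q).X ^ (2 * q - 1)) m := by
  have := h m
  rw [sum_all e] at this
  have h2 := add_self0 (k := k) (phi e M ((D0 k q).X ^ (2 * q - 1)) m)
  exact add_left_cancel (this.trans h2.symm)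

theorem ch : ChP (gz e) k := by
  have := finG e
  cases nonempty_fintype G
  suffices H : ∀ n, ∀ P : Rep.{0} k G, FiniteDimensional k P.V → Module.finrank k P.V = n → Ex (gz e) P →
      Projective P from fun P h1 h2 => H _ P h1 rfl h2
  intro n
  induction n using Nat.strong_induction_on with
  | _ n ih =>
  intro P hfd hn hP
  by_cases h : ∀ m, ∑ g, P.ρ g m = 0
  · have hz : ∀ v : P.V, v = 0 := by
      letI := modA e P
      refine ExA.zero (D := D0 k q) (PQ.four q) (phi_SL e P) ?_ (norm_zero e P h)
      intro m hm
      change phi e P _ m = 0 at hm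
      rw [phi_u'] at hm
      obtain ⟨y, hy⟩ := hP m hm
      exact ⟨y, by rw [hy, ← phi_u']; rfl⟩
    have : IsZero P := (Rep.isZero_iff k G P).2 ⟨fun a b => by rw [hz a, hz b]⟩
    exact Projective.of_iso this.isoZero.symm inferInstance
  · push Not at h
    obtain ⟨m, hm⟩ := h
    obtain ⟨C, g, hg⟩ := exists_coker (Rep.leftRegularHom P m) (lr_inj e P m hm)
    have hC : Projective C := by
      have hd := hg.finrank
      have : 0 < Module.finrank k (Rep.leftRegular k G).V := by
        have : Nontrivial (Rep.leftRegular k G).V := inferInstanceAs (Nontrivial (MonoidAlgebra k G))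
        exact Module.finrank_pos
      exact ih _ (by omega) C hg.fd rfl (hg.exC (hci e) (proj_ex (hci e) _ inferInstance) hP)
    obtain ⟨i⟩ := hg.split hC
    exact Projective.of_iso i inferInstance

end
end EQ

namespace EQ
open CategoryTheory CategoryTheory.Limits MonoidalCategory
set_option linter.unusedSectionVars false
set_option linter.style.haveILetI false

section
variable {k G : Type} [Field k] [CharP k 2] [Group G] {z : G} (hz : CI z)

/-- homotopy data -/
structure Ht (z : G) (M : Rep.{0} k G) (h : Module.End k M.V) (m : M.V) (ψ : M.V →ₗ[k] k) : Prop where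
  um : U z M m = 0
  psu : ∀ x, ψ (U z M x) = 0
  psm : ψ m = 1
  ht : ∀ x, h (U z M x) + U z M (h x) + ψ x • m = x

theorem Ht.gn {M : Rep.{0} k G} {h m ψ} (H : Ht z M h m ψ) : Gn z M m := by
  refine ⟨H.um, fun y hy => ?_, fun m' hm' => ⟨ψ m', h m', ?_⟩⟩
  · have := H.psm
    rw [hy, H.psu] at this
    exact zero_ne_one this
  · have := H.ht m'
    rw [hm', map_zero, zero_add, add_comm] at this
    exact this.symm

theorem gen_inv {V : Type} [AddCommGroup V] [Module k V] (u : Module.End k V) :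
    ∃ g : Module.End k V, ∀ x, u (g (u x)) = u x := by
  obtain ⟨s, hs⟩ := u.rangeRestrict.exists_rightInverse_of_surjective (LinearMap.range_rangeRestrict u)
  obtain ⟨p, hp⟩ := (LinearMap.range u).subtype.exists_leftInverse_of_injective
    (LinearMap.ker_eq_bot'.2 fun x hx => by simpa using hx)
  refine ⟨s ∘ₗ p, fun x => ?_⟩
  have h1 : p (u x) = ⟨u x, x, rfl⟩ := LinearMap.congr_fun hp ⟨u x, x, rfl⟩
  have h2 := congrArg Subtype.val (LinearMap.congr_fun hs ⟨u x, x, rfl⟩)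
  change u (s (p (u x))) = u x
  rw [h1]; exact h2

theorem exists_psi {V : Type} [AddCommGroup V] [Module k V] (u : Module.End k V) (m : V)
    (hm : ∀ y, m ≠ u y) : ∃ ψ : V →ₗ[k] k, (∀ x, ψ (u x) = 0) ∧ ψ m = 1 := by
  obtain ⟨f, hf, hR⟩ := Submodule.exists_le_ker_of_notMem (p := LinearMap.range u) (v := m)
    (fun ⟨y, hy⟩ => hm y hy.symm)
  refine ⟨(f m)⁻¹ • f, fun x => ?_, ?_⟩
  · have : f (u x) = 0 := hR ⟨x, rfl⟩
    simp [this]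
  · simp [hf]

include hz in
theorem Gn.ht {M : Rep.{0} k G} {m : M.V} (H : Gn z M m) : ∃ h ψ, Ht z M h m ψ := by
  obtain ⟨ψ, hψ, hψm⟩ := exists_psi (U z M) m H.ne
  obtain ⟨g0, hg0⟩ := gen_inv (U z M)
  set u := U z M with hu
  have huu : ∀ x, u (u x) = 0 := U_U hz M
  let g : Module.End k M.V := g0 - ψ.smulRight (g0 m)
  have hg : ∀ x, g x = g0 x - ψ x • g0 m := fun x => rfl
  have hgu : ∀ x, u (g (u x)) = u x := by intro x; rw [hg, hψ, zero_smul, sub_zero, hg0]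
  have hgm : u (g m) = 0 := by rw [hg, hψm, one_smul, sub_self, map_zero]
  let h : Module.End k M.V := (g - u * g * g) * (u * g)
  have hh : ∀ x, h x = g (u (g x)) - u (g (g (u (g x)))) := fun x => rfl
  let E : Module.End k M.V := 1 - h * u - u * h
  have hE : ∀ x, E x = x - h (u x) - u (h x) := fun x => rfl
  have hEx : ∀ x, ∃ c : k, E x = c • m := by
    intro x
    obtain ⟨c, y, hc⟩ := H.gen (x - g (u x)) (by rw [← hu, map_sub, hgu, sub_self])
    refine ⟨c, ?_⟩
    have h1 : E x = (x - g (u x)) - u (g (x - g (u x))) := by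
      rw [hE, hh, hh, hgu]
      simp only [map_sub, huu, hgu]
      abel
    rw [h1, hc, ← hu]
    simp only [map_add, map_smul, hgm, hgu]
    simp
  have hEu : ∀ x, E (u x) = 0 := by
    intro x
    rw [hE, hh, hh]; simp only [map_sub, huu, hgu, map_zero]; abel
  have hEm : E m = m := by
    rw [hE, hh, hh, H.zero]; simp only [map_sub, hgm, huu, hgu, map_zero]; abel
  refine ⟨h, ψ ∘ₗ E, H.zero, fun x => ?_, ?_, fun x => ?_⟩
  · change ψ (E (u x)) = 0
    rw [hEu, map_zero]
  · change ψ (E m) = 1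
    rw [hEm, hψm]
  · change h (u x) + u (h x) + ψ (E x) • m = x
    obtain ⟨c, hc⟩ := hEx x
    rw [hc, map_smul, hψm, smul_eq_mul, mul_one, ← hc, hE]; abel

include hz in
theorem Ex.ht {M : Rep.{0} k G} (H : Ex z M) : ∃ h : Module.End k M.V, ∀ x, h (U z M x) + U z M (h x) = x := by
  obtain ⟨g, hgu⟩ := gen_inv (U z M)
  set u := U z M with hu
  have huu : ∀ x, u (u x) = 0 := U_U hz M
  let h : Module.End k M.V := (g - u * g * g) * (u * g)
  have hh : ∀ x, h x = g (u (g x)) - u (g (g (u (g x)))) := fun x => rfl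
  refine ⟨h, fun x => ?_⟩
  obtain ⟨y, hc⟩ := H (x - g (u x)) (by rw [← hu, map_sub, hgu, sub_self])
  have h1 : x - (h (u x) + u (h x)) = (x - g (u x)) - u (g (x - g (u x))) := by
    rw [hh, hh, hgu]
    simp only [map_sub, huu, hgu]
    abel
  rw [hc, ← hu, hgu, sub_self, sub_eq_zero] at h1
  exact h1.symm

open scoped TensorProduct in
theorem U_tmul (M N : Rep.{0} k G) (x : M.V) (y : N.V) :
    U z (M ⊗ N) (x ⊗ₜ[k] y) = U z M x ⊗ₜ[k] N.ρ z y + x ⊗ₜ[k] U z N y := by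
  rw [U_apply, U_apply, U_apply]
  change M.ρ z x ⊗ₜ[k] N.ρ z y - _ = _
  rw [TensorProduct.sub_tmul, TensorProduct.tmul_sub]; abel

include hz in
theorem zz (M : Rep.{0} k G) (x : M.V) : M.ρ z (M.ρ z x) = x := by
  rw [← Module.End.mul_apply, ← map_mul, hz.sq, map_one]; rfl

include hz in
open scoped TensorProduct in
theorem ht_half (M N : Rep.{0} k G) (h : Module.End k M.V) (x : M.V) (y : N.V) :
    TensorProduct.map h (N.ρ z) (U z (M ⊗ N) (x ⊗ₜ[k] y)) +
      U z (M ⊗ N) (TensorProduct.map h (N.ρ z) (x ⊗ₜ[k] y)) = (h (U z M x) + U z M (h x)) ⊗ₜ[k] y := by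
  rw [TensorProduct.map_tmul, U_tmul, U_tmul, map_add, TensorProduct.map_tmul, TensorProduct.map_tmul,
    zz hz, U_rho hz, TensorProduct.add_tmul]
  have := add_self0 (k := k) (h x ⊗ₜ[k] U z N (N.ρ z y))
  calc _ = h (U z M x) ⊗ₜ[k] y + U z M (h x) ⊗ₜ[k] y +
        (h x ⊗ₜ[k] U z N (N.ρ z y) + h x ⊗ₜ[k] U z N (N.ρ z y)) := by abel
    _ = _ := by rw [this, add_zero]

include hz in
open scoped TensorProduct in
theorem Ht.tensor {M N : Rep.{0} k G} {h m ψ h' m' ψ'} (H : Ht z M h m ψ) (H' : Ht z N h' m' ψ') :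
    ∃ h'' ψ'', Ht z (M ⊗ N) h'' (m ⊗ₜ[k] m') ψ'' := by
  let E : Module.End k M.V := ψ.smulRight m
  have hE : ∀ x, E x = ψ x • m := fun x => rfl
  let Ψ : M.V ⊗[k] N.V →ₗ[k] k := LinearMap.mul' k k ∘ₗ TensorProduct.map ψ ψ'
  have hΨ : ∀ x y, Ψ (x ⊗ₜ[k] y) = ψ x * ψ' y := fun x y => rfl
  refine ⟨TensorProduct.map h (N.ρ z) + TensorProduct.map E h', Ψ, ?_, ?_, ?_, ?_⟩
  · rw [U_tmul, H.um, H'.um]; simp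
  · intro w
    induction w using TensorProduct.induction_on with
    | zero => simp
    | add a b ha hb => rw [map_add, map_add, ha, hb, add_zero]
    | tmul x y => rw [U_tmul, map_add, hΨ, hΨ, H.psu, H'.psu]; simp
  · rw [hΨ, H.psm, H'.psm, one_mul]
  · intro w
    induction w using TensorProduct.induction_on with
    | zero => simp
    | add a b ha hb =>
      conv_rhs => rw [← ha, ← hb]
      simp only [map_add, add_smul]; abel
    | tmul x y =>
      have h1 := ht_half hz M N h x y
      have h2 : TensorProduct.map E h' (U z (M ⊗ N) (x ⊗ₜ[k] y)) = E x ⊗ₜ[k] h' (U z N y) := by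
        rw [U_tmul, map_add, TensorProduct.map_tmul, TensorProduct.map_tmul, hE, H.psu]; simp
      have h3 : U z (M ⊗ N) (TensorProduct.map E h' (x ⊗ₜ[k] y)) = E x ⊗ₜ[k] U z N (h' y) := by
        rw [TensorProduct.map_tmul, U_tmul, hE, map_smul, H.um]; simp
      rw [LinearMap.add_apply, LinearMap.add_apply, map_add, h2, h3, hΨ]
      have h4 : (ψ x * ψ' y) • (m ⊗ₜ[k] m') = E x ⊗ₜ[k] (ψ' y • m') := by
        rw [hE, TensorProduct.smul_tmul_smul]
      rw [h4]
      conv_rhs => rw [← H.ht x]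
      conv_rhs => rw [TensorProduct.add_tmul, ← h1, ← hE]
      have h5 : E x ⊗ₜ[k] y = E x ⊗ₜ[k] h' (U z N y) + E x ⊗ₜ[k] U z N (h' y) +
          E x ⊗ₜ[k] (ψ' y • m') := by
        rw [← TensorProduct.tmul_add, ← TensorProduct.tmul_add, H'.ht y]
      rw [h5]
      abel

include hz in
open scoped TensorProduct in
theorem Gn.tensor {M N : Rep.{0} k G} {m m'} (H : Gn z M m) (H' : Gn z N m') : Gn z (M ⊗ N) (m ⊗ₜ[k] m') := by
  obtain ⟨h, ψ, h1⟩ := H.ht hz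
  obtain ⟨h', ψ', h1'⟩ := H'.ht hz
  obtain ⟨_, _, h2⟩ := h1.tensor hz h1'
  exact h2.gn

include hz in
theorem One.tensor {M N : Rep.{0} k G} (H : One z M) (H' : One z N) : One z (M ⊗ N) := by
  obtain ⟨m, hm⟩ := H
  obtain ⟨n, hn⟩ := H'
  exact ⟨_, hm.tensor hz hn⟩

include hz in
theorem Ex.tensor {M N : Rep.{0} k G} (H : Ex z M) : Ex z (M ⊗ N) := by
  obtain ⟨h, hh⟩ := H.ht hz
  have key : ∀ w : (M ⊗ N).V, TensorProduct.map h (N.ρ z) (U z (M ⊗ N) w) +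
      U z (M ⊗ N) (TensorProduct.map h (N.ρ z) w) = w := by
    intro w
    induction w using TensorProduct.induction_on with
    | zero => simp
    | add a b ha hb =>
      conv_rhs => rw [← ha, ← hb]
      simp only [map_add]; abel
    | tmul x y => rw [ht_half hz, hh]
  intro w hw
  refine ⟨TensorProduct.map h (N.ρ z) w, ?_⟩
  conv_lhs => rw [← key w, hw, map_zero, zero_add]

include hz in
theorem Sim.tensor {M M' N : Rep.{0} k G} (hM : One z M) (hM' : One z M') (hN : One z N) (h : Sim z M M') :
    Sim z (M ⊗ N) (M' ⊗ N) := by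
  obtain ⟨f, hf⟩ := h
  obtain ⟨m, hm⟩ := hM
  obtain ⟨n, hn⟩ := hN
  have h1 := (hf.gn hM' hm).tensor hz hn
  exact ⟨f ▷ N, _, (hm.tensor hz hn).zero, h1.ne⟩

theorem SE.tensor {A B C N : Rep.{0} k G} {f : A ⟶ B} {g : B ⟶ C} (h : SE f g) :
    SE (f ▷ N) (g ▷ N) := by
  have hinj : Function.Injective f.hom.toLinearMap := (injective_iff_map_eq_zero f.hom.toLinearMap).2 h.inj
  have hex : Function.Exact f.hom.toLinearMap g.hom.toLinearMap := by
    intro b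
    exact ⟨fun hb => h.ex b hb, fun ⟨a, ha⟩ => by rw [← ha]; exact h.zero a⟩
  have hex2 := rTensor_exact N.V hex h.surj
  refine ⟨?_, ?_, ?_, ?_⟩
  · exact (injective_iff_map_eq_zero (f.hom.toLinearMap.rTensor N.V)).1
      (Module.Flat.rTensor_preserves_injective_linearMap _ hinj)
  · exact LinearMap.rTensor_surjective N.V h.surj
  · intro a; exact (hex2 _).2 ⟨a, rfl⟩
  · intro b hb; exact (hex2 _).1 hb

end
end EQ

namespace EQ
open CategoryTheory CategoryTheory.Limits MonoidalCategory
set_option linter.unusedSectionVars false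
set_option linter.style.haveILetI false

section
variable {k G : Type} [Field k] [CharP k 2] [Group G] {z : G} (hz : CI z)

/-- endomorphism module -/
abbrev EM (M : Rep.{0} k G) : Rep.{0} k G := Rep.of (M.ρ.linHom M.ρ)

include hz in
theorem EM_rho (M : Rep.{0} k G) (φ : Module.End k M.V) (x : M.V) :
    (U z (EM M) φ : Module.End k M.V) x = M.ρ z (φ (M.ρ z x)) - φ x := by
  have : z⁻¹ = z := by rw [inv_eq_iff_mul_eq_one, hz.sq]
  change M.ρ z (φ (M.ρ z⁻¹ x)) - φ x = _
  rw [this]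

include hz in
theorem EM_U (M : Rep.{0} k G) (a : Module.End k M.V) (x : M.V) :
    (U z (EM M) (a * M.ρ z) : Module.End k M.V) x = U z M (a x) + a (U z M x) := by
  rw [EM_rho hz]
  change M.ρ z (a (M.ρ z (M.ρ z x))) - a (M.ρ z x) = _
  rw [zz hz, U_apply, U_apply, map_sub]
  have := add_self0 (k := k) (a (M.ρ z x))
  have h2 := add_self0 (k := k) (a x)
  calc _ = M.ρ z (a x) - a x + (a (M.ρ z x) - a x) - (a (M.ρ z x) + a (M.ρ z x)) + (a x + a x) := by abel
    _ = _ := by rw [this, h2]; abel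

include hz in
theorem EM_U' (M : Rep.{0} k G) (y : Module.End k M.V) :
    ∃ a : Module.End k M.V, ∀ x, (U z (EM M) y : Module.End k M.V) x = U z M (a x) + a (U z M x) := by
  refine ⟨y * M.ρ z, fun x => ?_⟩
  rw [← EM_U hz, mul_assoc]
  congr 2
  rw [← map_mul, hz.sq, map_one, mul_one]

include hz in
theorem EM_comm (M : Rep.{0} k G) (φ : Module.End k M.V) (h : U z (EM M) φ = 0) (x : M.V) :
    φ (U z M x) = U z M (φ x) := by
  have := EM_rho hz M φ (M.ρ z x)
  rw [h] at this
  rw [zz hz] at this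
  rw [U_apply, U_apply, map_sub]
  rw [eq_comm, LinearMap.zero_apply, sub_eq_zero] at this
  rw [this]

include hz in
theorem EM_comm' (M : Rep.{0} k G) (φ : Module.End k M.V) (h : ∀ x, φ (U z M x) = U z M (φ x)) :
    U z (EM M) φ = 0 := by
  refine LinearMap.ext fun x => ?_
  rw [EM_rho hz]
  have := h x
  rw [U_apply, U_apply, map_sub, sub_left_inj] at this
  rw [this, zz hz, sub_self]; rfl

include hz in
theorem EM_gn {M : Rep.{0} k G} (H : One z M) : Gn z (EM M) (1 : Module.End k M.V) := by
  obtain ⟨m, hm⟩ := H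
  obtain ⟨h, ψ, H⟩ := hm.ht hz
  refine ⟨EM_comm' hz M _ fun x => rfl, fun y hy => ?_, fun φ hφ => ?_⟩
  · obtain ⟨a, ha⟩ := EM_U' hz M y
    have := ha m
    rw [← hy, hm.zero, map_zero, add_zero] at this
    exact hm.ne _ this
  · let φ' : Module.End k M.V := φ
    have hc := EM_comm hz M φ hφ
    change ∀ x, φ' (U z M x) = U z M (φ' x) at hc
    let E : Module.End k M.V := ψ.smulRight m
    have hE : ∀ x, E x = ψ x • m := fun x => rfl
    set c := ψ (φ' m) with hcdef
    let a : Module.End k M.V := h * φ' + E * φ' * h + c • h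
    have ha : ∀ x, a x = h (φ' x) + ψ (φ' (h x)) • m + c • h x := fun x => rfl
    refine ⟨c, a * M.ρ z, LinearMap.ext fun x => ?_⟩
    change φ' x = c • x + (U z (EM M) (a * M.ρ z) : Module.End k M.V) x
    rw [EM_U hz, ha, ha]
    have e1 := H.ht (φ' x)
    have e2 := congrArg (fun y => ψ (φ' y)) (H.ht x)
    have e3 := H.ht x
    simp only [map_add, map_smul, hc, H.psu, add_zero, ← hcdef, H.um, smul_zero, smul_eq_mul] at e2 ⊢
    rw [← hc] at e1
    have hz2 := add_self0 (k := k) (c • h (U z M x))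
    have hz3 := add_self0 (k := k) (c • U z M (h x))
    rw [← hc]
    have e4 : c • x = c • h (U z M x) + c • U z M (h x) + (ψ x * c) • m := by
      conv_lhs => rw [← e3]
      rw [smul_add, smul_add, smul_smul, mul_comm c]
    rw [e4]
    have e5 : ψ (φ' x) • m = ψ (φ' (h (U z M x))) • m + (ψ x * c) • m := by
      rw [← add_smul, e2]
    conv_lhs => rw [← e1, e5]
    calc _ = (c • h (U z M x) + c • h (U z M x)) + (c • U z M (h x) + c • U z M (h x)) +
        (h (φ' (U z M x)) + U z M (h (φ' x)) +
        (ψ (φ' (h (U z M x))) • m + (ψ x * c) • m)) := by rw [hz2, hz3, zero_add, zero_add]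
      _ = _ := by abel

include hz in
theorem one_triv : Gn z (Rep.trivial k G k) (1 : k) := by
  have h : ∀ y : k, U z (Rep.trivial k G k) y = 0 := by
    intro y; rw [U_apply, Rep.trivial_ρ_apply, sub_self]
  refine ⟨h _, fun y => by rw [h]; exact one_ne_zero, fun m' _ => ⟨m', 0, ?_⟩⟩
  rw [map_zero, add_zero]
  exact (mul_one (m' : k)).symm

include hz in
theorem endo_of_one [Finite G] (hCh : ChP z k) {M : Rep.{0} k G} [hM : FiniteDimensional k M.V]
    (H : One z M) : IsEndotrivial M := by
  refine ⟨hM, ?_⟩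
  let F : Rep.trivial k G k ⟶ EM M := mkHom (LinearMap.toSpanSingleton k (Module.End k M.V) 1) (by
    intro g x
    refine LinearMap.ext fun y => ?_
    change x • y = M.ρ g (x • M.ρ g⁻¹ y)
    rw [map_smul, ← Module.End.mul_apply, ← map_mul, mul_inv_cancel, map_one]; rfl)
  have hF1 : F.hom (1 : k) = (1 : Module.End k M.V) := one_smul k (1 : Module.End k M.V)
  have hg := EM_gn hz H
  have hnt : (1 : Module.End k M.V) ≠ 0 := fun h0 => hg.ne 0 (by rw [map_zero]; exact h0)
  obtain ⟨C, g, hS⟩ := exists_coker F (by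
    intro x hx
    change (x : k) • (1 : Module.End k M.V) = 0 at hx
    exact (smul_eq_zero.1 hx).resolve_right hnt)
  have hEx := hS.ex_of_nz hz ⟨_, one_triv hz⟩ ⟨_, hg⟩ ⟨(1 : k), (one_triv hz).zero, by rw [hF1]; exact hg.ne⟩
  haveI : FiniteDimensional k (EM M).V := inferInstanceAs (FiniteDimensional k (Module.End k M.V))
  have hfd : FiniteDimensional k C.V := hS.fd
  have hP := hCh C hfd hEx
  obtain ⟨φ⟩ := hS.split hP
  exact ⟨C, hP, ⟨φ.symm⟩⟩

include hz in
theorem one_of_endo [Finite G] {M : Rep.{0} k G} (h : IsEndotrivial M) : One z M := by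
  obtain ⟨hfd, P, hP, ⟨φ⟩⟩ := h
  have hE : One z (EM M) := (one_bp ⟨_, one_triv hz⟩ (proj_ex hz P hP)).of_iso φ.symm
  have hne : ¬ Ex z M := by
    intro hx
    obtain ⟨h, hh⟩ := hx.ht hz
    obtain ⟨w, hw⟩ := hE
    let φ' : Module.End k M.V := w
    refine hw.ne ((h * φ') * M.ρ z : Module.End k M.V) (LinearMap.ext fun x => ?_)
    rw [EM_U hz]
    change φ' x = U z M (h (φ' x)) + h (φ' (U z M x))
    have := EM_comm hz M w hw.zero x
    change φ' (U z M x) = U z M (φ' x) at this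
    rw [this, add_comm, hh]
  unfold Ex at hne
  push Not at hne
  obtain ⟨m, hm0, hm⟩ := hne
  obtain ⟨ψ, hψ, hψm⟩ := exists_psi (U z M) m hm
  have hz0 : ∀ m', U z M m' = 0 → U z (EM M) (ψ.smulRight m' : Module.End k M.V) = 0 := by
    intro m' hm'
    refine EM_comm' hz M _ fun x => ?_
    rw [LinearMap.smulRight_apply, LinearMap.smulRight_apply, hψ, map_smul, hm', zero_smul, smul_zero]
  have hg : Gn z (EM M) (ψ.smulRight m : Module.End k M.V) := by
    refine hE.gn (hz0 m hm0) fun y hy => ?_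
    obtain ⟨a, ha⟩ := EM_U' hz M y
    have := ha m
    rw [← hy, LinearMap.smulRight_apply, hψm, one_smul, hm0, map_zero, add_zero] at this
    exact hm _ this
  refine ⟨m, hm0, hm, fun m' hm' => ?_⟩
  obtain ⟨c, y, hc⟩ := hg.gen _ (hz0 m' hm')
  obtain ⟨a, ha⟩ := EM_U' hz M y
  have h1 : (ψ.smulRight m' : Module.End k M.V) m = (c • ψ.smulRight m : Module.End k M.V) m +
    (U z (EM M) y : Module.End k M.V) m := by conv_lhs => rw [hc]
                                              rfl
  rw [ha, hm0, map_zero, add_zero, LinearMap.smul_apply, LinearMap.smulRight_apply, LinearMap.smulRight_apply,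
    hψm, one_smul, one_smul] at h1
  exact ⟨c, a m, h1⟩

end
end EQ

namespace EQ
open CategoryTheory CategoryTheory.Limits MonoidalCategory QuaternionGroup
set_option linter.unusedSectionVars false
set_option linter.style.haveILetI false

section
variable {k : Type} [Field k] [CharP k 2] {q : ℕ} [PQ q] {G : Type} [Group G]
  (e : G ≃* QuaternionGroup q)

/-- even modules -/
def Ev (M : Rep.{0} k G) : Prop := ∃ m, phi e M (D0 k q).X m = 0 ∧ ∀ y, m ≠ U (gz e) M y
/-- odd modules -/
def Od (M : Rep.{0} k G) : Prop := ∃ w, phi e M ((D0 k q).X ^ (2 * q - 1)) w = 0 ∧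
  ∀ y, phi e M ((D0 k q).X ^ (q - 1)) w ≠ U (gz e) M y

theorem phi_phi (M : Rep.{0} k G) (a b : A0 k q) (m : M.V) : phi e M a (phi e M b m) = phi e M (a * b) m := by
  rw [map_mul]; rfl

theorem phi_pp (M : Rep.{0} k G) (i j : ℕ) (m : M.V) :
    phi e M ((D0 k q).X ^ i) (phi e M ((D0 k q).X ^ j) m) = phi e M ((D0 k q).X ^ (i + j)) m := by
  rw [phi_phi, pow_add]

theorem phi_Xp (M : Rep.{0} k G) (j : ℕ) (m : M.V) :
    phi e M (D0 k q).X (phi e M ((D0 k q).X ^ j) m) = phi e M ((D0 k q).X ^ (j + 1)) m := by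
  rw [phi_phi, pow_succ']

theorem phi_pX (M : Rep.{0} k G) (j : ℕ) (m : M.V) :
    phi e M ((D0 k q).X ^ j) (phi e M (D0 k q).X m) = phi e M ((D0 k q).X ^ (j + 1)) m := by
  rw [phi_phi, pow_succ]

theorem U_pp (M : Rep.{0} k G) (j : ℕ) (m : M.V) :
    U (gz e) M (phi e M ((D0 k q).X ^ j) m) = phi e M ((D0 k q).X ^ (q + j)) m := by
  rw [← phi_u', phi_pp]

theorem pp_U (M : Rep.{0} k G) (j : ℕ) (m : M.V) :
    phi e M ((D0 k q).X ^ j) (U (gz e) M m) = phi e M ((D0 k q).X ^ (q + j)) m := by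
  rw [← phi_u', phi_pp, add_comm]

theorem pp_top (M : Rep.{0} k G) (m : M.V) : phi e M ((D0 k q).X ^ (2 * q)) m = 0 := by
  rw [(D0 k q).pow_nil, map_zero]; rfl

theorem Ev.gn {M : Rep.{0} k G} {m : M.V} (h : One (gz e) M) (h1 : phi e M (D0 k q).X m = 0)
    (h2 : ∀ y, m ≠ U (gz e) M y) : Gn (gz e) M m := by
  refine h.gn ?_ h2
  rw [← phi_u', phi_X_pow e M m h1 (one_le_q q)]

theorem ev_or_od {M : Rep.{0} k G} (h : One (gz e) M) : Ev e M ∨ Od e M := by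
  classical
  obtain ⟨m0, hm0⟩ := h
  have hq := PQ.four q
  have hex : ∃ j, ∃ y, phi e M ((D0 k q).X ^ j) m0 = U (gz e) M y := ⟨q, 0, by
    rw [phi_u', hm0.zero, map_zero]⟩
  obtain ⟨j, hj⟩ : ∃ j, Nat.find hex = j + 1 := Nat.exists_eq_succ_of_ne_zero (by
    intro h0
    have := Nat.find_spec hex
    rw [h0, pow_zero, map_one] at this
    obtain ⟨y, hy⟩ := this
    exact hm0.ne y hy)
  obtain ⟨y, hy⟩ := Nat.find_spec hex
  rw [hj, ← phi_Xp] at hy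
  have hm := Nat.find_min hex (m := j) (by omega)
  push Not at hm
  set m := phi e M ((D0 k q).X ^ j) m0 with hmdef
  have hmU : U (gz e) M m = 0 := by rw [hmdef, U_pp, add_comm, ← phi_pp, phi_u', hm0.zero, map_zero]
  have hyX : phi e M (D0 k q).X (phi e M ((D0 k q).X ^ (q - 1)) y) = U (gz e) M y := by
    rw [phi_Xp, ← phi_u', Nat.sub_add_cancel (one_le_q q)]
  by_cases hc : ∃ x, phi e M ((D0 k q).X ^ (q - 1)) y = U (gz e) M x
  · left
    obtain ⟨x, hx⟩ := hc
    refine ⟨m - phi e M ((D0 k q).X ^ (q - 1)) y, ?_, fun x' hx' => ?_⟩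
    · rw [map_sub, hyX, hy, sub_self]
    · refine hm (x' + x) ?_
      rw [map_add, ← hx', ← hx, sub_add_cancel]
  · right
    push Not at hc
    refine ⟨y, ?_, hc⟩
    have : 2 * q - 1 = (q - 1) + q := by omega
    rw [this, ← phi_pp, phi_u', ← hy, phi_pX, Nat.sub_add_cancel (one_le_q q), phi_u', hmU]

theorem ev_not_od {M : Rep.{0} k G} (h : One (gz e) M) (h1 : Ev e M) (h2 : Od e M) : False := by
  have hq := PQ.four q
  obtain ⟨m, hm0, hm⟩ := h1
  obtain ⟨w, hw0, hw⟩ := h2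
  have hg := Ev.gn e h hm0 hm
  have hW : Gn (gz e) M (phi e M ((D0 k q).X ^ (q - 1)) w) := by
    refine h.gn ?_ hw
    rw [U_pp, ← hw0]; congr 3; omega
  obtain ⟨c, y, hc⟩ := hW.gen m hg.zero
  have h3 : m = phi e M ((D0 k q).X ^ (q - 1)) (c • w + phi e M (D0 k q).X y) := by
    rw [map_add, map_smul, phi_pX, Nat.sub_add_cancel (one_le_q q), phi_u', ← hc]
  set w' := c • w + phi e M (D0 k q).X y
  have h4 : U (gz e) M w' = 0 := by
    rw [← phi_u', ← hm0, h3, phi_Xp, Nat.sub_add_cancel (one_le_q q)]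
  obtain ⟨d, y', hd⟩ := hg.gen w' h4
  rw [hd, map_add, map_smul, phi_X_pow e M m hm0 (by omega), smul_zero, zero_add, pp_U, ← U_pp] at h3
  exact hm _ h3

theorem Ev.sim {M N : Rep.{0} k G} (hM : One (gz e) M) (hN : One (gz e) N) (h : Sim (gz e) M N) (h1 : Ev e M) :
    Ev e N := by
  obtain ⟨f, hf⟩ := h
  obtain ⟨m, hm0, hm⟩ := h1
  have := hf.gn hN (Ev.gn e hM hm0 hm)
  exact ⟨f.hom m, by rw [← phi_hom, hm0, map_zero], this.ne⟩

theorem SE.ev {A B C : Rep.{0} k G} {f : A ⟶ B} {g : B ⟶ C} (h : SE f g) (hB : Ex (gz e) B)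
    (hC : One (gz e) C) (h1 : Ev e C) : Od e A := by
  have hq := PQ.four q
  obtain ⟨c, hc0, hc⟩ := h1
  have hg := Ev.gn e hC hc0 hc
  obtain ⟨b, rfl⟩ := h.surj c
  obtain ⟨a, ha⟩ := h.ex (phi e B (D0 k q).X b) (by rw [phi_hom, hc0])
  refine ⟨a, h.inj _ ?_, ?_⟩
  · rw [phi_hom, ha, phi_pX, Nat.sub_add_cancel (by omega), pp_top]
  · exact (h.gnA (hci e) hB hg (by rw [phi_hom, ha, phi_pX, Nat.sub_add_cancel (by omega), phi_u'])).ne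

theorem SE.od {A B C : Rep.{0} k G} {f : A ⟶ B} {g : B ⟶ C} (h : SE f g) (hB : Ex (gz e) B)
    (hC : One (gz e) C) (h1 : Od e C) : Ev e A := by
  have hq := PQ.four q
  obtain ⟨c, hc0, hc⟩ := h1
  have hg : Gn (gz e) C (phi e C ((D0 k q).X ^ (q - 1)) c) := by
    refine hC.gn ?_ hc
    rw [U_pp, ← hc0]; congr 3; omega
  obtain ⟨b, rfl⟩ := h.surj c
  obtain ⟨a, ha⟩ := h.ex (phi e B ((D0 k q).X ^ (2 * q - 1)) b) (by rw [phi_hom, hc0])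
  refine ⟨a, h.inj _ ?_, ?_⟩
  · rw [phi_hom, ha, phi_Xp, Nat.sub_add_cancel (by omega), pp_top]
  · rw [← phi_hom] at hg
    exact (h.gnA (hci e) hB hg (by rw [U_pp, ha]; congr 3; omega)).ne

open scoped TensorProduct in
theorem Ev.tensor {M N : Rep.{0} k G} (hM : One (gz e) M) (hN : One (gz e) N) (h1 : Ev e M) (h2 : Ev e N) :
    Ev e (M ⊗ N) := by
  obtain ⟨m, hm0, hm⟩ := h1
  obtain ⟨n, hn0, hn⟩ := h2
  refine ⟨m ⊗ₜ[k] n, ?_, ((Ev.gn e hM hm0 hm).tensor (hci e) (Ev.gn e hN hn0 hn)).ne⟩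
  rw [phi_X_zero] at *
  change (M.ρ (gth e) m) ⊗ₜ[k] (N.ρ (gth e) n) = _
  rw [hm0, hn0]

end
end EQ

namespace EQ
open CategoryTheory CategoryTheory.Limits MonoidalCategory QuaternionGroup
set_option linter.unusedSectionVars false
set_option linter.style.haveILetI false

section
variable {k G : Type} [Field k] [Group G]

theorem exists_ker {B C : Rep.{0} k G} (g : B ⟶ C) (hg : Function.Surjective g.hom) :
    ∃ (A : Rep.{0} k G) (f : A ⟶ B), SE f g := by
  have : Epi g := (Rep.epi_iff_surjective g).2 hg
  refine ⟨kernel g, kernel.ι g, SE.of_short _ _ (kernel.condition g) ?_⟩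
  exact { exact := ShortComplex.exact_kernel g, mono_f := inferInstance, epi_g := this }

theorem exists_cover [Finite G] (N : Rep.{0} k G) :
    ∃ (A : Rep.{0} k G) (f : A ⟶ IM N) (g : IM N ⟶ N), SE f g := by
  classical
  cases nonempty_fintype G
  let r : IM N ⟶ N := mkHom (M := IM N) (N := N) (∑ h : G, N.ρ h⁻¹ ∘ₗ LinearMap.proj (R := k) (φ := fun _ : G => N.V) h) (by
    intro g φ
    rw [LinearMap.sum_apply, LinearMap.sum_apply, map_sum]
    refine Fintype.sum_equiv (Equiv.mulRight g) _ _ fun h => ?_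
    change N.ρ h⁻¹ (φ (h * g)) = N.ρ g (N.ρ (h * g)⁻¹ (φ (h * g)))
    rw [← Module.End.mul_apply, ← map_mul]; simp)
  obtain ⟨A, f, h⟩ := exists_ker r (by
    intro x
    refine ⟨(Pi.single 1 x : G → N.V), ?_⟩
    change (∑ h : G, N.ρ h⁻¹ ∘ₗ LinearMap.proj (R := k) (φ := fun _ : G => N.V) h) (Pi.single 1 x) = x
    rw [LinearMap.sum_apply, Finset.sum_eq_single 1]
    · simp
    · intro b _ hb; simp [Pi.single_eq_of_ne hb]
    · simp)
  exact ⟨A, f, r, h⟩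
end

section
variable {A : Type} [CommRing A] {q : ℕ} {D : QD A q} {M : Type} [AddCommGroup M] [Module A M]
  {S : M →+ M} (hS : SL D S) (hq : 2 ≤ q)
include hS hq

theorem T0a (a b : M) : S (D.X • a + D.th • S b + b) + (D.X • a + D.th • S b + b) =
    D.X • (D.th' • S a + a + (D.th' * D.X ^ (q - 1) + D.th') • b + S b) := by
  have h2 := D.two
  have h3 := D.inv
  have h4 := D.th_eq
  have h5 := D.X'_eq
  have h6 : D.X * D.X ^ (q - 1) = D.X ^ q := by rw [← pow_succ', Nat.sub_add_cancel (by omega)]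
  rw [map_add, map_add, hS.semi, hS.semi, hS.sq, D.bar_X, D.bar_th]
  have h7 : D.X' = D.th' + 1 := rfl
  have h8 : D.X = D.th + 1 := rfl
  generalize D.X ^ q = Z at *
  generalize D.X ^ (q - 1) = Y at *
  linear_combination (norm := (match_scalars <;> grind)) (0 : A) • (rfl : a = a)

theorem T0b (a b : M) : S (D.th' • S a + a + (D.th' * D.X ^ (q - 1) + D.th') • b + S b) +
    D.th • (D.th' • S a + a + (D.th' * D.X ^ (q - 1) + D.th') • b + S b) +
    (D.th * D.X ^ (q - 1)) • (D.X • a + D.th • S b + b) = D.X ^ (2 * q - 1) • S b := by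
  have h2 := D.two
  have h3 := D.inv
  have h4 := D.th_eq
  have h5 := D.X'_eq
  have h6 : D.X * D.X ^ (q - 1) = D.X ^ q := by rw [← pow_succ', Nat.sub_add_cancel (by omega)]
  have h7 : D.X' = D.th' + 1 := rfl
  have h8 : D.X = D.th + 1 := rfl
  have h9 : D.X ^ q * D.X ^ (q - 1) = D.X ^ (2 * q - 1) := by rw [← pow_add]; congr 1; omega
  have h10 := D.X_top (by omega)
  have h11 : D.X' ^ (q - 1) = D.th * (1 + D.X ^ q) * D.X ^ (q - 1) := by
    rw [D.X'_eq, mul_pow]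
    have := D.th'_pow
    have e1 : D.th' * D.th' ^ (q - 1) = D.th' ^ q := by rw [← pow_succ', Nat.sub_add_cancel (by omega)]
    congr 1
    have e2 : D.th' ^ (q - 1) = D.th * D.th' ^ q := by
      rw [← e1, ← mul_assoc, D.inv, one_mul]
    rw [e2, this]
  rw [map_add, map_add, map_add, hS.semi, hS.semi, hS.sq, hS.sq, D.bar_th', map_add, map_mul, D.bar_th', map_pow,
    D.bar_X, h11]
  generalize D.X ^ q = Z at *
  generalize D.X ^ (q - 1) = Y at *
  generalize D.X ^ (2 * q - 1) = T at *
  linear_combination (norm := (match_scalars <;> grind)) (0 : A) • (rfl : a = a)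

theorem T0c (p : M) : D.X • (S p + p) + D.th • S (D.X • p) + D.X • p = 0 := by
  have h2 := D.two
  have h3 := D.inv
  have h5 := D.X'_eq
  rw [hS.semi, D.bar_X]
  linear_combination (norm := (match_scalars <;> grind)) (0 : A) • (rfl : p = p)

theorem T0d (p : M) : D.th' • S (S p + p) + (S p + p) + (D.th' * D.X ^ (q - 1) + D.th') • (D.X • p) +
    S (D.X • p) = 0 := by
  have h2 := D.two
  have h3 := D.inv
  have h5 := D.X'_eq
  have h6 : D.X * D.X ^ (q - 1) = D.X ^ q := by rw [← pow_succ', Nat.sub_add_cancel (by omega)]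
  have h7 : D.X' = D.th' + 1 := rfl
  have h8 : D.X = D.th + 1 := rfl
  rw [map_add, hS.semi, D.bar_X, hS.sq]
  generalize D.X ^ q = Z at *
  generalize D.X ^ (q - 1) = Y at *
  linear_combination (norm := (match_scalars <;> grind)) (0 : A) • (rfl : p = p)

theorem T0e (p : M) : D.X ^ (q - 1) • S (D.X • p) = D.X ^ q • (D.th' • S p) := by
  have h6 : D.X ^ q = D.X * D.X ^ (q - 1) := by rw [← pow_succ', Nat.sub_add_cancel (by omega)]
  rw [hS.semi, D.bar_X, D.X'_eq, smul_smul, smul_smul, h6]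
  congr 1; ring

theorem T0f (v w : M) : D.X ^ (2 * q - 1) • (S v + v + D.X • w) + S (D.X ^ (2 * q - 1) • (S v + v + D.X • w)) =
    D.X ^ (2 * q - 1) • ((S v + v + D.X • w) + S (S v + v + D.X • w)) := by
  rw [hS.semi, D.bar_top (by omega), smul_add _ (S v + v + D.X • w)]

theorem T0g (v w : M) : D.X ^ (q - 1) • ((S v + v + D.X • w) + S (S v + v + D.X • w)) =
    D.X ^ q • (D.th' • (S w + D.th • w + (D.th * D.X ^ (q - 1)) • v)) := by
  have h2 := D.two
  have h3 := D.inv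
  have h5 := D.X'_eq
  have h6 : D.X * D.X ^ (q - 1) = D.X ^ q := by rw [← pow_succ', Nat.sub_add_cancel (by omega)]
  rw [map_add, map_add, hS.semi, D.bar_X, hS.sq]
  generalize D.X ^ q = Z at *
  generalize D.X ^ (q - 1) = Y at *
  linear_combination (norm := (match_scalars <;> grind)) (0 : A) • (rfl : v = v)
end
end EQ

namespace EQ
open CategoryTheory CategoryTheory.Limits MonoidalCategory QuaternionGroup
set_option linter.unusedSectionVars false
set_option linter.style.haveILetI false

section
variable {k : Type} [Field k] [CharP k 2] {q : ℕ} [PQ q] {G : Type} [Group G]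
  (e : G ≃* QuaternionGroup q)

theorem two_le_q (q : ℕ) [PQ q] : 2 ≤ q := by have := PQ.four q; omega

/-- type zero modules -/
def Typ (M : Rep.{0} k G) : Prop := ∃ v w, M.ρ (gta e) v + v = phi e M (D0 k q).X w ∧
  ∀ y, M.ρ (gta e) w + phi e M (D0 k q).th w + phi e M ((D0 k q).th * (D0 k q).X ^ (q - 1)) v ≠ U (gz e) M y

include e in
theorem sim_triv {M : Rep.{0} k G} (m : M.V) (h1 : M.ρ (gth e) m = m) (h2 : M.ρ (gta e) m = m)
    (h : ∀ y, m ≠ U (gz e) M y) : Sim (gz e) (Rep.trivial k G k) M := by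
  refine ⟨mkHom (LinearMap.toSpanSingleton k M.V m) ?_, (1 : k), (one_triv (hci e)).zero, ?_⟩
  · intro g x
    change x • m = M.ρ g (x • m)
    rw [map_smul, fix_all e M m h1 h2]
  · intro y hy
    change (1 : k) • m = _ at hy
    rw [one_smul] at hy
    exact h y hy

theorem phi_U (M : Rep.{0} k G) (a : A0 k q) (m : M.V) : phi e M a (U (gz e) M m) = U (gz e) M (phi e M a m) := by
  rw [← phi_u', ← phi_u', phi_phi, phi_phi, mul_comm a]

theorem typ_syz {M0 P0 M1 P1 M2 : Rep.{0} k G} {f0 : M1 ⟶ P0} {g0 : P0 ⟶ M0} {f1 : M2 ⟶ P1} {g1 : P1 ⟶ M1}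
    (h0 : SE f0 g0) (h1 : SE f1 g1) (hP0 : Ex (gz e) P0) (hP1 : Ex (gz e) P1) (x : M0.V)
    (hx1 : M0.ρ (gth e) x = x) (hx2 : M0.ρ (gta e) x = x) (hx : ∀ y, x ≠ U (gz e) M0 y) : Typ e M2 := by
  obtain ⟨p, rfl⟩ := h0.surj x
  have hq := two_le_q q
  obtain ⟨a, ha⟩ := h0.ex (P0.ρ (gta e) p + p) (by
    rw [map_add, Rep.hom_comm_apply, hx2, add_self0 (k := k)])
  obtain ⟨b, hb⟩ := h0.ex (phi e P0 (D0 k q).X p) (by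
    rw [phi_hom, phi_X_zero]; exact hx1)
  obtain ⟨a, rfl⟩ := h1.surj a
  obtain ⟨b, rfl⟩ := h1.surj b
  obtain ⟨v, hv⟩ := h1.ex (phi e P1 (D0 k q).X a + phi e P1 (D0 k q).th (P1.ρ (gta e) b) + b) (by
    apply h0.inj
    rw [map_add, map_add, map_add, map_add, phi_hom, phi_hom, phi_hom, phi_hom, Rep.hom_comm_apply, Rep.hom_comm_apply, ha, hb]
    letI := modA e P0
    exact T0c (phi_SL e P0) hq p)
  obtain ⟨w, hw⟩ := h1.ex (phi e P1 (D0 k q).th' (P1.ρ (gta e) a) + a +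
      phi e P1 ((D0 k q).th' * (D0 k q).X ^ (q - 1) + (D0 k q).th') b + P1.ρ (gta e) b) (by
    apply h0.inj
    simp only [map_add f0.hom, map_add g1.hom]
    rw [phi_hom, phi_hom, phi_hom, phi_hom, Rep.hom_comm_apply, Rep.hom_comm_apply, Rep.hom_comm_apply, Rep.hom_comm_apply,
      ha, hb]
    letI := modA e P0
    exact T0d (phi_SL e P0) hq p)
  refine ⟨v, w, ?_, fun y hy => ?_⟩
  · apply h1.inj'
    rw [map_add, Rep.hom_comm_apply, phi_hom, hv, hw]
    letI := modA e P1
    exact T0a (phi_SL e P1) hq a b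
  · have h2 := congrArg f1.hom hy
    rw [map_add, map_add, Rep.hom_comm_apply, phi_hom, phi_hom, U_hom, hv, hw] at h2
    letI := modA e P1
    have h3 : _ = phi e P1 ((D0 k q).X ^ (2 * q - 1)) (P1.ρ (gta e) b) := T0b (phi_SL e P1) hq a b
    have h4 := h3.symm.trans h2
    obtain ⟨r, hr⟩ := hP1 (phi e P1 ((D0 k q).X ^ (q - 1)) (P1.ρ (gta e) b) - f1.hom y) (by
      rw [map_sub, U_pp, ← h4, sub_eq_zero]; congr 3; omega)
    have h5 := congrArg (fun t => f0.hom (g1.hom t)) hr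
    simp only [map_sub g1.hom, h1.zero, sub_zero, phi_hom, Rep.hom_comm_apply, hb, U_hom] at h5
    letI := modA e P0
    have h6 : phi e P0 ((D0 k q).X ^ (q - 1)) (P0.ρ (gta e) (phi e P0 (D0 k q).X p)) =
      phi e P0 ((D0 k q).X ^ q) (phi e P0 (D0 k q).th' (P0.ρ (gta e) p)) := T0e (phi_SL e P0) hq p
    rw [h6, phi_u', ← sub_eq_zero, ← map_sub] at h5
    obtain ⟨s, hs⟩ := hP0 _ h5
    have h7 := congrArg g0.hom hs
    rw [map_sub, h0.zero, sub_zero, phi_hom, Rep.hom_comm_apply, hx2, U_hom] at h7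
    have h8 := congrArg (phi e M0 (D0 k q).th) h7
    rw [phi_phi, (D0 k q).inv, map_one, phi_U] at h8
    exact hx _ h8

theorem typ_k {N Q0 N1 Q1 N2 : Rep.{0} k G} {f0 : N1 ⟶ Q0} {g0 : Q0 ⟶ N} {f1 : N2 ⟶ Q1} {g1 : Q1 ⟶ N1}
    (h0 : SE f0 g0) (h1 : SE f1 g1) (hQ0 : Ex (gz e) Q0) (hQ1 : Ex (gz e) Q1) (hN : One (gz e) N)
    (h : Typ e N) : Sim (gz e) (Rep.trivial k G k) N2 := by
  have hq := two_le_q q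
  obtain ⟨v, w, hvw, hne⟩ := h
  obtain ⟨v, rfl⟩ := h0.surj v
  obtain ⟨w, rfl⟩ := h0.surj w
  obtain ⟨n, hn⟩ := h0.ex (Q0.ρ (gta e) v + v + phi e Q0 (D0 k q).X w) (by
    rw [map_add, map_add, phi_hom, Rep.hom_comm_apply, hvw, add_self0 (k := k)])
  have key : phi e Q0 ((D0 k q).X ^ (q - 1)) (f0.hom n + Q0.ρ (gta e) (f0.hom n)) =
      U (gz e) Q0 (phi e Q0 (D0 k q).th' (Q0.ρ (gta e) w + phi e Q0 (D0 k q).th w +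
        phi e Q0 ((D0 k q).th * (D0 k q).X ^ (q - 1)) v)) := by
    rw [← phi_u', hn]
    letI := modA e Q0
    exact T0g (phi_SL e Q0) hq v w
  set κ := phi e Q0 (D0 k q).th' (Q0.ρ (gta e) w + phi e Q0 (D0 k q).th w +
        phi e Q0 ((D0 k q).th * (D0 k q).X ^ (q - 1)) v) with hκ
  have gκ : Gn (gz e) N (g0.hom κ) := by
    refine hN.gn ?_ fun y hy => ?_
    · rw [← U_hom, ← key, phi_hom, map_add, Rep.hom_comm_apply, h0.zero]; simp
    · have h8 := congrArg (phi e N (D0 k q).th) hy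
      rw [hκ, phi_hom, phi_phi, (D0 k q).inv, map_one, phi_U, Module.End.one_apply, map_add, map_add,
        Rep.hom_comm_apply, phi_hom, phi_hom] at h8
      exact hne _ h8
  have g1' := h0.gnA (hci e) hQ0 (a0 := phi e N1 ((D0 k q).X ^ (q - 1)) (n + N1.ρ (gta e) n)) gκ (by
    rw [phi_hom, map_add, Rep.hom_comm_apply, key])
  obtain ⟨n, rfl⟩ := h1.surj n
  set T := phi e Q1 ((D0 k q).X ^ (2 * q - 1)) n with hT
  have hT1 : T + Q1.ρ (gta e) T = U (gz e) Q1 (phi e Q1 ((D0 k q).X ^ (q - 1)) (n + Q1.ρ (gta e) n)) := by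
    rw [U_pp, hT, phi_semi, (D0 k q).bar_top (by omega), map_add]
    congr 4 <;> omega
  have hX : phi e Q1 (D0 k q).X T = 0 := by
    rw [hT, phi_Xp, Nat.sub_add_cancel (by omega), pp_top]
  have hUT : U (gz e) Q1 T = 0 := by rw [← phi_u', phi_X_pow e _ _ hX (by omega)]
  have g1'' : Gn (gz e) N1 (g1.hom (phi e Q1 ((D0 k q).X ^ (q - 1)) (n + Q1.ρ (gta e) n))) := by
    rw [phi_hom, map_add, Rep.hom_comm_apply]; exact g1'
  obtain ⟨m, hm⟩ := h1.conn g1''.zero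
  have gm := h1.gnA (hci e) hQ1 g1'' hm
  refine sim_triv e m ?_ ?_ gm.ne
  · apply h1.inj'
    rw [Rep.hom_comm_apply, hm, ← hT1, ← phi_X_zero, map_add, hX, hT, phi_semi, (D0 k q).bar_top (by omega), phi_Xp,
      Nat.sub_add_cancel (by omega), pp_top, add_zero]
  · apply h1.inj'
    rw [Rep.hom_comm_apply, hm, ← hT1, map_add, tau_tau, hUT, zero_add, add_comm]

include e in
theorem typ_sim {N N' : Rep.{0} k G} [FiniteDimensional k N.V] [FiniteDimensional k N'.V] (hN : One (gz e) N)
    (hN' : One (gz e) N') (h : Typ e N) (h' : Typ e N') : Sim (gz e) N N' := by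
  have := finG e
  obtain ⟨A1, f1, g1, s1⟩ := exists_cover N
  have := s1.fd'
  obtain ⟨A2, f2, g2, s2⟩ := exists_cover A1
  have := s2.fd'
  obtain ⟨B1, f1', g1', t1⟩ := exists_cover N'
  have := t1.fd'
  obtain ⟨B2, f2', g2', t2⟩ := exists_cover B1
  have := t2.fd'
  have hz := hci e
  have oA1 := s1.oneA hz (IM_ex hz _) hN
  have oA2 := s2.oneA hz (IM_ex hz _) oA1
  have oB1 := t1.oneA hz (IM_ex hz _) hN'
  have oB2 := t2.oneA hz (IM_ex hz _) oB1
  have ok : One (gz e) (Rep.trivial k G k) := ⟨_, one_triv hz⟩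
  haveI : FiniteDimensional k (Rep.trivial k G k).V := inferInstanceAs (FiniteDimensional k k)
  have e1 := (typ_k e s1 s2 (IM_ex hz _) (IM_ex hz _) hN h).symm hz (ch e) ok oA2
  have e2 := typ_k e t1 t2 (IM_ex hz _) (IM_ex hz _) hN' h'
  have e3 := e1.trans ok oA2 e2 oB2
  have e4 := Sim.unshift hz s2 t2 (IM_ex hz _) (IM_inj _) e3
  exact Sim.unshift hz s1 t1 (IM_ex hz _) (IM_inj _) e4

end
end EQ

namespace EQ
open CategoryTheory CategoryTheory.Limits MonoidalCategory QuaternionGroup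
set_option linter.unusedSectionVars false
set_option linter.style.haveILetI false

section
variable {k : Type} [Field k] [CharP k 2] {q : ℕ} [PQ q] {G : Type} [Group G]
  (e : G ≃* QuaternionGroup q)

theorem phi_alg (M : Rep.{0} k G) (c : k) (m : M.V) : phi e M (algebraMap k _ c) m = c • m := by
  rw [AlgHom.commutes]; rfl

theorem phi_eps (M : Rep.{0} k G) (a : A0 k q) (m : M.V) (h : phi e M (D0 k q).X m = 0) :
    phi e M a m = eps k q a • m := by
  obtain ⟨b, hb⟩ := decomp k q a
  have : phi e M a m = phi e M (algebraMap k _ (eps k q a) + (D0 k q).X * b) m := by rw [← hb]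
  rw [this, map_add, LinearMap.add_apply, phi_alg, mul_comm (D0 k q).X b, ← phi_phi, h, map_zero, add_zero]

theorem eps_pow {j : ℕ} (hj : 1 ≤ j) : eps k q ((D0 k q).X ^ j) = 0 := by
  rw [map_pow, eps_X, zero_pow (by omega)]

theorem LL_U (x : A0 k q × k) : U (gz e) (LL k e) x = ((D0 k q).X ^ q * x.1, 0) := by
  rw [← phi_u', LL_phi, eps_pow (one_le_q q), zero_mul]

theorem LL_X : phi e (LL k e) (D0 k q).X ((0, 1) : A0 k q × k) = 0 := by
  rw [LL_phi, eps_X, mul_zero, zero_mul]; rfl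

theorem LL_gn : Gn (gz e) (LL k e) ((0, 1) : A0 k q × k) := by
  refine ⟨?_, fun y hy => ?_, fun x hx => ?_⟩
  · rw [LL_U, mul_zero]; rfl
  · rw [LL_U] at hy
    exact one_ne_zero (congrArg Prod.snd hy)
  · rw [LL_U] at hx
    obtain ⟨b, hb⟩ := ker_pow k q q (by omega) x.1 (congrArg Prod.fst hx)
    refine ⟨x.2, ((b, 0) : A0 k q × k), ?_⟩
    rw [LL_U]
    refine Prod.ext ?_ ?_
    · rw [hb, show 2 * q - q = q by omega]
      change _ = x.2 • (0 : A0 k q) + (D0 k q).X ^ q * b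
      rw [smul_zero, zero_add]
    · change x.2 = x.2 * 1 + 0
      simp

instance : FiniteDimensional k (A0 k q) := inferInstance

theorem LL_fd : FiniteDimensional k (LL k e).V := inferInstanceAs (FiniteDimensional k (A0 k q × k))

theorem LL_ev : Ev e (LL k e) := ⟨_, LL_X e, (LL_gn e).ne⟩

theorem L_univ {N : Rep.{0} k G} (v : N.V)
    (h1 : phi e N (D0 k q).X (N.ρ (gta e) v + phi e N (Q0 k q).c' v) = 0)
    (h2 : ∀ y, N.ρ (gta e) v + phi e N (Q0 k q).c' v ≠ U (gz e) N y) : Sim (gz e) (LL k e) N := by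
  obtain ⟨n, hn⟩ : ∃ n, n = N.ρ (gta e) v + phi e N (Q0 k q).c' v := ⟨_, rfl⟩
  rw [← hn] at h1
  simp only [← hn] at h2
  have hSv : N.ρ (gta e) v = n + phi e N (Q0 k q).c' v := by
    rw [hn, add_assoc, add_self0 (k := k), add_zero]
  have hSn : N.ρ (gta e) n = phi e N ((D0 k q).X ^ (2 * q - 1)) v + n := by
    conv_lhs => rw [hn]
    rw [map_add, phi_semi, (Q0 k q).bar_c', tau_tau, ← phi_u', hSv, map_add, phi_phi, (Q0 k q).cc,
      phi_eps e N _ n h1, eps_c, one_smul]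
    simp only [map_add, map_one, LinearMap.add_apply, Module.End.one_apply]
    have e1 := add_self0 (k := k) v
    have e2 := add_self0 (k := k) (phi e N ((D0 k q).X ^ q) v)
    calc _ = (phi e N ((D0 k q).X ^ q) v + phi e N ((D0 k q).X ^ q) v) + (v + v) +
        (phi e N ((D0 k q).X ^ (2 * q - 1)) v + n) := by abel
      _ = _ := by rw [e1, e2]; abel
  let F : A0 k q × k →ₗ[k] N.V := 
    { toFun x := phi e N x.1 v + x.2 • n
      map_add' x y := by
        rw [Prod.fst_add, Prod.snd_add, map_add, LinearMap.add_apply, add_smul]; abel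
      map_smul' c x := by
        rw [Prod.smul_fst, Prod.smul_snd, map_smul, LinearMap.smul_apply, smul_assoc, ← smul_add]; rfl }
  have hF : ∀ x, F x = phi e N x.1 v + x.2 • n := fun x => rfl
  have hθ : N.ρ (gth e) n = n := (phi_X_zero e N n).1 h1
  refine ⟨mkHom (M := LL k e) F (equi e (LL k e).ρ N.ρ F ?_ ?_), ((0, 1) : A0 k q × k), (LL_gn e).zero, ?_⟩
  · intro x
    rw [← phi_th e (LL k e), LL_phi, hF, hF, map_add, map_smul, hθ, eps_th, one_mul, ← phi_th e N, phi_phi]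
  · intro x
    rw [LL_tau, hF, hF, map_add (N.ρ (gta e)), map_smul (N.ρ (gta e)), hSn, phi_semi, hSv, map_add (phi e N _), phi_eps e N _ n h1, eps_bar, phi_phi]
    simp only [map_add, map_smul, LinearMap.add_apply, LinearMap.smul_apply, add_smul, smul_add]
    abel
  · intro y hy
    rw [mkHom_apply, hF] at hy
    rw [map_zero, LinearMap.zero_apply, zero_add, one_smul] at hy
    exact h2 y hy

theorem typ_kap (M : Rep.{0} k G) {v w : M.V} (hvw : M.ρ (gta e) v + v = phi e M (D0 k q).X w) {κ : M.V}
    (hκ : κ = M.ρ (gta e) w + phi e M (D0 k q).th w + phi e M ((D0 k q).th * (D0 k q).X ^ (q - 1)) v) :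
    phi e M (D0 k q).X κ = 0 ∧ M.ρ (gta e) κ + κ = phi e M ((D0 k q).X ^ (2 * q - 1)) v := by
  letI := modA e M
  have h := KI (phi_SL e M) (two_le_q q) (m0 := 0) (s := (D0 k q).X ^ (2 * q - 1) • v) (v := v) (w := w)
    (a := 0) (map_zero _) (smul_zero _) (by rw [zero_smul, zero_smul]) rfl (by
      rw [smul_zero, zero_add]; exact hvw)
  simp only [zero_mul, zero_smul, add_zero, one_smul] at h
  rw [hκ]
  exact h

theorem phi_triv (a : A0 k q) (m : k) : phi e (Rep.trivial k G k) a m = eps k q a * m := by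
  rw [phi_eps e]; · rfl
  rw [phi_X_zero, Rep.trivial_ρ_apply]

theorem typ_not_triv {M : Rep.{0} k G} (hM : One (gz e) M) (h : Typ e M) : ¬ Sim (gz e) M (Rep.trivial k G k) := by
  rintro ⟨f, hf⟩
  obtain ⟨v, w, hvw, hne⟩ := h
  obtain ⟨h1, h2⟩ := typ_kap e M hvw rfl
  have g := hf.gn ⟨_, one_triv (hci e)⟩ (Ev.gn e hM h1 hne)
  refine g.ne 0 ?_
  rw [map_zero, map_add, map_add, Rep.hom_comm_apply, phi_hom, phi_hom, phi_triv, phi_triv, Rep.trivial_ρ_apply,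
    map_mul, eps_th, eps_pow (by have := PQ.four q; omega), mul_zero, zero_mul, add_zero, one_mul]
  exact CharTwo.add_self_eq_zero (f.hom w : k)

theorem LL_m0 : (LL k e).ρ (gta e) ((1, 0) : A0 k q × k) + phi e (LL k e) (Q0 k q).c' ((1, 0) : A0 k q × k) =
    ((0, 1) : A0 k q × k) := by
  rw [LL_tau, LL_phi]
  refine Prod.ext ?_ ?_
  · change (D0 k q).bar 1 * (Q0 k q).c' + (0 : k) • (D0 k q).X ^ (2 * q - 1) + (Q0 k q).c' * 1 = 0
    rw [map_one, one_mul, zero_smul, add_zero, mul_one, ← two_mul, (D0 k q).two, zero_mul]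
  · change eps k q 1 + 0 + eps k q (Q0 k q).c' * 0 = 1
    rw [map_one]; simp

theorem LL_not_triv : ¬ Sim (gz e) (LL k e) (Rep.trivial k G k) := by
  rintro ⟨f, hf⟩
  have g := hf.gn ⟨_, one_triv (hci e)⟩ (LL_gn e)
  refine g.ne 0 ?_
  rw [map_zero, ← LL_m0 e, map_add, Rep.hom_comm_apply, phi_hom, phi_triv, Rep.trivial_ρ_apply, eps_c', one_mul]
  exact CharTwo.add_self_eq_zero (f.hom ((1, 0) : A0 k q × k) : k)

theorem typ_not_LL {M : Rep.{0} k G} (hM : One (gz e) M) (h : Typ e M) : ¬ Sim (gz e) M (LL k e) := by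
  rintro ⟨f, hf⟩
  obtain ⟨v, w, hvw, hne⟩ := h
  have hq := PQ.four q
  obtain ⟨h1, h2⟩ := typ_kap e M hvw rfl
  have g := hf.gn ⟨_, LL_gn e⟩ (Ev.gn e hM h1 hne)
  set κ := M.ρ (gta e) w + phi e M (D0 k q).th w + phi e M ((D0 k q).th * (D0 k q).X ^ (q - 1)) v
  have e1 := congrArg f.hom h1
  have e2 := congrArg f.hom h2
  have e3 := congrArg f.hom hvw
  rw [phi_hom, map_zero] at e1
  rw [phi_hom, map_add, Rep.hom_comm_apply] at e2
  rw [phi_hom, map_add, Rep.hom_comm_apply] at e3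
  let K : A0 k q × k := f.hom κ
  let V : A0 k q × k := f.hom v
  let W : A0 k q × k := f.hom w
  change phi e (LL k e) (D0 k q).X K = 0 at e1
  change (LL k e).ρ (gta e) K + K = phi e (LL k e) ((D0 k q).X ^ (2 * q - 1)) V at e2
  change (LL k e).ρ (gta e) V + V = phi e (LL k e) (D0 k q).X W at e3
  change Gn (gz e) (LL k e) K at g
  rw [LL_phi] at e1 e2 e3
  rw [LL_tau] at e2 e3
  have e4 := congrArg Prod.snd e3
  change eps k q V.1 + V.2 + V.2 = eps k q (D0 k q).X * W.2 at e4
  rw [eps_X, zero_mul, add_assoc, CharTwo.add_self_eq_zero, add_zero] at e4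
  have e5 := congrArg Prod.fst e2
  change (D0 k q).bar K.1 * (Q0 k q).c' + K.2 • (D0 k q).X ^ (2 * q - 1) + K.1 = (D0 k q).X ^ (2 * q - 1) * V.1 at e5
  obtain ⟨b, hb⟩ := ker_pow k q 1 (by omega) K.1 (by rw [pow_one]; exact congrArg Prod.fst e1)
  rw [mul_comm _ V.1, mul_top, e4, zero_smul] at e5
  have hK1 : K.1 = eps k q b • (D0 k q).X ^ (2 * q - 1) := by rw [hb, mul_comm, mul_top]
  rw [hK1, D0_bar_smul, (D0 k q).bar_top (by omega), smul_mul_assoc, c'_top, add_right_comm, add_self0 (k := k), zero_add] at e5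
  have hK2 : K.2 = 0 := (smul_eq_zero.1 e5).resolve_right (top_ne k q)
  refine g.ne (((D0 k q).X ^ (q - 1) * b, 0) : A0 k q × k) ?_
  rw [LL_U]
  refine Prod.ext ?_ hK2
  rw [hb, ← mul_assoc, ← pow_add]; congr 2; omega

/-- base group element -/
def gh (q : ℕ) : Multiplicative (ZMod (2 * q)) := Multiplicative.ofAdd ((q / 2 : ℕ) : ZMod (2 * q))

theorem gh_sq : gh q * gh q = Multiplicative.ofAdd (q : ZMod (2 * q)) := by
  have := PQ.even q
  rw [gh, ← ofAdd_add, ← Nat.cast_add, ← two_mul, ← this]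

theorem cf_bar (r : A0 k q) : cf k q (gh q) ((D0 k q).bar r * (1 + (D0 k q).X ^ q)) = cf k q (gh q) r := by
  rw [← (D0 k q).th_pow, th_pow_q]
  induction r using MonoidAlgebra.induction_linear with
  | zero => simp
  | add f g hf hg => rw [map_add, add_mul, map_add, map_add, hf, hg]
  | single g c =>
    rw [D0_bar_single, MonoidAlgebra.single_mul_single, cf_single, cf_single, mul_one, ← gh_sq]
    congr 1
    rw [eq_iff_iff, inv_mul_eq_iff_eq_mul]
    constructor
    · intro h; exact (mul_right_cancel h).symm
    · rintro rfl; rfl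

/-- invariant form -/
noncomputable def bform (k : Type) [Field k] [CharP k 2] (q : ℕ) [PQ q] : A0 k q × k →ₗ[k] A0 k q × k →ₗ[k] k :=
  LinearMap.mk₂ k (fun x y => cf k q (gh q) (x.1 * (D0 k q).bar y.1) + x.2 * y.2)
    (by intro x x' y; simp only [Prod.fst_add, Prod.snd_add, add_mul, map_add]; ring)
    (by intro c x y; simp only [Prod.smul_fst, Prod.smul_snd, smul_mul_assoc, map_smul, smul_eq_mul]; ring)
    (by intro x x' y; simp only [Prod.fst_add, Prod.snd_add, mul_add, map_add]; ring)
    (by intro c x y; simp only [Prod.smul_fst, Prod.smul_snd, D0_bar_smul, mul_smul_comm, map_smul, smul_eq_mul]; ring)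

theorem bform_apply (x y : A0 k q × k) : bform k q x y = cf k q (gh q) (x.1 * (D0 k q).bar y.1) + x.2 * y.2 := rfl

theorem bform_th (x y : A0 k q × k) :
    bform k q ((LL k e).ρ (gth e) x) ((LL k e).ρ (gth e) y) = bform k q x y := by
  rw [← phi_th e (LL k e), LL_phi, LL_phi, bform_apply, bform_apply]
  change cf k q (gh q) ((D0 k q).th * x.1 * (D0 k q).bar ((D0 k q).th * y.1)) +
    (eps k q (D0 k q).th * x.2) * (eps k q (D0 k q).th * y.2) = _
  rw [map_mul (D0 k q).bar, (D0 k q).bar_th, eps_th, one_mul, one_mul]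
  have : (D0 k q).th * x.1 * ((D0 k q).th' * (D0 k q).bar y.1) = (D0 k q).th * (D0 k q).th' * (x.1 * (D0 k q).bar y.1) := by ring
  rw [this, (D0 k q).inv, one_mul]

theorem bform_ta (x y : A0 k q × k) :
    bform k q ((LL k e).ρ (gta e) x) ((LL k e).ρ (gta e) y) = bform k q x y := by
  rw [LL_tau, LL_tau, bform_apply, bform_apply]
  simp only [map_add, map_mul, D0_bar_smul, (D0 k q).bar_top (one_le_q q), bar_bar, (Q0 k q).bar_c']
  have t := top_coeff k q (gh q)
  have mt := mul_top k q
  have et := eps_top k q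
  set N := (D0 k q).X ^ (2 * q - 1) with hN
  have h1 : ((D0 k q).bar x.1 * (Q0 k q).c' + x.2 • N) * (y.1 * (Q0 k q).c + y.2 • N) =
      (D0 k q).bar (x.1 * (D0 k q).bar y.1) * (1 + (D0 k q).X ^ q) +
      (eps k q x.1 * eps k q y.1 + y.2 * eps k q x.1 + x.2 * eps k q y.1) • N := by
    have a1 : (D0 k q).bar x.1 * y.1 * N = (eps k q x.1 * eps k q y.1) • N := by rw [mt, map_mul, eps_bar]
    have a2 : (D0 k q).bar x.1 * (Q0 k q).c' * N = (eps k q x.1) • N := by rw [mt, map_mul, eps_bar, eps_c', mul_one]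
    have a3 : y.1 * (Q0 k q).c * N = (eps k q y.1) • N := by rw [mt, map_mul, eps_c, mul_one]
    have a4 : N * N = 0 := by rw [mt, et, zero_smul]
    rw [add_mul, mul_add, mul_add, map_mul, bar_bar, mul_smul_comm, a2, smul_mul_assoc, mul_comm N, a3, smul_mul_smul_comm,
      a4, smul_zero, add_zero]
    have a5 : (D0 k q).bar x.1 * (Q0 k q).c' * (y.1 * (Q0 k q).c) = (D0 k q).bar x.1 * y.1 * ((Q0 k q).c * (Q0 k q).c') := by ring
    rw [a5, (Q0 k q).cc, ← hN, mul_add _ _ N, a1, smul_smul, smul_smul, add_smul, add_smul]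
    abel
  rw [h1, map_add, cf_bar, map_smul, t, smul_eq_mul, mul_one]
  have h2 : (2 : k) = 0 := CharTwo.two_eq_zero
  linear_combination (eps k q x.1 * eps k q y.1 + y.2 * eps k q x.1 + x.2 * eps k q y.1) * h2

open scoped TensorProduct in
theorem LLL : Sim (gz e) (LL k e ⊗ LL k e) (Rep.trivial k G k) := by
  let B : (A0 k q × k) ⊗[k] (A0 k q × k) →ₗ[k] k := TensorProduct.lift (bform k q)
  have hB : ∀ x y, B (x ⊗ₜ[k] y) = bform k q x y := fun x y => rfl
  have aux : ∀ g, (∀ x y : A0 k q × k, bform k q ((LL k e).ρ g x) ((LL k e).ρ g y) = bform k q x y) →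
      ∀ t : (A0 k q × k) ⊗[k] (A0 k q × k), B ((LL k e ⊗ LL k e).ρ g t) = (Rep.trivial k G k).ρ g (B t) := by
    intro g hg t
    rw [Rep.trivial_ρ_apply]
    induction t using TensorProduct.induction_on with
    | zero => rw [map_zero, map_zero]
    | add a b ha hb => rw [map_add, map_add, ha, hb, map_add]
    | tmul x y => exact hg x y
  refine ⟨mkHom (M := LL k e ⊗ LL k e) (N := Rep.trivial k G k) B
    (equi e (LL k e ⊗ LL k e).ρ (Rep.trivial k G k).ρ B (aux _ (bform_th e)) (aux _ (bform_ta e))),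
    ((0, 1) : A0 k q × k) ⊗ₜ[k] ((0, 1) : A0 k q × k), ((LL_gn e).tensor (hci e) (LL_gn e)).zero, fun y hy => ?_⟩
  rw [mkHom_apply, hB, bform_apply, U_apply, Rep.trivial_ρ_apply, sub_self] at hy
  rw [zero_mul, map_zero, zero_add, one_mul] at hy
  exact one_ne_zero hy

end
end EQ

namespace EQ
open CategoryTheory CategoryTheory.Limits MonoidalCategory QuaternionGroup
set_option linter.unusedSectionVars false
set_option linter.style.haveILetI false

section
variable {k : Type} [Field k] [CharP k 2] {q : ℕ} [PQ q] {G : Type} [Group G]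
  (e : G ≃* QuaternionGroup q)

theorem SE.gnQ {z : G} (hz : CI z) {A B C : Rep.{0} k G} {f : A ⟶ B} {g : B ⟶ C} (h : SE f g)
    (hA : Ex z A) {b : B.V} (hb : Gn z B b) : Gn z C (g.hom b) := by
  refine ⟨by rw [← U_hom, hb.zero, map_zero], fun y hy => ?_, fun c hc => ?_⟩
  · obtain ⟨b', rfl⟩ := h.surj y
    obtain ⟨a, ha⟩ := h.ex (b - U z B b') (by rw [map_sub, hy, U_hom, sub_self])
    obtain ⟨a', rfl⟩ := hA a (by apply h.inj; rw [U_hom, ha, map_sub, hb.zero, U_U hz, sub_zero])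
    refine hb.ne (f.hom a' + b') ?_
    rw [map_add, ← U_hom, ha, sub_add_cancel]
  · obtain ⟨b', rfl⟩ := h.surj c
    obtain ⟨a, ha⟩ := h.conn hc
    obtain ⟨a', rfl⟩ := hA a (by apply h.inj; rw [U_hom, ha, U_U hz])
    obtain ⟨c, y, hy⟩ := hb.gen (b' - f.hom a') (by rw [map_sub, ← U_hom f, ha, sub_self])
    refine ⟨c, g.hom y, ?_⟩
    rw [← map_smul, ← U_hom, ← map_add, ← hy, map_sub, h.zero, sub_zero]

theorem Typ.sim {M N : Rep.{0} k G} (hM : One (gz e) M) (hN : One (gz e) N) (h : Sim (gz e) M N) (h1 : Typ e M) :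
    Typ e N := by
  obtain ⟨f, hf⟩ := h
  obtain ⟨v, w, hvw, hne⟩ := h1
  obtain ⟨hk, -⟩ := typ_kap e M hvw rfl
  have g := hf.gn hN (Ev.gn e hM hk hne)
  refine ⟨f.hom v, f.hom w, ?_, ?_⟩
  · rw [← Rep.hom_comm_apply, ← map_add, hvw, phi_hom]
  · rw [← Rep.hom_comm_apply, ← phi_hom, ← phi_hom, ← map_add, ← map_add]
    exact g.ne

theorem phi_th' (M : Rep.{0} k G) : phi e M (D0 k q).th' = M.ρ (gth e)⁻¹ := by
  have h1 : phi e M (D0 k q).th' * phi e M (D0 k q).th = 1 := by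
    rw [← map_mul, mul_comm (D0 k q).th', (D0 k q).inv, map_one]
  have h2 : M.ρ (gth e) * M.ρ (gth e)⁻¹ = 1 := by rw [← map_mul, mul_inv_cancel, map_one]
  rw [phi_th] at h1
  calc _ = phi e M (D0 k q).th' * (M.ρ (gth e) * M.ρ (gth e)⁻¹) := by rw [h2, mul_one]
    _ = _ := by rw [← mul_assoc, h1, one_mul]

theorem classify_base [Fintype G] {N : Rep.{0} k G} (hN : One (gz e) N) (hE : Ev e N)
    (h : ∀ m, ∑ g, N.ρ g m = 0) : Sim (gz e) (Rep.trivial k G k) N ∨ Typ e N ∨ Sim (gz e) (LL k e) N ∨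
      Sim (gz e) (LL k (tw e)) N := by
  obtain ⟨m0, h0, h1⟩ := hE
  have hg := Ev.gn e hN h0 h1
  letI := modA e N
  have hEG : EvenGen (D0 k q) (algebraMap k (A0 k q)) m0 := by
    refine ⟨h0, fun y hy => h1 y (hy.trans (phi_u' e N y)), fun m hm => ?_⟩
    obtain ⟨c, y, hy⟩ := hg.gen m ((phi_u' e N m).symm.trans hm)
    refine ⟨c, y, ?_⟩
    change m = phi e N (algebraMap k _ c) m0 + phi e N ((D0 k q).X ^ q) y
    rw [phi_alg, phi_u', hy]
  rcases classify (PQ.four q) (Q0 k q) (D0_bar_alg k q) (phi_SL e N) hEG (norm_zero e N h) with H | H | H | H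
  · exact Or.inl (sim_triv e m0 ((phi_X_zero e N m0).1 h0) H h1)
  · obtain ⟨v, w, ha, hb⟩ := H
    exact Or.inr (Or.inl ⟨v, w, ha, fun y hy => hb y (hy.trans (phi_u' e N y).symm)⟩)
  · obtain ⟨v, ha, hb⟩ := H
    exact Or.inr (Or.inr (Or.inl (L_univ e v ha fun y hy => hb y (hy.trans (phi_u' e N y).symm))))
  · obtain ⟨v, ha, hb⟩ := H
    have key : N.ρ (gta (tw e)) v = phi e N (D0 k q).th' (N.ρ (gta e) v) := by
      rw [tw_gta, phi_th', map_mul]; rfl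
    refine Or.inr (Or.inr (Or.inr (L_univ (tw e) v ?_ fun y hy => ?_)))
    · rw [key]; exact ha
    · rw [key] at hy
      exact hb y (hy.trans (phi_u' e N y).symm)

theorem classify_even {N : Rep.{0} k G} [hfd : FiniteDimensional k N.V] (hN : One (gz e) N) (hE : Ev e N) :
    Sim (gz e) (Rep.trivial k G k) N ∨ Typ e N ∨ Sim (gz e) (LL k e) N ∨
      Sim (gz e) (LL k (tw e)) N := by
  have := finG e
  cases nonempty_fintype G
  induction hn : Module.finrank k N.V using Nat.strong_induction_on generalizing N with
  | _ n ih =>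
    by_cases h : ∀ m, ∑ g, N.ρ g m = 0
    · exact classify_base e hN hE h
    push Not at h
    obtain ⟨m, hm⟩ := h
    obtain ⟨C, g, s⟩ := exists_coker (Rep.leftRegularHom N m) (lr_inj e N m hm)
    have hA : Ex (gz e) (Rep.leftRegular k G) := proj_ex (hci e) _ inferInstance
    obtain ⟨b, hb⟩ := hN
    have hc := s.gnQ (hci e) hA hb
    have hs : Sim (gz e) N C := ⟨g, b, hb.zero, hc.ne⟩
    have hN : One (gz e) N := ⟨_, hb⟩
    have hC : One (gz e) C := ⟨_, hc⟩
    have := s.fd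
    have hs' := hs.symm (hci e) (ch e) hN hC
    have hpos : 0 < Module.finrank k (Rep.leftRegular k G).V := by
      have : Nontrivial (Rep.leftRegular k G).V := inferInstanceAs (Nontrivial (MonoidAlgebra k G))
      exact Module.finrank_pos
    have hfr := s.finrank
    rcases ih (Module.finrank k C.V) (by omega) (N := C) hC (Ev.sim e hN hC hs hE) rfl with H | H | H | H
    · exact Or.inl (H.trans hC ⟨_, one_triv (hci e)⟩ hs' hN)
    · exact Or.inr (Or.inl (H.sim e hC hN hs'))
    · exact Or.inr (Or.inr (Or.inl (H.trans hC ⟨_, LL_gn e⟩ hs' hN)))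
    · exact Or.inr (Or.inr (Or.inr (H.trans hC ⟨_, LL_gn (tw e)⟩ hs' hN)))

end
end EQ

namespace EQ
open CategoryTheory CategoryTheory.Limits MonoidalCategory QuaternionGroup
set_option linter.unusedSectionVars false
set_option linter.style.haveILetI false

section
variable {k : Type} [Field k] [CharP k 2] {q : ℕ} [PQ q] {G : Type} [Group G]
  (e : G ≃* QuaternionGroup q)

/-- good modules -/
structure Gd (M : Rep.{0} k G) : Prop where
  fd : FiniteDimensional k M.V
  one : One (gz e) M

/-- bundled similarity -/
structure Eqv (M N : Rep.{0} k G) : Prop where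
  l : Gd e M
  r : Gd e N
  sim : Sim (gz e) M N

variable {e}

theorem Eqv.symm {M N : Rep.{0} k G} (h : Eqv e M N) : Eqv e N M := by
  have := finG e
  have := h.l.fd
  have := h.r.fd
  exact ⟨h.r, h.l, h.sim.symm (hci e) (ch e) h.l.one h.r.one⟩

theorem Eqv.trans {M N K : Rep.{0} k G} (h : Eqv e M N) (h' : Eqv e N K) : Eqv e M K :=
  ⟨h.l, h'.r, h.sim.trans h.r.one h.l.one h'.sim h'.r.one⟩

theorem Eqv.refl {M : Rep.{0} k G} (h : Gd e M) : Eqv e M M := ⟨h, h, Sim.refl h.one⟩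

theorem Eqv.stab {M N : Rep.{0} k G} (h : Eqv e M N) : IsStablyIso M N := by
  have := finG e
  have := h.l.fd
  have := h.r.fd
  exact h.sim.stab (hci e) (ch e) h.l.one h.r.one

theorem Eqv.of_stab {M N : Rep.{0} k G} (hM : Gd e M) (hN : Gd e N) (h : IsStablyIso M N) : Eqv e M N := by
  have := finG e
  exact ⟨hM, hN, sim_of_stab (hci e) hM.one h⟩

theorem Gd.of_iso {M N : Rep.{0} k G} (h : Gd e M) (i : M ≅ N) : Gd e N := by
  have := h.fd
  refine ⟨Module.Finite.of_surjective i.hom.hom.toLinearMap fun y => ⟨i.inv.hom y, by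
    have h2 := id_ap y
    rw [← i.inv_hom_id] at h2; exact h2⟩,
    h.one.of_iso i⟩

theorem Eqv.of_iso {M N : Rep.{0} k G} (h : Gd e M) (i : M ≅ N) : Eqv e M N :=
  ⟨h, h.of_iso i, Sim.of_iso h.one i⟩

open scoped TensorProduct in
theorem fd_tensor {M N : Rep.{0} k G} (h : FiniteDimensional k M.V) (h' : FiniteDimensional k N.V) :
    FiniteDimensional k (M ⊗ N).V := inferInstanceAs (FiniteDimensional k (M.V ⊗[k] N.V))

theorem Gd.tensor {M N : Rep.{0} k G} (h : Gd e M) (h' : Gd e N) : Gd e (M ⊗ N) :=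
  ⟨fd_tensor h.fd h'.fd, h.one.tensor (hci e) h'.one⟩

theorem Eqv.tensor {M N K : Rep.{0} k G} (h : Eqv e M N) (hK : Gd e K) : Eqv e (M ⊗ K) (N ⊗ K) :=
  ⟨h.l.tensor hK, h.r.tensor hK, h.sim.tensor (hci e) h.l.one h.r.one hK.one⟩

variable (e) in
theorem gd_triv : Gd e (Rep.trivial k G k) := ⟨inferInstanceAs (FiniteDimensional k k), _, one_triv (hci e)⟩

variable (e) in
theorem gd_LL : Gd e (LL k e) := ⟨LL_fd e, _, LL_gn e⟩

theorem gd_tw : Gd e (LL k (tw e)) := ⟨LL_fd (tw e), _, LL_gn (tw e)⟩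

theorem triv_tensor {M : Rep.{0} k G} (h : Gd e M) : Eqv e (Rep.trivial k G k ⊗ M) M :=
  Eqv.of_iso ((gd_triv e).tensor h) (λ_ M)

theorem LL_cancel {M : Rep.{0} k G} (h : Gd e M) : Eqv e ((M ⊗ LL k e) ⊗ LL k e) M := by
  have hL := gd_LL (k := k) e
  have h1 : Eqv e ((M ⊗ LL k e) ⊗ LL k e) (M ⊗ (LL k e ⊗ LL k e)) :=
    Eqv.of_iso ((h.tensor hL).tensor hL) (α_ _ _ _)
  have h2 : Eqv e (M ⊗ (LL k e ⊗ LL k e)) ((LL k e ⊗ LL k e) ⊗ M) :=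
    Eqv.of_iso (h.tensor (hL.tensor hL)) (β_ _ _)
  have h3 : Eqv e (LL k e ⊗ LL k e) (Rep.trivial k G k) := ⟨hL.tensor hL, gd_triv e, LLL e⟩
  exact ((h1.trans h2).trans (h3.tensor h)).trans (triv_tensor h)

theorem Eqv.ev {M N : Rep.{0} k G} (h : Eqv e M N) (h1 : Ev e M) : Ev e N :=
  Ev.sim e h.l.one h.r.one h.sim h1

variable {M0 P0 M1 P1 M2 P2 M3 : Rep.{0} k G} {f0 : M1 ⟶ P0} {g0 : P0 ⟶ M0} {f1 : M2 ⟶ P1} {g1 : P1 ⟶ M1}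
  {f2 : M3 ⟶ P2} {g2 : P2 ⟶ M2}

/-- projective and finite dimensional -/
structure Pj (P : Rep.{0} k G) : Prop where
  fd : FiniteDimensional k P.V
  pr : Projective P

variable (e) in
theorem Pj.ex {P : Rep.{0} k G} (h : Pj P) : Ex (gz e) P := by
  have := finG e
  exact proj_ex (hci e) P h.pr

include e in
variable (e) in
theorem Pj.inj {P : Rep.{0} k G} (h : Pj P) : Inj P := by
  have := finG e
  exact proj_inj P h.pr

theorem Pj.tensor {P N : Rep.{0} k G} (h : Pj P) (h' : Gd e N) : Pj (P ⊗ N) :=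
  ⟨fd_tensor h.fd h'.fd, ch e _ (fd_tensor h.fd h'.fd) ((h.ex e).tensor (hci e))⟩

theorem SE.gd {A P C : Rep.{0} k G} {f : A ⟶ P} {g : P ⟶ C} (s : SE f g) (hP : Pj P) (h : Gd e C) : Gd e A := by
  have := hP.fd
  exact ⟨s.fd', s.oneA (hci e) (hP.ex e) h.one⟩

theorem SE.gd' {A P C : Rep.{0} k G} {f : A ⟶ P} {g : P ⟶ C} (s : SE f g) (hP : Pj P) (h : Gd e A) : Gd e C := by
  have := hP.fd
  exact ⟨s.fd, s.oneC (hci e) (hP.ex e) h.one⟩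

theorem Eqv.shift {A P C A' P' C' : Rep.{0} k G} {f : A ⟶ P} {g : P ⟶ C} {f' : A' ⟶ P'} {g' : P' ⟶ C'}
    (s : SE f g) (s' : SE f' g') (hP : Pj P) (hP' : Pj P') (h : Eqv e C C') : Eqv e A A' :=
  ⟨s.gd hP h.l, s'.gd hP' h.r, Sim.shift (hci e) s s' hP.pr (hP'.ex e) h.sim⟩

theorem Eqv.unshift {A P C A' P' C' : Rep.{0} k G} {f : A ⟶ P} {g : P ⟶ C} {f' : A' ⟶ P'} {g' : P' ⟶ C'}
    (s : SE f g) (s' : SE f' g') (hP : Pj P) (hP' : Pj P') (h : Eqv e A A') : Eqv e C C' :=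
  ⟨s.gd' hP h.l, s'.gd' hP' h.r, Sim.unshift (hci e) s s' (hP.ex e) (hP'.inj e) h.sim⟩

theorem typ_not_triv' {M : Rep.{0} k G} (h : Typ e M) : ¬ Eqv e M (Rep.trivial k G k) := fun H =>
  typ_not_triv e H.l.one h H.sim

theorem typ_not_LL' {M : Rep.{0} k G} (h : Typ e M) : ¬ Eqv e M (LL k e) := fun H =>
  typ_not_LL e H.l.one h H.sim

theorem typ2 (s0 : SE f0 g0) (s1 : SE f1 g1) (p0 : Pj P0) (p1 : Pj P1) (i : Eqv e M0 (Rep.trivial k G k)) :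
    Typ e M2 := by
  obtain ⟨f, x, hx, hf⟩ := i.symm.sim
  refine typ_syz e s0 s1 (p0.ex e) (p1.ex e) (f.hom x) ?_ ?_ hf
  · rw [← Rep.hom_comm_apply, Rep.trivial_ρ_apply]
  · rw [← Rep.hom_comm_apply, Rep.trivial_ρ_apply]

theorem twL (s0 : SE f0 g0) (s1 : SE f1 g1) (p0 : Pj P0) (p1 : Pj P1) (i : Eqv e M0 (Rep.trivial k G k))
    (hE : Ev e M2) : Eqv e (LL k (tw e)) (M2 ⊗ LL k e) := by
  have hL := gd_LL (k := k) e
  have t2 := typ2 s0 s1 p0 p1 i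
  have d1 := s0.gd p0 i.l
  have d2 := s1.gd p1 d1
  have d := d2.tensor hL
  have := d.fd
  have := d2.fd
  have hT : Eqv e (Rep.trivial k G k ⊗ LL k e) (LL k e) := triv_tensor hL
  rcases classify_even e d.one (Ev.tensor e d2.one hL.one hE (LL_ev e)) with H | H | H | H
  · have H : Eqv e _ _ := ⟨gd_triv e, d, H⟩
    exact absurd ((hT.symm.trans (H.tensor hL)).trans (LL_cancel d2)).symm (typ_not_LL' t2)
  · have H : Eqv e _ _ := ⟨d, d2, typ_sim e d.one d2.one H t2⟩
    have H1 := H.unshift s1.tensor s1 (p1.tensor hL) p1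
    have H0 := H1.unshift s0.tensor s0 (p0.tensor hL) p0
    exact absurd ((hT.symm.trans (i.symm.tensor hL)).trans (H0.trans i)).sim (LL_not_triv e)
  · have H : Eqv e _ _ := ⟨hL, d, H⟩
    have h3 : Eqv e (LL k e ⊗ LL k e) (Rep.trivial k G k) := ⟨hL.tensor hL, gd_triv e, LLL e⟩
    exact absurd (((H.tensor hL).trans (LL_cancel d2)).symm.trans h3) (typ_not_triv' t2)
  · exact ⟨gd_tw, d, H⟩

theorem even_cls (s0 : SE f0 g0) (s1 : SE f1 g1) (p0 : Pj P0) (p1 : Pj P1) (i : Eqv e M0 (Rep.trivial k G k))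
    (hE : Ev e M2) {N : Rep.{0} k G} (d : Gd e N) (hN : Ev e N) :
    Eqv e M0 N ∨ Eqv e M2 N ∨ Eqv e (M0 ⊗ LL k e) N ∨ Eqv e (M2 ⊗ LL k e) N := by
  have hL := gd_LL (k := k) e
  have t2 := typ2 s0 s1 p0 p1 i
  have d1 := s0.gd p0 i.l
  have d2 := s1.gd p1 d1
  have := d.fd
  have := d2.fd
  have hT : Eqv e (Rep.trivial k G k ⊗ LL k e) (LL k e) := triv_tensor hL
  rcases classify_even e d.one hN with H | H | H | H
  · exact Or.inl (i.trans ⟨gd_triv e, d, H⟩)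
  · exact Or.inr (Or.inl ⟨d2, d, typ_sim e d2.one d.one t2 H⟩)
  · exact Or.inr (Or.inr (Or.inl ((i.tensor hL).trans (hT.trans ⟨hL, d, H⟩))))
  · exact Or.inr (Or.inr (Or.inr ((twL s0 s1 p0 p1 i hE).symm.trans ⟨gd_tw, d, H⟩)))

theorem all_cls (s0 : SE f0 g0) (s1 : SE f1 g1) (s2 : SE f2 g2) (p0 : Pj P0) (p1 : Pj P1) (p2 : Pj P2)
    (i : Eqv e M0 (Rep.trivial k G k))
    (hE : Ev e M2) {N : Rep.{0} k G} (d : Gd e N) :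
    (Eqv e M0 N ∨ Eqv e M2 N ∨ Eqv e (M0 ⊗ LL k e) N ∨ Eqv e (M2 ⊗ LL k e) N) ∨
    (Eqv e M1 N ∨ Eqv e M3 N ∨ Eqv e (M1 ⊗ LL k e) N ∨ Eqv e (M3 ⊗ LL k e) N) := by
  have hL := gd_LL (k := k) e
  have := finG e
  have := d.fd
  rcases ev_or_od e d.one with h | h
  · exact Or.inl (even_cls s0 s1 p0 p1 i hE d h)
  · obtain ⟨N', g, s⟩ := exists_coker _ (toIM_inj N)
    have pI : Pj (IM N) := ⟨IM_fd N, ch e _ (IM_fd N) (IM_ex (hci e) N)⟩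
    have d' := s.gd' pI d
    have hE' : Ev e N' := by
      rcases ev_or_od e d'.one with h' | h'
      · exact h'
      · exact (ev_not_od e d.one (s.od e (pI.ex e) d'.one h') h).elim
    refine Or.inr ?_
    rcases even_cls s0 s1 p0 p1 i hE d' hE' with H | H | H | H
    · exact Or.inl (H.shift s0 s p0 pI)
    · exact Or.inr (Or.inl (H.shift s2 s p2 pI))
    · exact Or.inr (Or.inr (Or.inl (H.shift s0.tensor s (p0.tensor hL) pI)))
    · exact Or.inr (Or.inr (Or.inr (H.shift s2.tensor s (p2.tensor hL) pI)))

theorem pq_inst (n : ℕ) (hn : 4 ≤ n) : PQ (2 ^ (n - 2)) := by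
  obtain ⟨r, rfl⟩ := Nat.exists_eq_add_of_le hn
  exact ⟨r, by rw [show 4 + r - 2 = (r + 1) + 1 by omega, pow_succ']⟩

theorem Eqv.not_par {M N : Rep.{0} k G} (h : Eqv e M N) (h1 : Ev e M) (h2 : Od e N) : False :=
  ev_not_od e h.r.one (h.ev h1) h2

end

section
variable {k : Type} [Field k] [CharP k 2] {q : ℕ} [PQ q] {G : Type} [Group G]
  (e : G ≃* QuaternionGroup q)

include e in
theorem main (M : Fin 4 → Rep k G)
    (hM0 : Nonempty (M 0 ≅ Rep.trivial k G k))
    (hseq : ∀ i : Fin 3, ∃ (P : Rep k G) (_ : Projective P) (_ : FiniteDimensional k P.V)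
      (f : M i.succ ⟶ P) (g : P ⟶ M i.castSucc) (w : f ≫ g = 0),
      (ShortComplex.mk f g w).ShortExact) :
    (∀ i : Fin 4, IsEndotrivial (M i)) ∧
      (∀ i j : Fin 4, i ≠ j → ¬ IsStablyIso (M i) (M j)) ∧
      ∃ L : Rep k G, IsEndotrivial L ∧
        IsStablyIso (L ⊗ L) (Rep.trivial k G k) ∧
        (∀ i : Fin 4, ¬ IsStablyIso L (M i)) ∧
        (∀ N : Rep k G, IsEndotrivial N →
          ∃ i : Fin 4, IsStablyIso N (M i) ∨ IsStablyIso N (M i ⊗ L)) := by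
  have := finG e
  have hL := gd_LL (k := k) e
  obtain ⟨i0⟩ := hM0
  have i : Eqv e (M 0) (Rep.trivial k G k) := (Eqv.of_iso (gd_triv e) i0.symm).symm
  obtain ⟨P0, q0, r0, f0, g0, w0, t0⟩ := hseq 0
  obtain ⟨P1, q1, r1, f1, g1, w1, t1⟩ := hseq 1
  obtain ⟨P2, q2, r2, f2, g2, w2, t2⟩ := hseq 2
  have s0 : SE (A := M 1) (C := M 0) f0 g0 := SE.of_short _ _ _ t0
  have s1 : SE (A := M 2) (C := M 1) f1 g1 := SE.of_short _ _ _ t1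
  have s2 : SE (A := M 3) (C := M 2) f2 g2 := SE.of_short _ _ _ t2
  have p0 : Pj P0 := ⟨r0, q0⟩
  have p1 : Pj P1 := ⟨r1, q1⟩
  have p2 : Pj P2 := ⟨r2, q2⟩
  have d0 := i.l
  have d1 := s0.gd p0 d0
  have d2 := s1.gd p1 d1
  have d3 := s2.gd p2 d2
  have hd : ∀ j : Fin 4, Gd e (M j) := by
    intro j; fin_cases j
    exacts [d0, d1, d2, d3]
  have e0 : Ev e (M 0) := i.symm.ev ⟨(1 : k), by rw [phi_triv, eps_X, zero_mul], (one_triv (hci e)).ne⟩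
  have e1 : Od e (M 1) := s0.ev e (p0.ex e) d0.one e0
  have e2 : Ev e (M 2) := s1.od e (p1.ex e) d1.one e1
  have e3 : Od e (M 3) := s2.ev e (p2.ex e) d2.one e2
  have ty := typ2 s0 s1 p0 p1 i
  have n02 : ¬ Eqv e (M 0) (M 2) := fun H => typ_not_triv' ty (H.symm.trans i)
  have n13 : ¬ Eqv e (M 1) (M 3) := fun H => n02 (H.unshift s0 s2 p0 p2)
  have n01 : ¬ Eqv e (M 0) (M 1) := fun H => H.not_par e0 e1
  have n03 : ¬ Eqv e (M 0) (M 3) := fun H => H.not_par e0 e3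
  have n21 : ¬ Eqv e (M 2) (M 1) := fun H => H.not_par e2 e1
  have n23 : ¬ Eqv e (M 2) (M 3) := fun H => H.not_par e2 e3
  have hendo : ∀ {X : Rep k G}, Gd e X → IsEndotrivial X := fun {X} h => by
    have := h.fd
    exact endo_of_one (hci e) (ch e) h.one
  refine ⟨fun j => hendo (hd j), fun a b hab H => ?_, LL k e, hendo hL, ?_, fun j H => ?_, fun N hN => ?_⟩
  · replace H := Eqv.of_stab (hd a) (hd b) H
    fin_cases a <;> fin_cases b
    exacts [hab rfl, n01 H, n02 H, n03 H, n01 H.symm, hab rfl, n21 H.symm, n13 H, n02 H.symm, n21 H,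
      hab rfl, n23 H, n03 H.symm, n13 H.symm, n23 H.symm, hab rfl]
  · exact Eqv.stab (e := e) ⟨hL.tensor hL, gd_triv e, LLL e⟩
  · replace H := Eqv.of_stab hL (hd j) H
    fin_cases j
    exacts [LL_not_triv e (H.trans i).sim, H.not_par (LL_ev e) e1, typ_not_LL' ty H.symm, H.not_par (LL_ev e) e3]
  · have d : Gd e N := ⟨hN.1, one_of_endo (hci e) hN⟩
    rcases all_cls s0 s1 s2 p0 p1 p2 i e2 d with (H | H | H | H) | (H | H | H | H)
    · exact ⟨0, Or.inl H.symm.stab⟩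
    · exact ⟨2, Or.inl H.symm.stab⟩
    · exact ⟨0, Or.inr H.symm.stab⟩
    · exact ⟨2, Or.inr H.symm.stab⟩
    · exact ⟨1, Or.inl H.symm.stab⟩
    · exact ⟨3, Or.inl H.symm.stab⟩
    · exact ⟨1, Or.inr H.symm.stab⟩
    · exact ⟨3, Or.inr H.symm.stab⟩
end
end EQ

/-- Let `k` be any field of characteristic `2`, `n ≥ 4`, and `G = Q_{2^n}` the generalized
quaternion group of order `2^n` (`QuaternionGroup (2^(n-2))`, of order `4 * 2^(n-2) = 2^n`).
If `M 0` is the trivial module and each `M (i+1)` is a syzygy of `M i`, then the `M i` are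
pairwise non-stably-isomorphic endotrivial modules, and there is a finite-dimensional
endotrivial module `L` with `L ⊗ L` stably trivial, `L` not stably isomorphic to any `M i`,
such that every endotrivial module is stably isomorphic to some `M i` or some `M i ⊗ L`;
hence `T(Q_{2^n}) = Pic(StMod(kQ_{2^n})) ≅ C_2 ⊕ C_4`. -/
theorem endotrivial_group_of_generalized_quaternion
    (k : Type) [Field k] [CharP k 2] (n : ℕ) (hn : 4 ≤ n)
    (G : Type) [Group G] (e : G ≃* QuaternionGroup (2 ^ (n - 2)))
    (M : Fin 4 → Rep k G)
    (hM0 : Nonempty (M 0 ≅ Rep.trivial k G k))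
    (hseq : ∀ i : Fin 3, ∃ (P : Rep k G) (_ : Projective P) (_ : FiniteDimensional k P.V)
      (f : M i.succ ⟶ P) (g : P ⟶ M i.castSucc) (w : f ≫ g = 0),
      (ShortComplex.mk f g w).ShortExact) :
    (∀ i : Fin 4, IsEndotrivial (M i)) ∧
      (∀ i j : Fin 4, i ≠ j → ¬ IsStablyIso (M i) (M j)) ∧
      ∃ L : Rep k G, IsEndotrivial L ∧
        IsStablyIso (L ⊗ L) (Rep.trivial k G k) ∧
        (∀ i : Fin 4, ¬ IsStablyIso L (M i)) ∧
        (∀ N : Rep k G, IsEndotrivial N →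
          ∃ i : Fin 4, IsStablyIso N (M i) ∨ IsStablyIso N (M i ⊗ L)) := by
  haveI := EQ.pq_inst n hn
  exact EQ.main e M hM0 hseq
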